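/- arXiv:1908.02407 — 12 statements merged into one kernel-verified Lean document; each statement's English description precedes it below -/
import Mathlib

section
/- For positive integers i ≤ ℓ, let s(ℓ,k) denote the number of permutations of a set of ℓ elements having exactly k cycles (fixed points counted as cycles). Then ℓ · s(ℓ,i) = ∑_{k=i}^{ℓ} s(ℓ,k) · C(k, i-1), where C(k, i-1) is the binomial coefficient. -/
/-!
The number of permutations of `ℓ` points with `k` cycles satisfies the recursion
`s(ℓ+1, k+1) = ℓ s(ℓ, k+1) + s(ℓ, k)`: a permutation of `ℓ + 1` points arises uniquely from a
permutation `e` of the `ℓ` nonzero points by either keeping `0` as a new fixed point, or inserting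
`0` into the cycle of one of the `ℓ` other points. The key fact is `numCycles_decomposeFin_symm`,
which rests on `swap_mul_of_fixed`: multiplying the cycle `(p l₁ … lᵣ)` by `swap a p` yields the
cycle `(a p l₁ … lᵣ)`. Hence `stirlingFirst` agrees with Mathlib's recursively defined
`Nat.stirlingFirst`.

From the recursion, induction on `ℓ` gives `∑ₖ s(ℓ, k) C(k, j) = s(ℓ+1, j+1)`. With `j = i - 1` the
right side is `ℓ s(ℓ, i) + s(ℓ, i-1)`, the terms with `k < i - 1` vanish, and the term `k = i - 1`
is `s(ℓ, i-1)`; cancelling it leaves the identity.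
-/

/-- The signless Stirling number of the first kind `s(ℓ,k)`: the number of permutations of a
set of `ℓ` elements having exactly `k` cycles (fixed points counted as cycles). The number of
cycles of `σ` is the number of nontrivial cycles (`σ.cycleType.card`) plus the number of fixed
points (`ℓ - σ.support.card`). -/
noncomputable def stirlingFirst (ℓ k : ℕ) : ℕ :=
  Nat.card {σ : Equiv.Perm (Fin ℓ) // σ.cycleType.card + (ℓ - σ.support.card) = k}

open Equiv Equiv.Perm

/-- If `σ` fixes `a` but moves `p`, then `swap a p * σ` is `σ` with `a` inserted into the cycle
of `p`: the number of nontrivial cycles is unchanged and the support gains one point. -/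
theorem swap_mul_of_fixed {α : Type*} [Fintype α] [DecidableEq α] (σ : Perm α) (a p : α)
    (ha : σ a = a) (hp : σ p ≠ p) :
    (swap a p * σ).cycleType.card = σ.cycleType.card ∧
      (swap a p * σ).support.card = σ.support.card + 1 := by
  have hps : p ∈ σ.support := mem_support.mpr hp
  have hc : (σ.cycleOf p).IsCycle := isCycle_cycleOf σ hp
  have hdisj := disjoint_mul_inv_of_mem_cycleFactorsFinset
    (cycleOf_mem_cycleFactorsFinset_iff.mpr hps)
  set c := σ.cycleOf p with hcdef
  set ρ := σ * c⁻¹ with hρ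
  have hσ : σ = c * ρ := by rw [← hdisj.commute.eq, hρ]; simp
  have hca : c a = a := by
    rw [← notMem_support]
    intro h
    exact (mem_support.mp (support_cycleOf_le σ p h)) ha
  have hρa : ρ a = a := by
    have : c⁻¹ a = a := by rw [inv_eq_iff_eq, hca]
    rw [hρ, mul_apply, this, ha]
  obtain ⟨l, hl⟩ : ∃ l, σ.toList p = p :: l := by
    have h0 := toList_getElem_zero σ p hps
    cases h : σ.toList p with
    | nil => exact absurd hps (toList_eq_nil_iff.mp h)
    | cons x l => simp only [h, List.getElem_cons_zero] at h0; exact ⟨l, by rw [h0]⟩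
  have hnd : (p :: l).Nodup := hl ▸ nodup_toList σ p
  have hform : (p :: l).formPerm = c := by rw [← hl, formPerm_toList]
  have hcsupp : c.support = (p :: l).toFinset := by
    rw [← hform]
    refine List.support_formPerm_of_nodup _ hnd fun x hx => ?_
    exact toList_ne_singleton σ p x (hl.trans hx)
  have hal : a ∉ p :: l := by
    rw [← List.mem_toFinset, ← hcsupp, notMem_support]; exact hca
  have hnd' : (a :: p :: l).Nodup := List.nodup_cons.mpr ⟨hal, hnd⟩
  have hg : (a :: p :: l).formPerm = swap a p * c := by rw [List.formPerm_cons_cons, hform]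
  have hgc : (swap a p * c).IsCycle := by
    rw [← hg]; exact List.isCycle_formPerm hnd' (by simp)
  have hgs : (swap a p * c).support = insert a c.support := by
    rw [← hg, List.support_formPerm_of_nodup _ hnd' (by simp), hcsupp, List.toFinset_cons]
  have hgcard : (swap a p * c).support.card = c.support.card + 1 := by
    rw [hgs, Finset.card_insert_of_notMem (notMem_support.mpr hca)]
  have hgd : Disjoint (swap a p * c) ρ := by
    rw [disjoint_iff_disjoint_support, hgs, Finset.disjoint_insert_left]
    exact ⟨notMem_support.mpr hρa, disjoint_iff_disjoint_support.mp hdisj.symm⟩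
  have hprod : swap a p * σ = (swap a p * c) * ρ := by rw [hσ, mul_assoc]
  constructor
  · rw [hprod, hgd.cycleType_mul, hgc.cycleType, hσ, hdisj.symm.cycleType_mul, hc.cycleType]
    simp
  · rw [hprod, hgd.card_support_mul, hgcard, hσ, hdisj.symm.card_support_mul]
    omega

/-- The number of cycles of a permutation of `Fin n`, fixed points included. -/
def numCycles {n : ℕ} (σ : Perm (Fin n)) : ℕ := σ.cycleType.card + (n - σ.support.card)

theorem decomposeFin_symm_zero_eq_extendDomain {n : ℕ} (e : Perm (Fin n)) :
    decomposeFin.symm (0, e) = e.extendDomain (finSuccAboveEquiv (0 : Fin (n + 1))) := by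
  ext x
  refine Fin.cases ?_ (fun y => ?_) x
  · rw [extendDomain_apply_not_subtype _ _ (by simp)]; simp
  · have h := extendDomain_apply_image e (finSuccAboveEquiv (0 : Fin (n + 1))) y
    simp [finSuccAboveEquiv_apply] at h
    rw [h]; simp

theorem decomposeFin_symm_eq_swap_mul {n : ℕ} (p : Fin (n + 1)) (e : Perm (Fin n)) :
    decomposeFin.symm (p, e) = swap 0 p * decomposeFin.symm (0, e) := by
  ext x
  refine Fin.cases ?_ (fun y => ?_) x <;> simp

theorem numCycles_decomposeFin_symm {n : ℕ} (p : Fin (n + 1)) (e : Perm (Fin n)) :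
    numCycles (decomposeFin.symm (p, e)) = numCycles e + if p = 0 then 1 else 0 := by
  have hT : (decomposeFin.symm (0, e)).cycleType = e.cycleType := by
    rw [decomposeFin_symm_zero_eq_extendDomain, cycleType_extendDomain]
  have hS : (decomposeFin.symm (0, e)).support.card = e.support.card := by
    rw [decomposeFin_symm_zero_eq_extendDomain, card_support_extend_domain]
  have hle : e.support.card ≤ n := by simpa using Finset.card_le_univ e.support
  unfold numCycles
  split_ifs with h
  · subst h
    rw [hT, hS]; omega
  rw [decomposeFin_symm_eq_swap_mul]
  set σ := decomposeFin.symm (0, e) with hσ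
  have h0 : σ 0 = 0 := by simp [hσ]
  by_cases hp : σ p = p
  · have hd : Disjoint (swap 0 p) σ := by
      rw [disjoint_iff_disjoint_support, support_swap (Ne.symm h)]
      simp [h0, hp]
    have hlt : (swap 0 p * σ).support.card ≤ n + 1 := by
      simpa using Finset.card_le_univ (swap 0 p * σ).support
    rw [hd.card_support_mul, card_support_swap (Ne.symm h), hS] at hlt
    rw [hd.cycleType_mul, hd.card_support_mul, card_support_swap (Ne.symm h), hS,
      (isCycle_swap (Ne.symm h)).cycleType, hT, Multiset.card_add, Multiset.card_singleton]
    omega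
  · obtain ⟨h1, h2⟩ := swap_mul_of_fixed σ 0 p h0 hp
    rw [h1, h2, hT, hS]; omega

theorem stirlingFirst_eq_card_filter (n k : ℕ) :
    stirlingFirst n k = (Finset.univ.filter fun σ : Perm (Fin n) => numCycles σ = k).card := by
  rw [stirlingFirst, Nat.card_eq_fintype_card, Fintype.card_subtype]
  rfl

/-- Counting permutations of `Fin (n + 1)` through `decomposeFin`. -/
theorem stirlingFirst_succ (n k : ℕ) :
    stirlingFirst (n + 1) k = n * stirlingFirst n k +
      (Finset.univ.filter fun σ : Perm (Fin n) => numCycles σ + 1 = k).card := by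
  simp only [stirlingFirst_eq_card_filter, Finset.card_filter]
  rw [← decomposeFin.symm.sum_comp, Fintype.sum_prod_type, Fin.sum_univ_succ]
  simp only [numCycles_decomposeFin_symm]
  simp [add_comm]

theorem stirlingFirst_eq_nat (n k : ℕ) : stirlingFirst n k = Nat.stirlingFirst n k := by
  induction n generalizing k with
  | zero =>
    rw [stirlingFirst_eq_card_filter]
    cases k <;> simp [numCycles, Finset.filter_singleton]
  | succ n ih =>
    rw [stirlingFirst_succ, ih]
    cases k with
    | zero => cases n <;> simp
    | succ k =>
      rw [Nat.stirlingFirst_succ_succ, ← ih k, stirlingFirst_eq_card_filter]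
      simp

theorem sum_stirlingFirst_mul_choose (n j : ℕ) :
    ∑ k ∈ Finset.range (n + 1), Nat.stirlingFirst n k * k.choose j =
      Nat.stirlingFirst (n + 1) (j + 1) := by
  induction n generalizing j with
  | zero => cases j <;> simp [Nat.stirlingFirst]
  | succ n ih =>
    -- Shift the index by one: the new top term has `s(n, n+1) = 0`, and the dropped term at
    -- `k = 0` has `n * s(n, 0) = 0`.
    have key : ∑ k ∈ Finset.range (n + 1), n * Nat.stirlingFirst n (k + 1) * (k + 1).choose j =
        n * ∑ k ∈ Finset.range (n + 1), Nat.stirlingFirst n k * k.choose j := by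
      have h0 : n * Nat.stirlingFirst n 0 = 0 := by cases n <;> simp
      rw [Finset.sum_range_succ, Nat.stirlingFirst_eq_zero_of_lt (Nat.lt_succ_self n),
        Finset.sum_range_succ' _ n, mul_add, ← mul_assoc n (Nat.stirlingFirst n 0), h0,
        Finset.mul_sum]
      simp [mul_assoc]
    rw [Finset.sum_range_succ']
    simp only [Nat.stirlingFirst_succ_succ, add_mul, Finset.sum_add_distrib, key, ih]
    cases j with
    | zero =>
      have h := ih 0
      simp only [Nat.choose_zero_right, mul_one] at h ⊢
      rw [h, Nat.stirlingFirst_succ_succ n 0]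
      ring
    | succ j =>
      simp only [Nat.choose_succ_succ, mul_add, Finset.sum_add_distrib, ih]
      simp [Nat.stirlingFirst_succ_succ]
      ring

/-- `ℓ · s(ℓ,i) = ∑_{k=i}^{ℓ} s(ℓ,k) · C(k, i-1)`. -/
theorem stirlingFirst_identity (ℓ i : ℕ) (hi : 1 ≤ i) (hiℓ : i ≤ ℓ) :
    ℓ * stirlingFirst ℓ i = ∑ k ∈ Finset.Icc i ℓ, stirlingFirst ℓ k * Nat.choose k (i - 1) := by
  obtain ⟨j, rfl⟩ := Nat.exists_eq_add_of_le' hi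
  simp only [stirlingFirst_eq_nat, Nat.add_sub_cancel]
  have h := sum_stirlingFirst_mul_choose ℓ j
  have hlow : ∑ k ∈ Finset.range j, Nat.stirlingFirst ℓ k * k.choose j = 0 :=
    Finset.sum_eq_zero fun k hk => by
      rw [Nat.choose_eq_zero_of_lt (Finset.mem_range.mp hk), mul_zero]
  rw [← Finset.sum_range_add_sum_Ico _ (show j + 1 ≤ ℓ + 1 by omega), Finset.sum_range_succ, hlow,
    Nat.stirlingFirst_succ_succ, Nat.choose_self] at h
  have hIcc : Finset.Icc (j + 1) ℓ = Finset.Ico (j + 1) (ℓ + 1) := by ext; simp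
  rw [hIcc]
  omega
end

section
/- Let m ≥ 2 and r ≥ 2 be integers. On a probability space with a filtration (F_t)_{t≥r}, let (X(t))_{t≥r} be an adapted integer-valued process with X(r) = 1, X(t+1) - X(t) ∈ {0,1} for all t ≥ r, and conditional transition probability P(X(t+1) = X(t)+1 | F_t) = 1 - (1 - X(t)/t)^m almost surely for every t ≥ r. Then almost surely X(t)/t → 1 as t → ∞. -/
open MeasureTheory ProbabilityTheory Filter

/-!
Write `Y t = X t / t ∈ (0, 1]` and `p = 1 - (1 - Y)^m`. Since `m ≥ 2`, `p ≥ 2 Y - Y ^ 2`, and this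
lower bound makes two nonnegative processes supermartingales:

* `t / X t`, because `(t + 1) (2 t - x) x - t² (x + 1) = (t - x) ((t + 1) x - t) ≥ 0` for
  `1 ≤ x ≤ t`;
* `1 - Y t + ∑_{s < t} Y s (1 - Y s) / (s + 1)`, because the conditional drift of `Y` is
  `(p - Y) / (t + 1) ≥ Y (1 - Y) / (t + 1)`.

Both converge almost surely to a finite limit. From the first, `Y t` converges to some `y > 0`.
From the second, `∑ Y s (1 - Y s) / (s + 1) < ∞`, which by divergence of the harmonic series forces
`y (1 - y) = 0`, hence `y = 1`.
-/

/-- A nonnegative supermartingale converges almost surely to a finite limit. -/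
lemma Supermartingale.ae_exists_tendsto_of_nonneg
    {Ω : Type*} {m0 : MeasurableSpace Ω} {μ : Measure Ω} [IsFiniteMeasure μ]
    {𝒢 : Filtration ℕ m0} {f : ℕ → Ω → ℝ} (hf : Supermartingale f 𝒢 μ)
    (hnonneg : ∀ n ω, 0 ≤ f n ω) :
    ∀ᵐ ω ∂μ, ∃ c, Tendsto (fun n => f n ω) atTop (nhds c) := by
  have hbdd : ∀ n, eLpNorm ((-f) n) 1 μ ≤ ((∫ ω, f 0 ω ∂μ).toNNReal : ENNReal) := by
    intro n
    have hle : ∫ ω, f n ω ∂μ ≤ ∫ ω, f 0 ω ∂μ := by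
      simpa using hf.setIntegral_le (Nat.zero_le n) MeasurableSet.univ
    rw [Pi.neg_apply, eLpNorm_neg, eLpNorm_one_eq_lintegral_enorm,
      ← ofReal_integral_norm_eq_lintegral_enorm (hf.integrable n)]
    refine ENNReal.ofReal_le_ofReal ?_
    simpa [abs_of_nonneg (hnonneg n _)] using hle
  filter_upwards [hf.neg.exists_ae_tendsto_of_bdd hbdd] with ω ⟨c, hc⟩
  exact ⟨-c, by simpa using hc.neg⟩

/-- Almost sure convergence of a nonnegative process driven by increments `B n` of conditional mean
`q n`: if `f (n + 1) = a n + b n * B n` with `a n`, `b n` known at time `n`, then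
`a n + b n * q n ≤ f n` is the supermartingale property. -/
lemma ae_exists_tendsto_of_affine_step
    {Ω : Type*} {m0 : MeasurableSpace Ω} {μ : Measure Ω} [IsFiniteMeasure μ]
    {𝒢 : Filtration ℕ m0} {f a b B q : ℕ → Ω → ℝ}
    (hB : ∀ n, Integrable (B n) μ)
    (hq : ∀ n, μ[B n | 𝒢 n] =ᵐ[μ] q n)
    (hf : ∀ n, Measurable[𝒢 n] (f n)) (ha : ∀ n, Measurable[𝒢 n] (a n))
    (hb : ∀ n, Measurable[𝒢 n] (b n))
    (hfC : ∀ n, ∃ C, ∀ ω, |f n ω| ≤ C) (haC : ∀ n, ∃ C, ∀ ω, |a n ω| ≤ C)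
    (hbC : ∀ n, ∃ C, ∀ ω, |b n ω| ≤ C)
    (hnonneg : ∀ n ω, 0 ≤ f n ω)
    (hsucc : ∀ n ω, f (n + 1) ω = a n ω + b n ω * B n ω)
    (hdrift : ∀ n ω, a n ω + b n ω * q n ω ≤ f n ω) :
    ∀ᵐ ω ∂μ, ∃ c, Tendsto (fun n => f n ω) atTop (nhds c) := by
  have hint : ∀ {g : ℕ → Ω → ℝ}, (∀ n, Measurable[𝒢 n] (g n)) →
      (∀ n, ∃ C, ∀ ω, |g n ω| ≤ C) → ∀ n, Integrable (g n) μ := by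
    intro g hg hgC n
    obtain ⟨C, hC⟩ := hgC n
    exact Integrable.of_bound ((hg n).mono (𝒢.le n) le_rfl).aestronglyMeasurable C
      (ae_of_all _ hC)
  have hbB : ∀ n, Integrable (b n * B n) μ := by
    intro n
    obtain ⟨C, hC⟩ := hbC n
    exact (hB n).bdd_mul ((hb n).mono (𝒢.le n) le_rfl).aestronglyMeasurable (ae_of_all _ hC)
  refine Supermartingale.ae_exists_tendsto_of_nonneg (𝒢 := 𝒢)
    (supermartingale_nat (fun n => (hf n).stronglyMeasurable) (hint hf hfC) fun n => ?_) hnonneg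
  have hfun : f (n + 1) = a n + b n * B n := funext fun ω => hsucc n ω
  rw [hfun]
  filter_upwards [condExp_add (hint ha haC n) (hbB n) (𝒢 n),
    condExp_mul_of_stronglyMeasurable_left (hb n).stronglyMeasurable (hbB n) (hB n), hq n]
    with ω h1 h2 h3
  rw [h1, Pi.add_apply, h2, Pi.mul_apply, h3,
    condExp_of_stronglyMeasurable (𝒢.le n) (ha n).stronglyMeasurable (hint ha haC n)]
  exact hdrift n ω

/-- If `y n → c > 0` with values in `[0, 1]` and `∑ y n (1 - y n) / (n + r + 1)` has convergent
partial sums, then `c = 1`. -/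
lemma limit_eq_one_of_tendsto_sum {y : ℕ → ℝ} {r : ℕ} {c s : ℝ} (hc : 0 < c)
    (hy0 : ∀ n, 0 ≤ y n) (hy1 : ∀ n, y n ≤ 1) (hy : Tendsto y atTop (nhds c))
    (hs : Tendsto (fun n => ∑ k ∈ Finset.range n, y k * (1 - y k) / ((k + r : ℕ) + 1 : ℝ)) atTop
      (nhds s)) : c = 1 := by
  have hc1 : c ≤ 1 := le_of_tendsto' hy hy1
  by_contra hne
  have hlt : c < 1 := lt_of_le_of_ne hc1 hne
  have hpos : 0 < c * (1 - c) := mul_pos hc (by linarith)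
  have hsum : Summable fun k => y k * (1 - y k) / ((k + r : ℕ) + 1 : ℝ) :=
    ((hasSum_iff_tendsto_nat_of_nonneg (fun k => div_nonneg
      (mul_nonneg (hy0 k) (by linarith [hy1 k])) (by positivity)) s).2 hs).summable
  have hev : ∀ᶠ k in atTop, c * (1 - c) / 2 < y k * (1 - y k) :=
    (hy.mul (hy.const_sub 1)).eventually (lt_mem_nhds (by linarith))
  have hharm : Summable fun k : ℕ => c * (1 - c) / 2 * (1 / ((k + (r + 1) : ℕ) : ℝ)) := by
    refine Summable.of_norm_bounded_eventually_nat hsum ?_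
    filter_upwards [hev] with k hk
    rw [Real.norm_of_nonneg (by positivity), mul_one_div]
    push_cast
    rw [← add_assoc]
    gcongr
  rw [summable_mul_left_iff (by positivity),
    summable_nat_add_iff (f := fun k : ℕ => 1 / (k : ℝ))] at hharm
  exact Real.not_summable_one_div_natCast hharm

/-- The drift inequality for `t / X t`. -/
lemma drift_inv {x t p : ℝ} (hx : 1 ≤ x) (hxt : x ≤ t)
    (hp : 2 * (x / t) - (x / t) ^ 2 ≤ p) :
    (t + 1) / x + -((t + 1) / (x * (x + 1))) * p ≤ t / x := by
  have ht : 0 < t := by linarith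
  have h : 0 ≤ (t - x) * ((t + 1) * x - t) := mul_nonneg (by linarith) (by nlinarith)
  have hx0 : 0 < x := by linarith
  have key : t / x - ((t + 1) / x + -((t + 1) / (x * (x + 1))) * (2 * (x / t) - (x / t) ^ 2))
      = (t - x) * ((t + 1) * x - t) / (t ^ 2 * x * (x + 1)) := by
    field_simp
    ring
  have h2 : 0 ≤ (t - x) * ((t + 1) * x - t) / (t ^ 2 * x * (x + 1)) := by positivity
  have h3 : (t + 1) / (x * (x + 1)) * (2 * (x / t) - (x / t) ^ 2)
      ≤ (t + 1) / (x * (x + 1)) * p := by gcongr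
  linarith

/-- The drift inequality for `1 - Y t` compensated by `Y t (1 - Y t) / (t + 1)`. -/
lemma drift_lin {x t p S : ℝ} (ht : 0 < t)
    (hp : 2 * (x / t) - (x / t) ^ 2 ≤ p) :
    (1 - x / (t + 1) + (S + x / t * (1 - x / t) / (t + 1))) + -(1 / (t + 1)) * p
      ≤ 1 - x / t + S := by
  have key : 1 - x / t + S - ((1 - x / (t + 1) + (S + x / t * (1 - x / t) / (t + 1)))
      + -(1 / (t + 1)) * (2 * (x / t) - (x / t) ^ 2)) = 0 := by
    field_simp
    ring
  have h3 : 1 / (t + 1) * (2 * (x / t) - (x / t) ^ 2) ≤ 1 / (t + 1) * p := by gcongr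
  linarith

/-- for the uniform attachment descendant chain with `m ≥ 2` attachments,
almost surely `X(t)/t → 1`. -/
theorem descendants_UAM_m_ge_two
    {Ω : Type*} {m0 : MeasurableSpace Ω} {μ : Measure Ω} [IsProbabilityMeasure μ]
    (m : ℕ) (hm : 2 ≤ m)
    (r : ℕ) (hr : 2 ≤ r)
    (ℱ : Filtration ℕ m0)
    (X : ℕ → Ω → ℤ)
    (hadapted : Adapted ℱ fun t ω => (X t ω : ℝ))
    (hinit : ∀ ω, X r ω = 1)
    (hstep : ∀ t, r ≤ t → ∀ ω, X (t + 1) ω - X t ω = 0 ∨ X (t + 1) ω - X t ω = 1)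
    (htrans : ∀ t, r ≤ t →
      μ[Set.indicator {ω | X (t + 1) ω = X t ω + 1} (fun _ => (1 : ℝ)) | ℱ t]
        =ᵐ[μ] fun ω => 1 - (1 - (X t ω : ℝ) / (t : ℝ)) ^ m) :
    ∀ᵐ ω ∂μ, Tendsto (fun t : ℕ => (X t ω : ℝ) / t) atTop (nhds 1) := by
  -- Time is shifted by `r`, since nothing is known about `X t` for `t < r`.
  let 𝒢 : Filtration ℕ m0 :=
    ⟨fun n => ℱ (n + r), fun i j hij => ℱ.mono (Nat.add_le_add_right hij r), fun n => ℱ.le _⟩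
  let x : ℕ → Ω → ℝ := fun n ω => (X (n + r) ω : ℝ)
  let T : ℕ → ℝ := fun n => ((n + r : ℕ) : ℝ)
  let B : ℕ → Ω → ℝ := fun n ω => x (n + 1) ω - x n ω
  let q : ℕ → Ω → ℝ := fun n ω => 1 - (1 - x n ω / T n) ^ m
  let S : ℕ → Ω → ℝ := fun n ω =>
    ∑ k ∈ Finset.range n, x k ω / T k * (1 - x k ω / T k) / (T k + 1)
  have hTsucc : ∀ n, T (n + 1) = T n + 1 := fun n => by simp only [T]; push_cast; ring
  have hT : ∀ n, 0 < T n := fun n => by simp only [T]; exact_mod_cast (by omega : 0 < n + r)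
  have hxmeas : ∀ n, Measurable[𝒢 n] (x n) := fun n => hadapted (n + r)
  have hXsucc : ∀ n, n + 1 + r = n + r + 1 := fun n => by omega
  have hB01 : ∀ n ω, B n ω = 0 ∨ B n ω = 1 := by
    intro n ω
    simp only [B, x, hXsucc]
    exact_mod_cast hstep (n + r) (by omega) ω
  have hBind : ∀ n, B n =
      Set.indicator {ω | X (n + r + 1) ω = X (n + r) ω + 1} (fun _ => (1 : ℝ)) := by
    intro n
    ext ω
    simp only [B, x, hXsucc, Set.indicator_apply, Set.mem_ofPred_eq]
    rcases hstep (n + r) (by omega) ω with h | h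
    · rw [if_neg (by omega)]; exact_mod_cast h
    · rw [if_pos (by omega)]; exact_mod_cast h
  have hxlow : ∀ n ω, 1 ≤ x n ω := by
    intro n ω
    induction n with
    | zero => simp [x, hinit]
    | succ n ih =>
      have hBn : B n ω = x (n + 1) ω - x n ω := rfl
      rcases hB01 n ω with h | h <;> linarith
  have hxup : ∀ n ω, x n ω ≤ T n := by
    intro n ω
    induction n with
    | zero =>
      have : (2 : ℝ) ≤ r := by exact_mod_cast hr
      simp only [x, T, zero_add, hinit]; push_cast; linarith
    | succ n ih =>
      have hBn : B n ω = x (n + 1) ω - x n ω := rfl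
      rw [hTsucc]
      rcases hB01 n ω with h | h <;> linarith
  have hy0 : ∀ n ω, 0 ≤ x n ω / T n := fun n ω =>
    div_nonneg (by linarith [hxlow n ω]) (hT n).le
  have hy1 : ∀ n ω, x n ω / T n ≤ 1 := fun n ω => (div_le_one (hT n)).2 (hxup n ω)
  have hxm0 : ∀ n, Measurable (x n) := fun n => (hxmeas n).mono (𝒢.le n) le_rfl
  have hBint : ∀ n, Integrable (B n) μ := fun n =>
    Integrable.of_bound ((hxm0 (n + 1)).sub (hxm0 n)).aestronglyMeasurable 1
      (ae_of_all _ fun ω => by rcases hB01 n ω with h | h <;> simp [h])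
  have hq : ∀ n, μ[B n | 𝒢 n] =ᵐ[μ] q n := by
    intro n
    rw [hBind n]
    exact htrans (n + r) (by omega)
  have hqlow : ∀ n ω, 2 * (x n ω / T n) - (x n ω / T n) ^ 2 ≤ q n ω := by
    intro n ω
    have h := pow_le_pow_of_le_one (by linarith [hy1 n ω] : 0 ≤ 1 - x n ω / T n)
      (by linarith [hy0 n ω]) hm
    simp only [q]
    nlinarith
  have hd0 : ∀ k ω, 0 ≤ x k ω / T k * (1 - x k ω / T k) / (T k + 1) := fun k ω =>
    div_nonneg (mul_nonneg (hy0 k ω) (by linarith [hy1 k ω])) (by linarith [hT k])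
  have hS0 : ∀ n ω, 0 ≤ S n ω := fun n ω => Finset.sum_nonneg fun k _ => hd0 k ω
  have hSn : ∀ n ω, S n ω ≤ n := by
    intro n ω
    have : S n ω ≤ ∑ k ∈ Finset.range n, (1 : ℝ) := by
      refine Finset.sum_le_sum fun k _ => (div_le_one (by linarith [hT k])).2 ?_
      nlinarith [hy0 k ω, hy1 k ω, hT k]
    simpa using this
  have hSsucc : ∀ n ω, S (n + 1) ω =
      S n ω + x n ω / T n * (1 - x n ω / T n) / (T n + 1) := fun n ω => Finset.sum_range_succ _ _
  -- `S (n + 1)` is already known at time `n`.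
  have hSmeas : ∀ n, Measurable[𝒢 n] (S (n + 1)) := by
    intro n
    refine Finset.measurable_fun_sum _ fun k hk => ?_
    have hk' : Measurable[𝒢 n] (x k) :=
      (hxmeas k).mono (𝒢.mono (Nat.lt_succ_iff.1 (Finset.mem_range.1 hk))) le_rfl
    exact ((hk'.div_const _).mul (measurable_const.sub (hk'.div_const _))).div_const _
  have hSmeas' : ∀ n, Measurable[𝒢 n] (S n) := by
    intro n
    cases n with
    | zero => simp [S]
    | succ n => exact (hSmeas n).mono (𝒢.mono n.le_succ) le_rfl
  have hW : ∀ᵐ ω ∂μ, ∃ c, Tendsto (fun n => T n / x n ω) atTop (nhds c) := by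
    refine ae_exists_tendsto_of_affine_step (𝒢 := 𝒢) (f := fun n ω => T n / x n ω)
      (a := fun n ω => (T n + 1) / x n ω)
      (b := fun n ω => -((T n + 1) / (x n ω * (x n ω + 1)))) hBint hq
      (fun n => measurable_const.div (hxmeas n)) (fun n => measurable_const.div (hxmeas n))
      (fun n => (measurable_const.div ((hxmeas n).mul ((hxmeas n).add measurable_const))).neg)
      (fun n => ⟨T n, fun ω => ?_⟩) (fun n => ⟨T n + 1, fun ω => ?_⟩)
      (fun n => ⟨T n + 1, fun ω => ?_⟩) (fun n ω => ?_) (fun n ω => ?_)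
      (fun n ω => drift_inv (hxlow n ω) (hxup n ω) (hqlow n ω))
    all_goals
      have hx1 := hxlow n ω
      have hTn := hT n
      have hxpos : 0 < x n ω := by linarith
    · rw [abs_of_nonneg (by positivity)]
      exact div_le_self hTn.le hx1
    · rw [abs_of_nonneg (by positivity)]
      exact div_le_self (by linarith) hx1
    · rw [abs_neg, abs_of_nonneg (by positivity)]
      exact div_le_self (by linarith) (by nlinarith)
    · positivity
    · have hBn : x (n + 1) ω = x n ω + B n ω := by simp only [B]; ring
      rw [hTsucc, hBn]
      rcases hB01 n ω with h | h <;> rw [h]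
      · simp
      · field_simp
        ring
  have hA : ∀ᵐ ω ∂μ, ∃ c, Tendsto (fun n => 1 - x n ω / T n + S n ω) atTop (nhds c) := by
    refine ae_exists_tendsto_of_affine_step (𝒢 := 𝒢) (f := fun n ω => 1 - x n ω / T n + S n ω)
      (a := fun n ω => 1 - x n ω / (T n + 1) + S (n + 1) ω)
      (b := fun n _ => -(1 / (T n + 1))) hBint hq
      (fun n => (measurable_const.sub ((hxmeas n).div_const _)).add (hSmeas' n))
      (fun n => (measurable_const.sub ((hxmeas n).div_const _)).add (hSmeas n))
      (fun n => measurable_const)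
      (fun n => ⟨1 + n, fun ω => ?_⟩) (fun n => ⟨1 + (n + 1 : ℕ), fun ω => ?_⟩)
      (fun n => ⟨_, fun ω => le_rfl⟩) (fun n ω => ?_) (fun n ω => ?_) (fun n ω => ?_)
    · have := hy0 n ω
      have := hy1 n ω
      have := hS0 n ω
      have := hSn n ω
      rw [abs_of_nonneg (by linarith)]
      linarith
    · have h0 : 0 ≤ x n ω / (T n + 1) :=
        div_nonneg (by linarith [hxlow n ω]) (by linarith [hT n])
      have h1 : x n ω / (T n + 1) ≤ 1 :=
        (div_le_one (by linarith [hT n])).2 (by linarith [hxup n ω])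
      have := hS0 (n + 1) ω
      have := hSn (n + 1) ω
      rw [abs_of_nonneg (by linarith)]
      linarith
    · linarith [hy1 n ω, hS0 n ω]
    · have hBn : x (n + 1) ω = x n ω + B n ω := by simp only [B]; ring
      rw [hTsucc, hBn]
      ring
    · simp only [hSsucc]
      exact drift_lin (hT n) (hqlow n ω)
  filter_upwards [hW, hA] with ω ⟨w, hw⟩ ⟨c, hc⟩
  have hw1 : 1 ≤ w := ge_of_tendsto' hw fun n =>
    (one_le_div (by linarith [hxlow n ω])).2 (hxup n ω)
  have hy : Tendsto (fun n => x n ω / T n) atTop (nhds w⁻¹) := by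
    simpa using hw.inv₀ (by linarith)
  have hSlim : Tendsto (fun n => S n ω) atTop (nhds (c - (1 - w⁻¹))) := by
    simpa using hc.sub (hy.const_sub 1)
  have hone : w⁻¹ = 1 :=
    limit_eq_one_of_tendsto_sum (inv_pos.2 (by linarith)) (fun n => hy0 n ω) (fun n => hy1 n ω) hy
      hSlim
  rw [hone] at hy
  exact (tendsto_add_atTop_iff_nat (f := fun t : ℕ => (X t ω : ℝ) / t) r).1 hy
end

section
/- Let m ≥ 2 be an integer and c > 0, C > 0 real constants. On a probability space with a filtration (F_t)_{t≥1}, let (p(t))_{t≥1} be an adapted process with values in [0,1] such that for every t ≥ 1, almost surely |E[p(t+1) | F_t] - p(t) - (c/(t+1))·(1 - p(t) - (1-p(t))^m)| ≤ C/t². Then almost surely the limit p(∞) = lim_{t→∞} p(t) exists, and P(p(∞) ∈ {0,1}) = 1. -/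
open MeasureTheory ProbabilityTheory Filter

/-!
The drift `g z = 1 - z - (1 - z) ^ m` is nonnegative on `[0, 1]` and positive on `(0, 1)`.
Compensating `p` by the summable errors gives two submartingales that are bounded above:
`p t + ∑_{k<t} e k`, and the same process with the accumulated drift
`∑_{k<t} c / (k + 1) * g (p k)` subtracted. Both converge almost surely
(`ae_tendsto_of_submartingale_bddAbove`), the first giving the convergence of `p` and the difference
of the two giving `∑ c / (k + 1) * g (p k) < ∞`. Since the harmonic series diverges, the limit `l`
of `p` must satisfy `g l = 0`, so `l ∈ {0, 1}`.
-/

/-- A submartingale that is uniformly bounded above is bounded in `L¹`, as its expectations are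
bounded below by the initial one; hence it converges almost surely. -/
lemma ae_tendsto_of_submartingale_bddAbove
    {Ω : Type*} {m0 : MeasurableSpace Ω} {μ : Measure Ω} [IsProbabilityMeasure μ]
    {ℱ : Filtration ℕ m0} {f : ℕ → Ω → ℝ} (hf : Submartingale f ℱ μ)
    {B : ℝ} (hB : ∀ n ω, f n ω ≤ B) :
    ∀ᵐ ω ∂μ, ∃ l : ℝ, Tendsto (fun n => f n ω) atTop (nhds l) := by
  refine hf.exists_ae_tendsto_of_bdd (R := (2 * |B| - ∫ ω, f 0 ω ∂μ).toNNReal) fun n => ?_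
  rw [eLpNorm_one_eq_lintegral_enorm, ← ofReal_integral_norm_eq_lintegral_enorm (hf.integrable n)]
  refine ENNReal.ofReal_le_ofReal ?_
  have hmono : ∫ ω, f 0 ω ∂μ ≤ ∫ ω, f n ω ∂μ := by
    simpa using hf.setIntegral_le (Nat.zero_le n) (MeasurableSet.univ)
  calc ∫ ω, ‖f n ω‖ ∂μ ≤ ∫ ω, (2 * |B| - f n ω) ∂μ := by
        refine integral_mono (hf.integrable n).norm
          ((integrable_const _).sub (hf.integrable n)) fun ω => ?_
        have h1 := hB n ω
        have h2 := le_abs_self B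
        have h3 := abs_nonneg B
        simp only [Real.norm_eq_abs]
        exact abs_le.2 ⟨by linarith, by linarith⟩
    _ = 2 * |B| - ∫ ω, f n ω ∂μ := by
        rw [integral_sub (integrable_const _) (hf.integrable n)]
        simp
    _ ≤ _ := by linarith

/-- If `q` takes values in `[0, 1]` and its conditional increments are at least `h n - e n` with
`h ≥ 0` and `∑ e < ∞`, then `q n + ∑_{k<n} (e k - h k)` converges almost surely, being a
submartingale bounded above by `1 + ∑ e`. -/
lemma ae_tendsto_compensated
    {Ω : Type*} {m0 : MeasurableSpace Ω} {μ : Measure Ω} [IsProbabilityMeasure μ]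
    {ℱ : Filtration ℕ m0} {q h : ℕ → Ω → ℝ} {e : ℕ → ℝ}
    (hq : Adapted ℱ q) (hq01 : ∀ t ω, q t ω ∈ Set.Icc (0 : ℝ) 1)
    (hh : Adapted ℱ h) (hhint : ∀ n, Integrable (h n) μ) (hh0 : ∀ n ω, 0 ≤ h n ω)
    (he0 : ∀ n, 0 ≤ e n) (he : Summable e)
    (hinc : ∀ n, ∀ᵐ ω ∂μ, q n ω + h n ω - e n ≤ (μ[q (n + 1) | ℱ n]) ω) :
    ∀ᵐ ω ∂μ, ∃ l : ℝ, Tendsto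
      (fun n => q n ω + ∑ k ∈ Finset.range n, (e k - h k ω)) atTop (nhds l) := by
  have hqint : ∀ n, Integrable (q n) μ := fun n =>
    Integrable.of_mem_Icc 0 1 ((hq n).mono (ℱ.le n) le_rfl).aemeasurable
      (ae_of_all _ fun ω => hq01 n ω)
  -- The compensator at time `n + 1` is already measurable at time `n`.
  have hAmeas : ∀ n j, n ≤ j + 1 →
      Measurable[ℱ j] (fun ω => ∑ k ∈ Finset.range n, (e k - h k ω)) := by
    intro n j hnj
    refine Finset.measurable_sum _ fun k hk => ?_
    have hkj : k ≤ j := by have := Finset.mem_range.1 hk; omega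
    exact measurable_const.sub ((hh k).mono (ℱ.mono hkj) le_rfl)
  have hAint : ∀ n, Integrable (fun ω => ∑ k ∈ Finset.range n, (e k - h k ω)) μ := fun n =>
    integrable_finsetSum _ fun k _ => (integrable_const _).sub (hhint k)
  refine ae_tendsto_of_submartingale_bddAbove (ℱ := ℱ)
    (f := fun n ω => q n ω + ∑ k ∈ Finset.range n, (e k - h k ω)) (B := 1 + ∑' k, e k) ?_ ?_
  · refine submartingale_nat (fun n => ?_) (fun n => (hqint n).add (hAint n)) fun n => ?_
    · exact ((hq n).add (hAmeas n n (by omega))).stronglyMeasurable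
    · have hadd := condExp_add (hqint (n + 1)) (hAint (n + 1)) (ℱ n)
      rw [condExp_of_stronglyMeasurable (ℱ.le n)
        (hAmeas (n + 1) n le_rfl).stronglyMeasurable (hAint (n + 1))] at hadd
      filter_upwards [hadd, hinc n] with ω h1 h2
      refine le_trans ?_ h1.ge
      simp only [Pi.add_apply, Finset.sum_range_succ]
      linarith
  · intro n ω
    have h1 : ∑ k ∈ Finset.range n, (e k - h k ω) ≤ ∑ k ∈ Finset.range n, e k :=
      Finset.sum_le_sum fun k _ => by linarith [hh0 k ω]
    have h2 := he.sum_le_tsum (Finset.range n) fun k _ => he0 k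
    linarith [(hq01 n ω).2]

lemma drift_mem_Icc {m : ℕ} (hm : 2 ≤ m) {z : ℝ} (hz : z ∈ Set.Icc (0 : ℝ) 1) :
    1 - z - (1 - z) ^ m ∈ Set.Icc (0 : ℝ) 1 := by
  have h0 : 0 ≤ 1 - z := by linarith [hz.2]
  have h1 : (1 - z) ^ m ≤ 1 - z := pow_le_of_le_one h0 (by linarith [hz.1]) (by omega)
  have h2 : 0 ≤ (1 - z) ^ m := pow_nonneg h0 m
  exact ⟨by linarith, by linarith [hz.1]⟩

lemma drift_pos {m : ℕ} (hm : 2 ≤ m) {z : ℝ} (h0 : 0 < z) (h1 : z < 1) :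
    0 < 1 - z - (1 - z) ^ m := by
  have : (1 - z) ^ m < (1 - z) ^ 1 :=
    pow_lt_pow_right_of_lt_one₀ (by linarith) (by linarith) (by omega)
  linarith [pow_one (1 - z)]

/-- A sequence with a positive limit is not summable against the harmonic weights. -/
lemma not_summable_harmonic_mul {a : ℕ → ℝ} {c d : ℝ} (hc : 0 < c) (hd : 0 < d)
    (ha : Tendsto a atTop (nhds d)) :
    ¬ Summable (fun t : ℕ => c / ((t : ℝ) + 1) * a t) := by
  intro hs
  have hharm : Summable (fun t : ℕ => c * (d / 2) * (1 / ((t : ℝ) + 1))) := by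
    refine hs.of_norm_bounded_eventually_nat ?_
    filter_upwards [ha.eventually_const_lt (half_lt_self hd)] with t ht
    rw [Real.norm_of_nonneg (by positivity)]
    calc c * (d / 2) * (1 / ((t : ℝ) + 1)) = c / ((t : ℝ) + 1) * (d / 2) := by ring
      _ ≤ _ := by gcongr
  rw [summable_mul_left_iff (by positivity)] at hharm
  refine Real.not_summable_one_div_natCast ((summable_nat_add_iff 1).1 ?_)
  simpa using hharm

/-- if a `[0,1]`-valued adapted process has drift
`(c/(t+1))·(1 - p(t) - (1-p(t))^m)` up to an `O(t⁻²)` error, then a.s. `p(t)` converges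
and the limit belongs to `{0,1}`. -/
theorem drift_dichotomy_zero_one
    {Ω : Type*} {m0 : MeasurableSpace Ω} {μ : Measure Ω} [IsProbabilityMeasure μ]
    (m : ℕ) (hm : 2 ≤ m)
    (c C : ℝ) (hc : 0 < c) (hC : 0 < C)
    (ℱ : Filtration ℕ m0)
    (p : ℕ → Ω → ℝ)
    (hadapted : Adapted ℱ p)
    (hrange : ∀ t ω, p t ω ∈ Set.Icc (0 : ℝ) 1)
    (hdrift : ∀ t : ℕ, 1 ≤ t →
      ∀ᵐ ω ∂μ,
        abs ((μ[p (t + 1) | ℱ t]) ω - p t ω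
            - (c / ((t : ℝ) + 1)) * (1 - p t ω - (1 - p t ω) ^ m))
          ≤ C / (t : ℝ) ^ 2) :
    ∀ᵐ ω ∂μ, ∃ l : ℝ,
      Tendsto (fun t : ℕ => p t ω) atTop (nhds l) ∧ (l = 0 ∨ l = 1) := by
  set h : ℕ → Ω → ℝ := fun t ω => c / ((t : ℝ) + 1) * (1 - p t ω - (1 - p t ω) ^ m) with h_def
  -- The drift bound is only assumed from time `1` on; the error `1 + c` at time `0` makes the
  -- lower bound on the conditional increment trivially true there (note `C / 0 ^ 2 = 0`).
  set e : ℕ → ℝ := fun t => C / (t : ℝ) ^ 2 + if t = 0 then 1 + c else 0 with e_def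
  have hh0 : ∀ n ω, 0 ≤ h n ω := fun n ω =>
    mul_nonneg (by positivity) (drift_mem_Icc hm (hrange n ω)).1
  have hhc : ∀ n ω, h n ω ≤ c := fun n ω => by
    have h1 := (drift_mem_Icc hm (hrange n ω)).2
    have h2 : c / ((n : ℝ) + 1) ≤ c :=
      div_le_self hc.le (by linarith [(Nat.cast_nonneg n : (0 : ℝ) ≤ n)])
    calc h n ω ≤ c / ((n : ℝ) + 1) * 1 := mul_le_mul_of_nonneg_left h1 (by positivity)
      _ ≤ c := by linarith
  have hh : Adapted ℱ h := fun n =>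
    ((measurable_const.sub (hadapted n)).sub
      ((measurable_const.sub (hadapted n)).pow_const m)).const_mul _
  have hhint : ∀ n, Integrable (h n) μ := fun n =>
    Integrable.of_mem_Icc 0 c ((hh n).mono (ℱ.le n) le_rfl).aemeasurable
      (ae_of_all _ fun ω => ⟨hh0 n ω, hhc n ω⟩)
  have he0 : ∀ n, 0 ≤ e n := fun n => by
    simp only [e_def]
    split_ifs <;> positivity
  have he : Summable e := by
    refine Summable.add ?_ ?_
    · simpa [div_eq_mul_inv] using
        (Real.summable_one_div_nat_pow.2 (by norm_num : 1 < 2)).mul_left C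
    · exact summable_of_ne_finset_zero (s := {0}) fun t ht => by simp_all
  have hinc : ∀ n, ∀ᵐ ω ∂μ, p n ω + h n ω - e n ≤ (μ[p (n + 1) | ℱ n]) ω := by
    intro n
    rcases Nat.eq_zero_or_pos n with rfl | hn
    · have h1 : 0 ≤ᵐ[μ] μ[p (0 + 1) | ℱ 0] :=
        condExp_nonneg (ae_of_all _ fun ω => (hrange _ ω).1)
      filter_upwards [h1] with ω h1
      have h2 := hhc 0 ω
      have h3 := (hrange 0 ω).2
      have h4 : e 0 = 1 + c := by simp [e_def]
      simp only [Pi.zero_apply] at h1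
      linarith
    · filter_upwards [hdrift n hn] with ω h1
      have h2 := (abs_le.1 h1).1
      have h3 : e n = C / (n : ℝ) ^ 2 := by simp [e_def, hn.ne']
      simp only [h_def]
      linarith
  have hX := ae_tendsto_compensated (h := fun _ _ => 0) hadapted hrange
    (fun _ => measurable_const) (fun _ => integrable_zero _ _ _) (fun _ _ => le_rfl) he0 he
    (fun n => by
      filter_upwards [hinc n] with ω h1
      linarith [hh0 n ω])
  have hZ := ae_tendsto_compensated hadapted hrange hh hhint hh0 he0 he hinc
  filter_upwards [hX, hZ] with ω ⟨x, hx⟩ ⟨z, hz⟩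
  have hp : Tendsto (fun t => p t ω) atTop (nhds (x - ∑' k, e k)) := by
    refine (hx.sub he.hasSum.tendsto_sum_nat).congr fun n => ?_
    simp
  have hsum : Summable (fun t => h t ω) := by
    refine ((hasSum_iff_tendsto_nat_of_nonneg (fun t => hh0 t ω) (x - z)).2 ?_).summable
    refine (hx.sub hz).congr fun n => ?_
    simp [Finset.sum_sub_distrib]
  refine ⟨_, hp, ?_⟩
  have hl : x - ∑' k, e k ∈ Set.Icc (0 : ℝ) 1 :=
    isClosed_Icc.mem_of_tendsto hp (Eventually.of_forall fun t => hrange t ω)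
  by_contra! hne
  exact not_summable_harmonic_mul hc
    (drift_pos hm (hl.1.lt_of_ne' hne.1) (hl.2.lt_of_ne hne.2))
    ((tendsto_const_nhds.sub hp).sub ((tendsto_const_nhds.sub hp).pow m)) hsum
end

section
/- Let (X(t))_{t≥0} be an adapted integer-valued process on a filtered probability space with X(0) = 0 and X(t+1) - X(t) ∈ {0,1} for all t, and set x(t) = X(t)/t. Let h : [0,1] → ℝ be a continuous, strictly decreasing function, differentiable on (0,1), with h(0) > 0, h(1) < 0, and h'(x) < -1 for all x ∈ (0,1); let ρ ∈ (0,1) be the unique root of h. Suppose there is a constant C > 0 such that for every t ≥ 1, almost surely E[x(t+1) - x(t) | F_t] ≤ h(x(t))/t + C/t². Then for every α < 1/3, almost surely lim_{t→∞} t^α · max{0, x(t) - ρ} = 0. -/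
open MeasureTheory ProbabilityTheory Filter

/-!
Write `x(t) = X(t)/t` and `v(t) = max 0 (x(t) - ρ)`. Two facts drive the proof. By the mean value
theorem `h' < -1` gives `h(x) ≤ -(x - ρ)` for `x ∈ [ρ, 1]` (`drift_le`), and since `X` has steps in
`{0, 1}` the increment `δ = x(t+1) - x(t)` is at most `1/(t+1)` in absolute value. Expanding the
square, `v(t+1)² ≤ v(t)² + 2 v(t) δ + 1/(t+1)²` (`sq_pos_part_step`), so
`E[v(t+1)² | F_t] ≤ (1 - 2/t) v(t)² + O(1/t²)`.

Multiplying by `(t+1)^(2/3)` and using `(t+1)^(2/3) (1 - 2/t) ≤ t^(2/3)` shows that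
`W(t) = t^(2/3) v(t)²` satisfies `E[W(t+1) | F_t] ≤ W(t) + c(t)` with `c(t) = O(t^(-4/3))` summable
(`scalar_step`). Hence `∑_{s<t} c(s) - W(t)` is an `L¹`-bounded submartingale, it converges almost
surely, and `W` is almost surely bounded (`ae_bounded_of_submartingale`). Thus `v(t) = O(t^(-1/3))`
almost surely, which gives the claim for every `α < 1/3`.
-/

/-- An almost supermartingale with summable errors is almost surely bounded, by the martingale
convergence theorem. -/
lemma ae_bounded_of_submartingale {Ω : Type*} {m0 : MeasurableSpace Ω} {μ : Measure Ω}
    [IsProbabilityMeasure μ] {ℱ : Filtration ℕ m0} {W : ℕ → Ω → ℝ} {c : ℕ → ℝ}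
    (hW : ∀ t ω, 0 ≤ W t ω) (hW0 : ∀ ω, W 0 ω = 0) (hWint : ∀ t, Integrable (W t) μ)
    (hc : ∀ t, 0 ≤ c t) (hcs : Summable c)
    (hsub : Submartingale (fun t ω => ∑ s ∈ Finset.range t, c s - W t ω) ℱ μ) :
    ∀ᵐ ω ∂μ, ∃ B : ℝ, ∀ t, W t ω ≤ B := by
  have hsum : ∀ t, ∑ s ∈ Finset.range t, c s ≤ ∑' s, c s := fun t =>
    hcs.sum_le_tsum _ (fun i _ => hc i)
  have hsum0 : ∀ t, 0 ≤ ∑ s ∈ Finset.range t, c s := fun t =>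
    Finset.sum_nonneg fun i _ => hc i
  have hbdd : ∀ t, eLpNorm (fun ω => ∑ s ∈ Finset.range t, c s - W t ω) 1 μ
      ≤ ((2 * ∑' s, c s).toNNReal : NNReal) := by
    intro t
    have hint := hsub.integrable t
    rw [eLpNorm_one_eq_lintegral_enorm, ← ofReal_integral_norm_eq_lintegral_enorm hint]
    refine ENNReal.ofReal_le_ofReal ?_
    have hE : ∫ ω, W t ω ∂μ ≤ ∑ s ∈ Finset.range t, c s := by
      have h1 := hsub.setIntegral_le (Nat.zero_le t) MeasurableSet.univ
      simp only [setIntegral_univ] at h1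
      rw [integral_sub (integrable_const _) (hWint t)] at h1
      simp [hW0] at h1
      exact h1
    calc ∫ ω, ‖∑ s ∈ Finset.range t, c s - W t ω‖ ∂μ
        ≤ ∫ ω, (∑ s ∈ Finset.range t, c s + W t ω) ∂μ := by
          refine integral_mono hint.norm ((integrable_const _).add (hWint t)) fun ω => ?_
          refine (norm_sub_le _ _).trans (le_of_eq ?_)
          rw [Real.norm_of_nonneg (hsum0 t), Real.norm_of_nonneg (hW t ω)]
      _ = ∑ s ∈ Finset.range t, c s + ∫ ω, W t ω ∂μ := by
          rw [integral_add (integrable_const _) (hWint t)]; simp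
      _ ≤ 2 * ∑' s, c s := by linarith [hsum t]
  filter_upwards [hsub.exists_ae_tendsto_of_bdd hbdd] with ω ⟨l, hl⟩
  obtain ⟨B, hB⟩ := hl.bddBelow_range
  refine ⟨∑' s, c s - B, fun t => ?_⟩
  have : B ≤ ∑ s ∈ Finset.range t, c s - W t ω := hB ⟨t, rfl⟩
  linarith [hsum t]

lemma drift_le {h : ℝ → ℝ} (hcont : ContinuousOn h (Set.Icc 0 1))
    (hdiff : ∀ x ∈ Set.Ioo (0 : ℝ) 1, DifferentiableAt ℝ h x)
    (hderiv : ∀ x ∈ Set.Ioo (0 : ℝ) 1, deriv h x < -1)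
    {ρ : ℝ} (hρ : ρ ∈ Set.Ioo (0 : ℝ) 1) (hroot : h ρ = 0) {x : ℝ} (hx : ρ ≤ x) (hx1 : x ≤ 1) :
    h x ≤ -(x - ρ) := by
  have := (convex_Icc (0 : ℝ) 1).image_sub_le_mul_sub_of_deriv_le hcont
    (fun y hy => by
      rw [interior_Icc] at hy
      exact (hdiff y hy).differentiableWithinAt)
    (C := -1) (fun y hy => by
      rw [interior_Icc] at hy
      exact (hderiv y hy).le) ρ ⟨hρ.1.le, hρ.2.le⟩ x ⟨hρ.1.le.trans hx, hx1⟩ hx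
  linarith

lemma sq_pos_part_step (y δ : ℝ) :
    max 0 (y + δ) ^ 2 ≤ max 0 y ^ 2 + 2 * max 0 y * δ + δ ^ 2 := by
  rcases max_cases 0 y with ⟨h1, h2⟩ | ⟨h1, h2⟩ <;>
  rcases max_cases 0 (y + δ) with ⟨h3, h4⟩ | ⟨h3, h4⟩ <;> rw [h1, h3] <;>
  nlinarith [sq_nonneg (y + δ)]

/-- The exponent `2/3` is small enough for the contraction `1 - 2/t` to absorb the growth of
`t^(2/3)`. -/
lemma rpow_succ_le (t : ℝ) (ht : 1 ≤ t) :
    (t + 1) ^ (2 / 3 : ℝ) * (1 - 2 / t) ≤ t ^ (2 / 3 : ℝ) := by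
  have h0 : 0 < t := by linarith
  have ha : 0 ≤ (t + 1) ^ (2 / 3 : ℝ) := by positivity
  have h1 : 1 - 2 / t ≤ t / (t + 1) := by
    rw [le_div_iff₀ (by linarith), sub_mul, div_mul_eq_mul_div, sub_le_iff_le_add]
    have : 2 ≤ 2 * (t + 1) / t := by rw [le_div_iff₀ h0]; linarith
    linarith
  have h2 : ((t + 1) / t) ^ (2 / 3 : ℝ) ≤ (t + 1) / t :=
    Real.rpow_le_self_of_one_le (by rw [le_div_iff₀ h0]; linarith) (by norm_num)
  rw [Real.div_rpow (by linarith) h0.le, div_le_iff₀ (by positivity)] at h2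
  calc (t + 1) ^ (2 / 3 : ℝ) * (1 - 2 / t)
      ≤ (t + 1) ^ (2 / 3 : ℝ) * (t / (t + 1)) := mul_le_mul_of_nonneg_left h1 ha
    _ ≤ ((t + 1) / t * t ^ (2 / 3 : ℝ)) * (t / (t + 1)) :=
        mul_le_mul_of_nonneg_right h2 (by positivity)
    _ = t ^ (2 / 3 : ℝ) := by field_simp

/-- The one-step inequality for `W(t) = t^(2/3) v²`, with `d` the conditional mean of the
increment of `x` and `D` the value of the drift function. -/
lemma scalar_step {t v d D C : ℝ} (ht : 1 ≤ t) (hv0 : 0 ≤ v) (hv1 : v ≤ 1) (hC : 0 < C)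
    (hD : v * D ≤ -v ^ 2) (hd : d ≤ D / t + C / t ^ 2) :
    (t + 1) ^ (2 / 3 : ℝ) * (v ^ 2 + 1 / (t + 1) ^ 2) + 2 * (t + 1) ^ (2 / 3 : ℝ) * v * d
      ≤ t ^ (2 / 3 : ℝ) * v ^ 2 + (8 * C + 1) * ((t + 1) ^ (2 / 3 : ℝ) / (t + 1) ^ 2) := by
  have h0 : 0 < t := by linarith
  have hr := rpow_succ_le t ht
  set a := (t + 1) ^ (2 / 3 : ℝ) with ha_def
  have ha : 0 ≤ a := by positivity
  have h1 : v * d ≤ -(v ^ 2 / t) + C / t ^ 2 := by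
    calc v * d ≤ v * (D / t + C / t ^ 2) := mul_le_mul_of_nonneg_left hd hv0
      _ = v * D / t + v * (C / t ^ 2) := by ring
      _ ≤ -v ^ 2 / t + 1 * (C / t ^ 2) := by gcongr
      _ = _ := by ring
  have h2 : C / t ^ 2 ≤ 4 * C / (t + 1) ^ 2 := by
    rw [div_le_div_iff₀ (by positivity) (by positivity)]
    nlinarith [mul_nonneg hC.le (by nlinarith : 0 ≤ 4 * t ^ 2 - (t + 1) ^ 2)]
  calc a * (v ^ 2 + 1 / (t + 1) ^ 2) + 2 * a * v * d
      = a * (v ^ 2 + 1 / (t + 1) ^ 2) + 2 * a * (v * d) := by ring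
    _ ≤ a * (v ^ 2 + 1 / (t + 1) ^ 2) + 2 * a * (-(v ^ 2 / t) + 4 * C / (t + 1) ^ 2) := by
        gcongr; linarith
    _ = (a * (1 - 2 / t)) * v ^ 2 + (8 * C + 1) * (a / (t + 1) ^ 2) := by ring
    _ ≤ _ := by gcongr

/-- the technical drift lemma: if `X(0)=0`, `X(t+1)-X(t) ∈ {0,1}`, `x(t)=X(t)/t`
satisfies `E[x(t+1)-x(t) | F_t] ≤ h(x(t))/t + C/t²` for a strictly decreasing drift `h` with
`h(0)>0`, `h(1)<0` and `h' < -1` on `(0,1)`, and `ρ ∈ (0,1)` is the root of `h`, then for any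
`α < 1/3`, a.s. `t^α · max{0, x(t)-ρ} → 0`. -/
theorem drift_lemma_upper
    {Ω : Type*} {m0 : MeasurableSpace Ω} {μ : Measure Ω} [IsProbabilityMeasure μ]
    (ℱ : Filtration ℕ m0)
    (X : ℕ → Ω → ℤ)
    (hadapted : Adapted ℱ fun t ω => (X t ω : ℝ))
    (hinit : ∀ ω, X 0 ω = 0)
    (hstep : ∀ t, ∀ ω, X (t + 1) ω - X t ω = 0 ∨ X (t + 1) ω - X t ω = 1)
    (h : ℝ → ℝ)
    (hcont : ContinuousOn h (Set.Icc 0 1))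
    (hanti : StrictAntiOn h (Set.Icc 0 1))
    (hdiff : ∀ x ∈ Set.Ioo (0 : ℝ) 1, DifferentiableAt ℝ h x)
    (h0 : 0 < h 0) (h1 : h 1 < 0)
    (hderiv : ∀ x ∈ Set.Ioo (0 : ℝ) 1, deriv h x < -1)
    (ρ : ℝ) (hρ : ρ ∈ Set.Ioo (0 : ℝ) 1) (hroot : h ρ = 0)
    (C : ℝ) (hC : 0 < C)
    (hdrift : ∀ t : ℕ, 1 ≤ t →
      ∀ᵐ ω ∂μ,
        (μ[fun ω' => (X (t + 1) ω' : ℝ) / ((t : ℝ) + 1) - (X t ω' : ℝ) / (t : ℝ) | ℱ t]) ω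
          ≤ h ((X t ω : ℝ) / (t : ℝ)) / (t : ℝ) + C / (t : ℝ) ^ 2) :
    ∀ α : ℝ, α < 1 / 3 →
      ∀ᵐ ω ∂μ,
        Tendsto (fun t : ℕ => (t : ℝ) ^ α * max 0 ((X t ω : ℝ) / (t : ℝ) - ρ))
          atTop (nhds 0) := by
  intro α hα
  have hX : ∀ t ω, 0 ≤ (X t ω : ℝ) ∧ (X t ω : ℝ) ≤ t := by
    intro t ω
    have : 0 ≤ X t ω ∧ X t ω ≤ (t : ℤ) := by
      induction t with
      | zero => simp [hinit]
      | succ n ih =>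
        push_cast
        rcases hstep n ω with h | h <;> constructor <;> linarith [ih.1, ih.2]
    exact_mod_cast this
  have hx : ∀ t ω, 0 ≤ (X t ω : ℝ) / t ∧ (X t ω : ℝ) / t ≤ 1 := fun t ω =>
    ⟨div_nonneg (hX t ω).1 t.cast_nonneg, div_le_one_of_le₀ (hX t ω).2 t.cast_nonneg⟩
  set v : ℕ → Ω → ℝ := fun t ω => max 0 ((X t ω : ℝ) / (t : ℝ) - ρ) with hv_def
  have hv0 : ∀ t ω, 0 ≤ v t ω := fun t ω => le_max_left _ _
  have hv1 : ∀ t ω, v t ω ≤ 1 := fun t ω =>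
    max_le zero_le_one (by linarith [(hx t ω).2, hρ.1])
  have hvm : ∀ t, Measurable[ℱ t] (v t) := fun t =>
    Measurable.max measurable_const (((hadapted t).div_const _).sub_const _)
  have hbint : ∀ (f : Ω → ℝ) (B : ℝ), Measurable f → (∀ ω, |f ω| ≤ B) → Integrable f μ :=
    fun f B hf hB => Integrable.of_bound hf.aestronglyMeasurable B
      (Eventually.of_forall hB)
  set W : ℕ → Ω → ℝ := fun t ω => (t : ℝ) ^ (2 / 3 : ℝ) * v t ω ^ 2 with hW_def
  have hWm : ∀ t, Measurable[ℱ t] (W t) := fun t => ((hvm t).pow_const 2).const_mul _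
  have hW0 : ∀ t ω, 0 ≤ W t ω := fun t ω => by positivity
  have hv2 : ∀ t ω, v t ω ^ 2 ≤ 1 := fun t ω => pow_le_one₀ (hv0 t ω) (hv1 t ω)
  have hWint : ∀ t, Integrable (W t) μ := fun t =>
    hbint _ ((t : ℝ) ^ (2 / 3 : ℝ)) ((hWm t).mono (ℱ.le t) le_rfl) fun ω => by
      rw [abs_of_nonneg (hW0 t ω)]
      exact mul_le_of_le_one_right (by positivity) (hv2 t ω)
  set c : ℕ → ℝ := fun t => (8 * C + 1) * (((t : ℝ) + 1) ^ (2 / 3 : ℝ) / ((t : ℝ) + 1) ^ 2)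
    with hc_def
  have hc0 : ∀ t, 0 ≤ c t := fun t => by positivity
  have hcs : Summable c := by
    refine Summable.mul_left _ ?_
    have h43 : Summable fun n : ℕ => 1 / (((n + 1 : ℕ) : ℝ)) ^ (4 / 3 : ℝ) :=
      (summable_nat_add_iff 1).mpr (Real.summable_one_div_nat_rpow.mpr (by norm_num))
    refine h43.congr fun n => ?_
    have hn : (0 : ℝ) < (n : ℝ) + 1 := by positivity
    push_cast
    rw [← Real.rpow_natCast ((n : ℝ) + 1) 2, ← Real.rpow_sub hn, one_div, ← Real.rpow_neg hn.le]
    norm_num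
  have hsub : Submartingale (fun t ω => ∑ s ∈ Finset.range t, c s - W t ω) ℱ μ := by
    refine submartingale_nat (fun t => (measurable_const.sub (hWm t)).stronglyMeasurable)
      (fun t => (integrable_const _).sub (hWint t)) fun t => ?_
    rcases Nat.eq_zero_or_pos t with rfl | ht
    · -- At `t = 0` the drift bound is unavailable, but `W 0 = 0` and `W 1 ≤ 1 ≤ c 0`.
      have h1 : 0 ≤ᵐ[μ] fun ω => ∑ s ∈ Finset.range (0 + 1), c s - W (0 + 1) ω :=
        Eventually.of_forall fun ω => by
          have := hv2 1 ω
          simp [hc_def, hW_def]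
          linarith
      filter_upwards [condExp_nonneg (m := ℱ 0) h1] with ω hω
      simpa [hW_def] using hω
    · have ht1 : (1 : ℝ) ≤ t := by exact_mod_cast ht
      have htp : (0 : ℝ) < t := by linarith
      set a : ℝ := ((t : ℝ) + 1) ^ (2 / 3 : ℝ) with ha_def
      have ha : 0 ≤ a := by positivity
      set δ : Ω → ℝ := fun ω => (X (t + 1) ω : ℝ) / ((t : ℝ) + 1) - (X t ω : ℝ) / (t : ℝ)
        with hδ_def
      have hδ : ∀ ω, |δ ω| ≤ 1 / ((t : ℝ) + 1) := by
        intro ω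
        have hs : (X (t + 1) ω : ℝ) - X t ω = 0 ∨ (X (t + 1) ω : ℝ) - X t ω = 1 := by
          exact_mod_cast hstep t ω
        have he : δ ω = (((X (t + 1) ω : ℝ) - X t ω) - (X t ω : ℝ) / t) / ((t : ℝ) + 1) := by
          simp only [hδ_def]; field_simp; ring
        rw [he, abs_div, abs_of_pos (by positivity : (0 : ℝ) < (t : ℝ) + 1)]
        gcongr
        have := hx t ω
        rw [abs_le]
        rcases hs with hs | hs <;> rw [hs] <;> constructor <;> linarith [this.1, this.2]
      have hXm : ∀ s, Measurable fun ω => (X s ω : ℝ) := fun s =>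
        (hadapted s).mono (ℱ.le s) le_rfl
      have hδint : Integrable δ μ :=
        hbint _ _ (((hXm (t + 1)).div_const _).sub ((hXm t).div_const _)) hδ
      -- `g - p * δ` is the lower bound of the next value obtained from expanding the square;
      -- `g` and `p` are known at time `t`.
      set g : Ω → ℝ := fun ω => ∑ s ∈ Finset.range (t + 1), c s
        - a * (v t ω ^ 2 + 1 / ((t : ℝ) + 1) ^ 2) with hg_def
      set p : Ω → ℝ := fun ω => 2 * a * v t ω with hp_def
      have hgm : Measurable[ℱ t] g :=
        measurable_const.sub ((((hvm t).pow_const 2).add_const _).const_mul _)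
      have hpm : Measurable[ℱ t] p := (hvm t).const_mul _
      have hv2int : Integrable (fun ω => v t ω ^ 2) μ :=
        hbint _ 1 (((hvm t).mono (ℱ.le t) le_rfl).pow_const 2) fun ω => by
          rw [abs_of_nonneg (by positivity)]; exact hv2 t ω
      have hgint : Integrable g μ :=
        (integrable_const _).sub ((hv2int.add (integrable_const _)).const_mul _)
      have hpb : ∀ ω, ‖p ω‖ ≤ 2 * a := fun ω => by
        rw [Real.norm_of_nonneg (by have := hv0 t ω; positivity)]
        exact mul_le_of_le_one_right (by positivity) (hv1 t ω)
      have hpδ : Integrable (p * δ) μ :=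
        hδint.bdd_mul (hpm.mono (ℱ.le t) le_rfl).aestronglyMeasurable (Eventually.of_forall hpb)
      have hlow : g - p * δ ≤ᵐ[μ]
          fun ω => ∑ s ∈ Finset.range (t + 1), c s - W (t + 1) ω :=
        Eventually.of_forall fun ω => by
          have h1 := sq_pos_part_step ((X t ω : ℝ) / t - ρ) (δ ω)
          have h2 : (X t ω : ℝ) / t - ρ + δ ω = (X (t + 1) ω : ℝ) / ((t + 1 : ℕ) : ℝ) - ρ := by
            simp only [hδ_def]; push_cast; ring
          rw [h2] at h1
          have h3 : δ ω ^ 2 ≤ 1 / ((t : ℝ) + 1) ^ 2 := by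
            have := pow_le_pow_left₀ (abs_nonneg _) (hδ ω) 2
            rwa [sq_abs, div_pow, one_pow] at this
          have h4 : v (t + 1) ω ^ 2 ≤ v t ω ^ 2 + 2 * v t ω * δ ω + 1 / ((t : ℝ) + 1) ^ 2 :=
            h1.trans (by simp only [hv_def]; linarith)
          have h5 := mul_le_mul_of_nonneg_left h4 ha
          have h6 : W (t + 1) ω = a * v (t + 1) ω ^ 2 := by
            simp only [hW_def, ha_def]; push_cast; rfl
          simp only [Pi.sub_apply, Pi.mul_apply, hg_def, hp_def]
          rw [h6]
          linarith
      have hmono := condExp_mono (m := ℱ t) (hgint.sub hpδ)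
        ((integrable_const _).sub (hWint (t + 1))) hlow
      have hgc : μ[g | ℱ t] = g :=
        condExp_of_stronglyMeasurable (ℱ.le t) hgm.stronglyMeasurable hgint
      filter_upwards [hmono, condExp_sub hgint hpδ (ℱ t),
        condExp_mul_of_stronglyMeasurable_left hpm.stronglyMeasurable hpδ hδint, hdrift t ht]
        with ω h1 h2 h3 h4
      refine le_trans ?_ h1
      rw [h2, Pi.sub_apply, h3, hgc, Pi.mul_apply]
      have hD : v t ω * h ((X t ω : ℝ) / t) ≤ -v t ω ^ 2 := by
        rcases le_total ((X t ω : ℝ) / t) ρ with hle | hle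
        · have : v t ω = 0 := max_eq_left (by linarith)
          simp [this]
        · have : v t ω = (X t ω : ℝ) / t - ρ := max_eq_right (by linarith)
          have h5 := drift_le hcont hdiff hderiv hρ hroot hle (hx t ω).2
          rw [← this] at h5
          nlinarith [mul_le_mul_of_nonneg_left h5 (hv0 t ω)]
      have h6 := scalar_step ht1 (hv0 t ω) (hv1 t ω) hC hD h4
      simp only [hg_def, hp_def, hW_def, Finset.sum_range_succ]
      have h7 : c t = (8 * C + 1) * (a / ((t : ℝ) + 1) ^ 2) := rfl
      rw [h7]
      linarith
  filter_upwards [ae_bounded_of_submartingale hW0 (fun ω => by simp [hW_def]) hWint hc0 hcs hsub]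
    with ω ⟨B, hB⟩
  have hB0 : 0 ≤ B := (hW0 0 ω).trans (hB 0)
  have hlim : Tendsto (fun t : ℕ => (t : ℝ) ^ (-(1 / 3 - α)) * √B) atTop (nhds 0) := by
    have := (tendsto_rpow_neg_atTop (by linarith : 0 < 1 / 3 - α)).comp
      (tendsto_natCast_atTop_atTop (R := ℝ))
    simpa using this.mul_const (√B)
  refine squeeze_zero' (Eventually.of_forall fun t => by positivity) ?_ hlim
  filter_upwards [eventually_gt_atTop 0] with t ht
  have htp : (0 : ℝ) < t := by exact_mod_cast ht
  have h1 : (t : ℝ) ^ (1 / 3 : ℝ) * v t ω ≤ √B := by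
    refine Real.le_sqrt_of_sq_le ?_
    have h2 : ((t : ℝ) ^ (1 / 3 : ℝ)) ^ 2 = (t : ℝ) ^ (2 / 3 : ℝ) := by
      rw [← Real.rpow_natCast, ← Real.rpow_mul htp.le]; norm_num
    rw [mul_pow, h2]
    exact hB t
  calc (t : ℝ) ^ α * v t ω
      = (t : ℝ) ^ (-(1 / 3 - α)) * ((t : ℝ) ^ (1 / 3 : ℝ) * v t ω) := by
        rw [← mul_assoc, ← Real.rpow_add htp]; ring_nf
    _ ≤ _ := by gcongr
end

section
/- Let (X(t))_{t≥0} be an adapted integer-valued process on a filtered probability space with X(0) = 0 and X(t+1) - X(t) ∈ {-1,1} for all t, and set x(t) = X(t)/t. Let h : [0,1] → ℝ be a continuous, strictly decreasing function, differentiable on (0,1), with h(0) > 0, h(1) < 0, and h'(x) < -1 for all x ∈ (0,1); let ρ ∈ (0,1) be the unique root of h. Suppose there is a constant C > 0 such that for every t ≥ 1, almost surely E[x(t+1) - x(t) | F_t] ≤ h(x(t))/t + C/t². Then for every α < 1/3, almost surely lim_{t→∞} t^α · max{0, x(t) - ρ} = 0. -/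
open MeasureTheory ProbabilityTheory Filter

/-!
The proof is a Lyapunov argument for the squared one-sided deviation. Write `x(t) = X(t)/t` and
`y(t) = max 0 (x(t) - ρ)`. Since `h' < -1` and `h ρ = 0`, the mean value theorem gives
`h x ≤ -(x - ρ)` on `[ρ, 1]`, and the increments satisfy `|x(t+1) - x(t)| ≤ 2/(t+1)`. Expanding the
square (`condExp_posPart_sq_le`) gives, with `K = 8C + 4`,
`E[y(t+1)² | F_t] ≤ (1 - 2/t) y(t)² + K/(t+1)² ≤ (1 - 1/t) y(t)² + K/(t+1)²`.

Multiplying by `(t+1)^(2/3) ≤ t^(2/3) (1 + 1/t)` shows that `V(t) = (t^(1/3) y(t))²` satisfies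
`E[V(t+1) | F_t] ≤ V(t) + K (t+1)^(-4/3)`. The error terms are summable, so `V` is an almost
supermartingale and converges almost surely (`ae_exists_tendsto_of_condExp_le_add`). Hence
`t^(1/3) y(t)` converges to a finite limit, and `t^α y(t) → 0` for each `α < 1/3`.

The values of `h` outside `[0, 1]`, which `x(t)` may reach on the negative side, play no role: the
drift only enters multiplied by `y(t)`.
-/

/-- A nonnegative almost supermartingale with deterministic summable errors converges almost
surely: adding the tail sum of the errors turns it into a nonnegative supermartingale. -/
lemma ae_exists_tendsto_of_condExp_le_add
    {Ω : Type*} {m0 : MeasurableSpace Ω} {μ : Measure Ω} [IsProbabilityMeasure μ]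
    {ℱ : Filtration ℕ m0} {V : ℕ → Ω → ℝ} {c : ℕ → ℝ}
    (hadp : StronglyAdapted ℱ V) (hint : ∀ n, Integrable (V n) μ) (hV : ∀ n ω, 0 ≤ V n ω)
    (hc : ∀ n, 0 ≤ c n) (hsum : Summable c)
    (hle : ∀ n, ∀ᵐ ω ∂μ, (μ[V (n + 1) | ℱ n]) ω ≤ V n ω + c n) :
    ∀ᵐ ω ∂μ, ∃ l, Tendsto (fun n => V n ω) atTop (nhds l) := by
  -- the tail sum `∑_{i ≥ n} c i`
  set r : ℕ → ℝ := fun n => (∑' i, c i) - ∑ i ∈ Finset.range n, c i with hr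
  have hr0 : ∀ n, 0 ≤ r n := fun n => sub_nonneg.2 (hsum.sum_le_tsum _ fun i _ => hc i)
  have hrs : ∀ n, r n = c n + r (n + 1) := by
    intro n
    simp only [hr, Finset.sum_range_succ]
    ring
  have hrlim : Tendsto r atTop (nhds 0) := by
    have := (tendsto_const_nhds (x := ∑' i, c i)).sub hsum.hasSum.tendsto_sum_nat
    simpa [hr] using this
  set S : ℕ → Ω → ℝ := fun n ω => V n ω + r n with hS
  have hSint : ∀ n, Integrable (S n) μ := fun n => (hint n).add (integrable_const _)
  have hS0 : ∀ n ω, 0 ≤ S n ω := fun n ω => add_nonneg (hV n ω) (hr0 n)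
  have hsuper : Supermartingale S ℱ μ := by
    refine supermartingale_nat (fun n => (hadp n).add stronglyMeasurable_const) hSint fun n => ?_
    have h1 : μ[S (n + 1) | ℱ n] =ᵐ[μ] μ[V (n + 1) | ℱ n] + μ[fun _ => r (n + 1) | ℱ n] :=
      condExp_add (hint (n + 1)) (integrable_const _) _
    rw [condExp_const (ℱ.le n)] at h1
    filter_upwards [h1, hle n] with ω e1 e2
    rw [e1]
    simp only [Pi.add_apply, hS]
    linarith [hrs n]
  have hbdd : ∀ n, eLpNorm ((-S) n) 1 μ ≤ (Real.toNNReal (∫ ω, S 0 ω ∂μ) : ENNReal) := by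
    intro n
    rw [Pi.neg_apply, eLpNorm_neg, eLpNorm_one_eq_lintegral_enorm]
    have h1 : ∫⁻ ω, ‖S n ω‖ₑ ∂μ = ENNReal.ofReal (∫ ω, S n ω ∂μ) := by
      rw [ofReal_integral_eq_lintegral_ofReal (hSint n) (Eventually.of_forall (hS0 n))]
      exact lintegral_congr fun ω => Real.enorm_of_nonneg (hS0 n ω)
    rw [h1]
    refine ENNReal.ofReal_le_ofReal ?_
    simpa using hsuper.setIntegral_le (Nat.zero_le n) MeasurableSet.univ
  filter_upwards [hsuper.neg.exists_ae_tendsto_of_bdd hbdd] with ω ⟨l, hl⟩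
  refine ⟨-l - 0, (hl.neg.sub hrlim).congr fun n => ?_⟩
  simp [hS]

/-- One-step estimate for the squared positive part `(max 0 (x - ρ))²` under an increment of size
at most `d` whose conditional mean is at most `b`. -/
lemma condExp_posPart_sq_le
    {Ω : Type*} {m m0 : MeasurableSpace Ω} {μ : Measure Ω} [IsProbabilityMeasure μ] (hm : m ≤ m0)
    {x x' b : Ω → ℝ} {ρ d : ℝ} (hx : Measurable[m] x) (hx' : Measurable[m0] x')
    (hxρ : ∀ ω, max 0 (x ω - ρ) ≤ 1) (hxρ' : ∀ ω, max 0 (x' ω - ρ) ≤ 1)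
    (hd : ∀ ω, |x' ω - x ω| ≤ d)
    (hb : ∀ᵐ ω ∂μ, (μ[fun ω' => x' ω' - x ω' | m]) ω ≤ b ω) :
    ∀ᵐ ω ∂μ, (μ[fun ω' => (max 0 (x' ω' - ρ)) ^ 2 | m]) ω ≤
      (max 0 (x ω - ρ)) ^ 2 + 2 * max 0 (x ω - ρ) * b ω + d ^ 2 := by
  set y : Ω → ℝ := fun ω => max 0 (x ω - ρ) with hy
  set y' : Ω → ℝ := fun ω => max 0 (x' ω - ρ) with hy'
  have hym : Measurable[m] y := measurable_const.max (hx.sub_const ρ)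
  have hym' : Measurable[m0] y' := measurable_const.max (hx'.sub_const ρ)
  have hy0 : ∀ ω, 0 ≤ y ω := fun ω => le_max_left _ _
  have hy0' : ∀ ω, 0 ≤ y' ω := fun ω => le_max_left _ _
  have hΔm : Measurable[m0] (fun ω => x' ω - x ω) := hx'.sub (hx.mono hm le_rfl)
  have hΔint : Integrable (fun ω => x' ω - x ω) μ :=
    Integrable.of_bound hΔm.aestronglyMeasurable d (Eventually.of_forall hd)
  have hy'int : Integrable (fun ω => y' ω ^ 2) μ := by
    refine Integrable.of_bound (hym'.pow_const 2).aestronglyMeasurable 1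
      (Eventually.of_forall fun ω => ?_)
    rw [Real.norm_of_nonneg (sq_nonneg _)]
    nlinarith [hxρ' ω, hy0' ω]
  have hAm : StronglyMeasurable[m] (fun ω => y ω ^ 2 + d ^ 2) :=
    ((hym.pow_const 2).add_const _).stronglyMeasurable
  have hAint : Integrable (fun ω => y ω ^ 2 + d ^ 2) μ := by
    refine Integrable.of_bound (hAm.mono hm).aestronglyMeasurable (1 + d ^ 2)
      (Eventually.of_forall fun ω => ?_)
    rw [Real.norm_of_nonneg (by positivity)]
    nlinarith [hxρ ω, hy0 ω]
  have hYm : StronglyMeasurable[m] (fun ω => 2 * y ω) := (hym.const_mul 2).stronglyMeasurable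
  have hYb : ∀ ω, ‖2 * y ω‖ ≤ 2 := fun ω => by
    rw [Real.norm_of_nonneg (by linarith [hy0 ω])]
    linarith [hxρ ω]
  have hBint : Integrable ((fun ω => 2 * y ω) * fun ω => x' ω - x ω) μ :=
    hΔint.bdd_mul (hYm.mono hm).aestronglyMeasurable (Eventually.of_forall hYb)
  have hpull := condExp_stronglyMeasurable_mul_of_bound hm hYm hΔint 2 (Eventually.of_forall hYb)
  have hadd := condExp_add hAint hBint m
  have hmono := condExp_mono (m := m) hy'int (hAint.add hBint) <| Eventually.of_forall fun ω => by
    have hsq : (x' ω - x ω) ^ 2 ≤ d ^ 2 := sq_le_sq' (neg_le_of_abs_le (hd ω)) (le_of_abs_le (hd ω))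
    simp only [Pi.add_apply, Pi.mul_apply, hy, hy']
    rcases max_cases 0 (x ω - ρ) with ⟨e, l⟩ | ⟨e, l⟩ <;>
    rcases max_cases 0 (x' ω - ρ) with ⟨e', l'⟩ | ⟨e', l'⟩ <;> rw [e, e'] <;>
    nlinarith [sq_nonneg (x' ω - ρ)]
  filter_upwards [hpull, hadd, hmono, hb] with ω e1 e2 e3 e4
  rw [condExp_of_stronglyMeasurable hm hAm hAint] at e2
  rw [e2, Pi.add_apply, e1, Pi.mul_apply] at e3
  nlinarith [hy0 ω]

/-- The mean value inequality for a drift of slope less than `-1` to the right of its root. -/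
lemma drift_le_neg_sub {h : ℝ → ℝ} (hcont : ContinuousOn h (Set.Icc 0 1))
    (hdiff : ∀ x ∈ Set.Ioo (0 : ℝ) 1, DifferentiableAt ℝ h x)
    (hderiv : ∀ x ∈ Set.Ioo (0 : ℝ) 1, deriv h x < -1)
    {ρ : ℝ} (hρ : ρ ∈ Set.Ioo (0 : ℝ) 1) (hroot : h ρ = 0) {x : ℝ} (hx : ρ < x) (hx1 : x ≤ 1) :
    h x ≤ -(x - ρ) := by
  obtain ⟨z, hz, e⟩ := exists_deriv_eq_slope h hx
    (hcont.mono (Set.Icc_subset_Icc hρ.1.le hx1))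
    (fun u hu => (hdiff u ⟨hρ.1.trans hu.1, hu.2.trans_le hx1⟩).differentiableWithinAt)
  have hz' := hderiv z ⟨hρ.1.trans hz.1, hz.2.trans_le hx1⟩
  rw [e, hroot, div_lt_iff₀ (sub_pos.2 hx)] at hz'
  linarith

lemma rpow_two_thirds_succ_le {t : ℝ} (ht : 0 < t) :
    (t + 1) ^ (2 / 3 : ℝ) ≤ t ^ (2 / 3 : ℝ) * (1 + 1 / t) := by
  have h1 : t + 1 = t * (1 + 1 / t) := by field_simp
  have h2 : 1 ≤ 1 + 1 / t := by
    have : 0 < 1 / t := by positivity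
    linarith
  rw [h1, Real.mul_rpow ht.le (by linarith)]
  gcongr
  exact Real.rpow_le_self_of_one_le h2 (by norm_num)

/-- Statement 7 (the technical drift lemma): if `X(0)=0`, `X(t+1)-X(t) ∈ {-1,1}`, `x(t)=X(t)/t`
satisfies `E[x(t+1)-x(t) | F_t] ≤ h(x(t))/t + C/t²` for a strictly decreasing drift `h` with
`h(0)>0`, `h(1)<0` and `h' < -1` on `(0,1)`, and `ρ ∈ (0,1)` is the root of `h`, then for any
`α < 1/3`, a.s. `t^α · max{0, x(t)-ρ} → 0`. -/
theorem drift_lemma_plusminus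
    {Ω : Type*} {m0 : MeasurableSpace Ω} {μ : Measure Ω} [IsProbabilityMeasure μ]
    (ℱ : Filtration ℕ m0)
    (X : ℕ → Ω → ℤ)
    (hadapted : Adapted ℱ fun t ω => (X t ω : ℝ))
    (hinit : ∀ ω, X 0 ω = 0)
    (hstep : ∀ t, ∀ ω, X (t + 1) ω - X t ω = -1 ∨ X (t + 1) ω - X t ω = 1)
    (h : ℝ → ℝ)
    (hcont : ContinuousOn h (Set.Icc 0 1))
    (hanti : StrictAntiOn h (Set.Icc 0 1))
    (hdiff : ∀ x ∈ Set.Ioo (0 : ℝ) 1, DifferentiableAt ℝ h x)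
    (h0 : 0 < h 0) (h1 : h 1 < 0)
    (hderiv : ∀ x ∈ Set.Ioo (0 : ℝ) 1, deriv h x < -1)
    (ρ : ℝ) (hρ : ρ ∈ Set.Ioo (0 : ℝ) 1) (hroot : h ρ = 0)
    (C : ℝ) (hC : 0 < C)
    (hdrift : ∀ t : ℕ, 1 ≤ t →
      ∀ᵐ ω ∂μ,
        (μ[fun ω' => (X (t + 1) ω' : ℝ) / ((t : ℝ) + 1) - (X t ω' : ℝ) / (t : ℝ) | ℱ t]) ω
          ≤ h ((X t ω : ℝ) / (t : ℝ)) / (t : ℝ) + C / (t : ℝ) ^ 2) :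
    ∀ α : ℝ, α < 1 / 3 →
      ∀ᵐ ω ∂μ,
        Tendsto (fun t : ℕ => (t : ℝ) ^ α * max 0 ((X t ω : ℝ) / (t : ℝ) - ρ))
          atTop (nhds 0) := by
  intro α hα
  set x : ℕ → Ω → ℝ := fun t ω => (X t ω : ℝ) / (t : ℝ) with hx
  set y : ℕ → Ω → ℝ := fun t ω => max 0 (x t ω - ρ) with hy
  have hXabs : ∀ t ω, |(X t ω : ℝ)| ≤ t := by
    intro t ω
    induction t with
    | zero => simp [hinit]
    | succ t ih =>
      have hs : (X (t + 1) ω : ℝ) - X t ω = -1 ∨ (X (t + 1) ω : ℝ) - X t ω = 1 := by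
        exact_mod_cast hstep t ω
      rw [abs_le] at ih ⊢
      push_cast
      rcases hs with hs | hs <;> constructor <;> linarith [ih.1, ih.2]
  have hxle : ∀ t ω, x t ω ≤ 1 := fun t ω =>
    div_le_one_of_le₀ (le_of_abs_le (hXabs t ω)) (Nat.cast_nonneg t)
  have hy0 : ∀ t ω, 0 ≤ y t ω := fun t ω => le_max_left _ _
  have hy1 : ∀ t ω, y t ω ≤ 1 := fun t ω => max_le zero_le_one (by linarith [hxle t ω, hρ.1])
  have hxm : ∀ t, Measurable[ℱ t] (x t) := fun t => (hadapted t).div_const _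
  have hym : ∀ t, Measurable[ℱ t] (y t) := fun t => measurable_const.max ((hxm t).sub_const ρ)
  have hincr : ∀ t : ℕ, 1 ≤ t → ∀ ω, |x (t + 1) ω - x t ω| ≤ 2 / ((t : ℝ) + 1) := by
    intro t ht ω
    have ht' : (0 : ℝ) < t := by exact_mod_cast ht
    have hs : |(X (t + 1) ω : ℝ) - X t ω| ≤ 1 := by
      have : (X (t + 1) ω : ℝ) - X t ω = -1 ∨ (X (t + 1) ω : ℝ) - X t ω = 1 := by
        exact_mod_cast hstep t ω
      rcases this with e | e <;> rw [e] <;> norm_num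
    have hxa : |x t ω| ≤ 1 := by
      simp only [hx, abs_div, Nat.abs_cast]
      exact div_le_one_of_le₀ (hXabs t ω) ht'.le
    have e : x (t + 1) ω - x t ω = ((X (t + 1) ω - X t ω) - x t ω) / ((t : ℝ) + 1) := by
      simp only [hx]
      push_cast
      field_simp
      ring
    rw [e, abs_div, abs_of_pos (by positivity : (0 : ℝ) < t + 1)]
    gcongr
    exact (abs_sub _ _).trans (by linarith)
  set K : ℝ := 8 * C + 4 with hK
  have hsqdrift : ∀ t : ℕ, 1 ≤ t → ∀ᵐ ω ∂μ, (μ[fun ω' => y (t + 1) ω' ^ 2 | ℱ t]) ω ≤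
      (1 - 1 / (t : ℝ)) * y t ω ^ 2 + K / ((t : ℝ) + 1) ^ 2 := by
    intro t ht
    have ht' : (1 : ℝ) ≤ t := by exact_mod_cast ht
    have ht0 : (0 : ℝ) < t := by linarith
    have hd : ∀ᵐ ω ∂μ, (μ[fun ω' => x (t + 1) ω' - x t ω' | ℱ t]) ω ≤
        h (x t ω) / (t : ℝ) + C / (t : ℝ) ^ 2 := by
      simpa only [hx, Nat.cast_add, Nat.cast_one] using hdrift t ht
    filter_upwards [condExp_posPart_sq_le (ℱ.le t) (hxm t)
      ((hxm (t + 1)).mono (ℱ.le _) le_rfl) (hy1 t) (hy1 (t + 1)) (hincr t ht) hd] with ω hω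
    refine hω.trans ?_
    change y t ω ^ 2 + 2 * y t ω * _ + _ ≤ _
    have hyh : y t ω * h (x t ω) ≤ -y t ω ^ 2 := by
      rcases max_cases 0 (x t ω - ρ) with ⟨e, l⟩ | ⟨e, l⟩
      · have : y t ω = 0 := e
        simp [this]
      · have e' : y t ω = x t ω - ρ := e
        have := drift_le_neg_sub hcont hdiff hderiv hρ hroot (by linarith : ρ < x t ω) (hxle t ω)
        rw [← e'] at this
        nlinarith [hy0 t ω]
    have h1 : 2 * (y t ω * h (x t ω)) / t ≤ 2 * (-y t ω ^ 2) / t := by gcongr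
    have h2 : y t ω * (C / (t : ℝ) ^ 2) ≤ 4 * C / ((t : ℝ) + 1) ^ 2 := by
      have : C / (t : ℝ) ^ 2 ≤ 4 * C / ((t : ℝ) + 1) ^ 2 := by
        rw [div_le_div_iff₀ (by positivity) (by positivity)]
        nlinarith [mul_nonneg hC.le (by nlinarith : (0 : ℝ) ≤ 4 * t ^ 2 - (t + 1) ^ 2)]
      refine le_trans ?_ this
      exact mul_le_of_le_one_left (by positivity) (hy1 t ω)
    have h3 : 0 ≤ y t ω ^ 2 / t := by positivity
    have e1 : y t ω ^ 2 + 2 * y t ω * (h (x t ω) / t + C / (t : ℝ) ^ 2) + (2 / ((t : ℝ) + 1)) ^ 2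
        = y t ω ^ 2 + 2 * (y t ω * h (x t ω)) / t + 2 * (y t ω * (C / (t : ℝ) ^ 2))
          + 4 / ((t : ℝ) + 1) ^ 2 := by
      rw [div_pow]
      ring
    have e2 : (1 - 1 / (t : ℝ)) * y t ω ^ 2 + K / ((t : ℝ) + 1) ^ 2 = y t ω ^ 2 - y t ω ^ 2 / t
        + 2 * (4 * C / ((t : ℝ) + 1) ^ 2) + 4 / ((t : ℝ) + 1) ^ 2 := by
      rw [hK]
      ring
    have e3 : 2 * (-y t ω ^ 2) / t = -2 * (y t ω ^ 2 / t) := by ring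
    rw [e1, e2]
    linarith
  set V : ℕ → Ω → ℝ := fun t ω => (t : ℝ) ^ (2 / 3 : ℝ) * y t ω ^ 2 with hV
  have hVm : ∀ t, Measurable[ℱ t] (V t) := fun t => ((hym t).pow_const 2).const_mul _
  have hV0 : ∀ t ω, 0 ≤ V t ω := fun t ω => by positivity
  have hVint : ∀ t, Integrable (V t) μ := by
    intro t
    refine Integrable.of_bound ((hVm t).mono (ℱ.le t) le_rfl).aestronglyMeasurable
      ((t : ℝ) ^ (2 / 3 : ℝ)) (Eventually.of_forall fun ω => ?_)
    rw [Real.norm_of_nonneg (hV0 t ω)]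
    exact mul_le_of_le_one_right (by positivity) (pow_le_one₀ (hy0 t ω) (hy1 t ω))
  set c : ℕ → ℝ := fun t => K * ((t : ℝ) + 1) ^ (-(4 / 3) : ℝ) with hc
  have hc0 : ∀ t, 0 ≤ c t := fun t => by positivity
  have hcsum : Summable c := by
    have h1 : Summable fun n : ℕ => (n : ℝ) ^ (-(4 / 3) : ℝ) :=
      Real.summable_nat_rpow.2 (by norm_num)
    have h2 := ((summable_nat_add_iff 1).2 h1).mul_left K
    simpa [hc] using h2
  have hVdrift : ∀ t, ∀ᵐ ω ∂μ, (μ[V (t + 1) | ℱ t]) ω ≤ V t ω + c t := by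
    intro t
    rcases Nat.eq_zero_or_pos t with rfl | ht
    · -- `V 0 = 0` and `V 1 ≤ 1 ≤ c 0`, so the trivial bound suffices here
      have hmono := condExp_mono (m := ℱ 0) (hVint 1) (integrable_const (1 : ℝ)) <|
        Eventually.of_forall fun ω => by
          simpa [hV] using pow_le_one₀ (n := 2) (hy0 1 ω) (hy1 1 ω)
      rw [condExp_const (ℱ.le 0)] at hmono
      filter_upwards [hmono] with ω hω
      refine hω.trans ?_
      have : c 0 = K := by simp [hc]
      linarith [hV0 0 ω]
    · have ht0 : (0 : ℝ) < t := by exact_mod_cast ht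
      have ht1 : (1 : ℝ) ≤ t := by exact_mod_cast ht
      have hsmul : μ[V (t + 1) | ℱ t] =ᵐ[μ]
          ((t : ℝ) + 1) ^ (2 / 3 : ℝ) • μ[fun ω' => y (t + 1) ω' ^ 2 | ℱ t] := by
        have e : V (t + 1) = ((t : ℝ) + 1) ^ (2 / 3 : ℝ) • fun ω' => y (t + 1) ω' ^ 2 := by
          ext ω
          simp [hV]
        rw [e]
        exact condExp_smul _ _ _
      filter_upwards [hsmul, hsqdrift t ht] with ω e1 e2
      rw [e1, Pi.smul_apply, smul_eq_mul]
      have hpos : (0 : ℝ) ≤ ((t : ℝ) + 1) ^ (2 / 3 : ℝ) := by positivity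
      refine (mul_le_mul_of_nonneg_left e2 hpos).trans ?_
      rw [mul_add]
      have hinv : 1 / (t : ℝ) ≤ 1 := by rwa [div_le_one ht0]
      refine add_le_add ?_ (le_of_eq ?_)
      · have hp : (0 : ℝ) ≤ (t : ℝ) ^ (2 / 3 : ℝ) := by positivity
        have hinv0 : 0 ≤ 1 / (t : ℝ) := by positivity
        calc ((t : ℝ) + 1) ^ (2 / 3 : ℝ) * ((1 - 1 / (t : ℝ)) * y t ω ^ 2)
            ≤ ((t : ℝ) ^ (2 / 3 : ℝ) * (1 + 1 / t)) * ((1 - 1 / (t : ℝ)) * y t ω ^ 2) :=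
              mul_le_mul_of_nonneg_right (rpow_two_thirds_succ_le ht0)
                (mul_nonneg (by linarith) (sq_nonneg _))
          _ = V t ω * (1 - (1 / (t : ℝ)) ^ 2) := by
              simp only [hV]
              ring
          _ ≤ V t ω := mul_le_of_le_one_right (hV0 t ω) (by linarith [sq_nonneg (1 / (t : ℝ))])
      · have ht2 : (0 : ℝ) < (t : ℝ) + 1 := by linarith
        have : ((t : ℝ) + 1) ^ (-(4 / 3) : ℝ)
            = ((t : ℝ) + 1) ^ (2 / 3 : ℝ) / ((t : ℝ) + 1) ^ 2 := by
          rw [← Real.rpow_natCast _ 2, ← Real.rpow_sub ht2]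
          norm_num
        simp only [hc, this]
        ring
  filter_upwards [ae_exists_tendsto_of_condExp_le_add (fun t => (hVm t).stronglyMeasurable)
    hVint hV0 hc0 hcsum hVdrift] with ω ⟨l, hl⟩
  have hdecay : Tendsto (fun t : ℕ => (t : ℝ) ^ (-(1 / 3 - α))) atTop (nhds 0) :=
    (tendsto_rpow_neg_atTop (by linarith : 0 < 1 / 3 - α)).comp tendsto_natCast_atTop_atTop
  have hprod := hdecay.mul hl.sqrt
  rw [zero_mul] at hprod
  -- for `t > 0`, `t^α y(t) = t^(α - 1/3) √(V t)`
  refine hprod.congr' ?_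
  filter_upwards [eventually_gt_atTop 0] with t ht
  have ht0 : (0 : ℝ) < t := by exact_mod_cast ht
  have hsqrt : √(V t ω) = (t : ℝ) ^ (1 / 3 : ℝ) * y t ω := by
    have : V t ω = ((t : ℝ) ^ (1 / 3 : ℝ) * y t ω) ^ 2 := by
      rw [mul_pow, ← Real.rpow_natCast ((t : ℝ) ^ (1 / 3 : ℝ)) 2, ← Real.rpow_mul ht0.le]
      norm_num [hV]
    rw [this, Real.sqrt_sq (mul_nonneg (by positivity) (hy0 t ω))]
  rw [hsqrt, ← mul_assoc, ← Real.rpow_add ht0]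
  congr 2
  ring
end

section
/- Let (X(t))_{t≥0} be an adapted integer-valued process on a filtered probability space with X(0) = 0 and X(t+1) - X(t) ∈ {0,1} for all t, and set x(t) = X(t)/t. Let h : [0,1] → ℝ be a continuous, strictly decreasing function, differentiable on (0,1), with h(0) > 0, h(1) < 0, and h'(x) < -1 for all x ∈ (0,1); let ρ ∈ (0,1) be the unique root of h. Suppose there is a constant C > 0 such that for every t ≥ 1, almost surely |E[x(t+1) - x(t) | F_t] - h(x(t))/t| ≤ C/t². Then for every α < 1/3, almost surely lim_{t→∞} t^α · (x(t) - ρ) = 0. -/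
open MeasureTheory ProbabilityTheory Filter

/-!
Write `V t = (x t - ρ) ^ 2`. Since `h' < -1` and `h ρ = 0`, the mean value theorem gives
`(x - ρ) * h x ≤ -(x - ρ) ^ 2` on `[0, 1]` (`mul_drift_le`). One step changes `x` by at most
`1 / (t + 1)`, so expanding the square yields `E[V (t + 1) | ℱ t] ≤ (1 - 2 / t) V t + O(t⁻²)`.
The weight `t ^ (2/3)` grows by a factor of at most `1 + 1 / t`, hence
`W t = t ^ (2/3) * V t` satisfies `E[W (t + 1) | ℱ t] ≤ W t + O(t ^ (-4/3))`
(`weighted_drift_le` is the pointwise form of this bound).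

The error is summable, so subtracting its partial sums from `W` gives an `L¹`-bounded
supermartingale, and `W` converges almost surely
(`ae_exists_tendsto_of_condExp_le_add_summable`). Consequently
`(t ^ α * (x t - ρ)) ^ 2 = t ^ (2 * α - 2/3) * W t → 0` whenever `α < 1/3`.
-/

/-- A Robbins–Siegmund type statement: a nonnegative process whose conditional drift is bounded
by a summable deterministic sequence converges almost surely. -/
theorem ae_exists_tendsto_of_condExp_le_add_summable
    {Ω : Type*} {m0 : MeasurableSpace Ω} {μ : Measure Ω} [IsProbabilityMeasure μ]
    (ℱ : Filtration ℕ m0) (W : ℕ → Ω → ℝ) (a : ℕ → ℝ)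
    (hW : StronglyAdapted ℱ W) (hint : ∀ t, Integrable (W t) μ)
    (hpos : ∀ t ω, 0 ≤ W t ω) (ha : ∀ t, 0 ≤ a t) (hsum : Summable a)
    (hdrift : ∀ t, ∀ᵐ ω ∂μ, (μ[W (t + 1) | ℱ t]) ω ≤ W t ω + a t) :
    ∀ᵐ ω ∂μ, ∃ c, Tendsto (fun t => W t ω) atTop (nhds c) := by
  set A : ℕ → ℝ := fun t => ∑ s ∈ Finset.range t, a s with hA
  set S : ℝ := ∑' s, a s with hS
  have hA0 : ∀ t, 0 ≤ A t := fun t => Finset.sum_nonneg fun s _ => ha s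
  have hAS : ∀ t, A t ≤ S := fun t => hsum.sum_le_tsum _ fun s _ => ha s
  set Z : ℕ → Ω → ℝ := fun t => W t - fun _ => A t with hZ
  have hZint : ∀ t, Integrable (Z t) μ := fun t => (hint t).sub (integrable_const _)
  have hsuper : Supermartingale Z ℱ μ := by
    refine supermartingale_nat (fun t => (hW t).sub stronglyMeasurable_const) hZint fun t => ?_
    filter_upwards [hdrift t, condExp_sub (hint (t + 1)) (integrable_const (A (t + 1))) (ℱ t)]
      with ω h1 h2
    have h3 : A (t + 1) = A t + a t := Finset.sum_range_succ _ _
    rw [condExp_const (ℱ.le t)] at h2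
    simp only [hZ, Pi.sub_apply] at h2 ⊢
    linarith
  have hZle : ∀ t, ∫ ω, Z t ω ∂μ ≤ ∫ ω, Z 0 ω ∂μ := fun t => by
    simpa using hsuper.setIntegral_le (Nat.zero_le t) (MeasurableSet.univ)
  have hnorm : ∀ t, eLpNorm ((-Z) t) 1 μ ≤ (Real.toNNReal (∫ ω, Z 0 ω ∂μ + 2 * S) : ENNReal) := by
    intro t
    have hb : ∫ ω, ‖Z t ω‖ ∂μ ≤ ∫ ω, Z 0 ω ∂μ + 2 * S := by
      calc ∫ ω, ‖Z t ω‖ ∂μ ≤ ∫ ω, (Z t ω + 2 * S) ∂μ := by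
            refine integral_mono (hZint t).norm ((hZint t).add (integrable_const _)) fun ω => ?_
            have := hpos t ω
            have := hA0 t
            have := hAS t
            simp only [hZ, Pi.sub_apply, Real.norm_eq_abs]
            rw [abs_le]
            constructor <;> linarith
        _ = ∫ ω, Z t ω ∂μ + 2 * S := by
            rw [integral_add (hZint t) (integrable_const _)]; simp
        _ ≤ _ := by linarith [hZle t]
    rw [Pi.neg_apply, eLpNorm_neg, eLpNorm_one_eq_lintegral_enorm,
      ← ofReal_integral_norm_eq_lintegral_enorm (hZint t)]
    exact ENNReal.ofReal_le_ofReal hb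
  filter_upwards [hsuper.neg.exists_ae_tendsto_of_bdd hnorm] with ω ⟨c, hc⟩
  refine ⟨-c + S, ?_⟩
  have := hc.neg.add hsum.hasSum.tendsto_sum_nat
  refine this.congr fun t => ?_
  simp [hZ, hA]

theorem mul_drift_le {h : ℝ → ℝ}
    (hcont : ContinuousOn h (Set.Icc 0 1))
    (hdiff : ∀ x ∈ Set.Ioo (0 : ℝ) 1, DifferentiableAt ℝ h x)
    (hderiv : ∀ x ∈ Set.Ioo (0 : ℝ) 1, deriv h x < -1)
    {ρ : ℝ} (hρ : ρ ∈ Set.Ioo (0 : ℝ) 1) (hroot : h ρ = 0)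
    {x : ℝ} (hx : x ∈ Set.Icc (0 : ℝ) 1) :
    (x - ρ) * h x ≤ -(x - ρ) ^ 2 := by
  have hanti : AntitoneOn (fun x => h x + x) (Set.Icc 0 1) := by
    refine antitoneOn_of_deriv_nonpos (convex_Icc 0 1) (hcont.add continuousOn_id) ?_ ?_
    · rw [interior_Icc]
      exact fun y hy => ((hdiff y hy).add differentiableAt_id).differentiableWithinAt
    · rw [interior_Icc]
      intro y hy
      have hd : HasDerivAt (fun x => h x + x) (deriv h y + 1) y :=
        (hdiff y hy).hasDerivAt.add (hasDerivAt_id y)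
      rw [hd.deriv]
      linarith [hderiv y hy]
  have hρ' : ρ ∈ Set.Icc (0 : ℝ) 1 := Set.Ioo_subset_Icc_self hρ
  rcases le_total x ρ with hle | hle
  · have := hanti hx hρ' hle
    simp only [hroot] at this
    nlinarith
  · have := hanti hρ' hx hle
    simp only [hroot] at this
    nlinarith

theorem rpow_succ_mul_le {t : ℝ} (ht : 0 < t) :
    (t + 1) ^ (2 / 3 : ℝ) * t ≤ t ^ (2 / 3 : ℝ) * (t + 1) := by
  have h1 : t = t ^ (2 / 3 : ℝ) * t ^ (1 / 3 : ℝ) := by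
    rw [← Real.rpow_add ht]; norm_num
  have h2 : t + 1 = (t + 1) ^ (2 / 3 : ℝ) * (t + 1) ^ (1 / 3 : ℝ) := by
    rw [← Real.rpow_add (by linarith)]; norm_num
  have h3 : t ^ (1 / 3 : ℝ) ≤ (t + 1) ^ (1 / 3 : ℝ) :=
    Real.rpow_le_rpow ht.le (by linarith) (by norm_num)
  calc (t + 1) ^ (2 / 3 : ℝ) * t
      = (t + 1) ^ (2 / 3 : ℝ) * (t ^ (2 / 3 : ℝ) * t ^ (1 / 3 : ℝ)) := by rw [← h1]
    _ ≤ (t + 1) ^ (2 / 3 : ℝ) * (t ^ (2 / 3 : ℝ) * (t + 1) ^ (1 / 3 : ℝ)) := by gcongr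
    _ = t ^ (2 / 3 : ℝ) * ((t + 1) ^ (2 / 3 : ℝ) * (t + 1) ^ (1 / 3 : ℝ)) := by ring
    _ = t ^ (2 / 3 : ℝ) * (t + 1) := by rw [← h2]

/-- The deterministic inequality behind the drift of `t ^ (2/3) * (x t - ρ) ^ 2`: here `y` is the
deviation `x t - ρ`, `D` its conditional drift and `H` the value of `h` at `x t`. -/
theorem weighted_drift_le {t y D H C : ℝ} (ht : 1 ≤ t) (hC : 0 < C) (hy : |y| ≤ 1)
    (hH : y * H ≤ -y ^ 2) (hD : |D - H / t| ≤ C / t ^ 2) :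
    (t + 1) ^ (2 / 3 : ℝ) * (y ^ 2 + 2 * y * D + 1 / (t + 1) ^ 2) ≤
      t ^ (2 / 3 : ℝ) * y ^ 2 + (8 * C + 1) * ((t + 1) ^ (2 / 3 : ℝ) / (t + 1) ^ 2) := by
  have ht0 : 0 < t := by linarith
  have hw' : 0 < (t + 1) ^ (2 / 3 : ℝ) := Real.rpow_pos_of_pos (by linarith) _
  have hw : 0 < t ^ (2 / 3 : ℝ) := Real.rpow_pos_of_pos ht0 _
  have hww := rpow_succ_mul_le ht0
  set w' := (t + 1) ^ (2 / 3 : ℝ)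
  set w := t ^ (2 / 3 : ℝ)
  have hyD : y * D ≤ -y ^ 2 / t + C / t ^ 2 := by
    have h1 : y * (D - H / t) ≤ C / t ^ 2 :=
      calc y * (D - H / t) ≤ |y * (D - H / t)| := le_abs_self _
        _ = |y| * |D - H / t| := abs_mul _ _
        _ ≤ 1 * (C / t ^ 2) := by gcongr
        _ = C / t ^ 2 := one_mul _
    have h2 : y * H / t ≤ -y ^ 2 / t := by gcongr
    have h3 : y * (D - H / t) = y * D - y * H / t := by ring
    linarith
  have hCt : C / t ^ 2 ≤ 4 * C / (t + 1) ^ 2 := by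
    rw [div_le_div_iff₀ (by positivity) (by positivity)]
    have : (t + 1) ^ 2 ≤ 4 * t ^ 2 := by nlinarith
    nlinarith
  have hcontract : w' * (1 - 2 / t) ≤ w := by
    rcases le_total t 2 with h2 | h2
    · have : 1 - 2 / t ≤ 0 := by
        rw [sub_nonpos, le_div_iff₀ ht0]; linarith
      nlinarith
    · have h3 : w' * (1 - 2 / t) = (w' * t) * (t - 2) / t ^ 2 := by field_simp
      rw [h3, div_le_iff₀ (by positivity)]
      nlinarith [mul_le_mul_of_nonneg_right hww (sub_nonneg.2 h2)]
  have hkey : y ^ 2 + 2 * y * D + 1 / (t + 1) ^ 2 ≤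
      (1 - 2 / t) * y ^ 2 + (8 * C + 1) / (t + 1) ^ 2 := by
    have e1 : (1 - 2 / t) * y ^ 2 = y ^ 2 + 2 * (-y ^ 2 / t) := by ring
    have e2 : (8 * C + 1) / (t + 1) ^ 2 = 2 * (4 * C / (t + 1) ^ 2) + 1 / (t + 1) ^ 2 := by ring
    rw [e1, e2]; linarith
  calc w' * (y ^ 2 + 2 * y * D + 1 / (t + 1) ^ 2)
      ≤ w' * ((1 - 2 / t) * y ^ 2 + (8 * C + 1) / (t + 1) ^ 2) := by gcongr
    _ = w' * (1 - 2 / t) * y ^ 2 + (8 * C + 1) * (w' / (t + 1) ^ 2) := by ring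
    _ ≤ w * y ^ 2 + (8 * C + 1) * (w' / (t + 1) ^ 2) := by gcongr

theorem summable_weighted_error :
    Summable fun t : ℕ => ((t : ℝ) + 1) ^ (2 / 3 : ℝ) / ((t : ℝ) + 1) ^ 2 := by
  have h1 : Summable fun n : ℕ => (n : ℝ) ^ (-(4 / 3) : ℝ) :=
    Real.summable_nat_rpow.2 (by norm_num)
  refine ((summable_nat_add_iff 1).2 h1).congr fun t => ?_
  have ht : (0 : ℝ) < (t : ℝ) + 1 := by positivity
  push_cast
  rw [← Real.rpow_natCast ((t : ℝ) + 1) 2, ← Real.rpow_sub ht]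
  norm_num

theorem tendsto_of_tendsto_weighted_sq {y : ℕ → ℝ} {c α : ℝ} (hα : α < 1 / 3)
    (hc : Tendsto (fun t : ℕ => (t : ℝ) ^ (2 / 3 : ℝ) * y t ^ 2) atTop (nhds c)) :
    Tendsto (fun t : ℕ => (t : ℝ) ^ α * y t) atTop (nhds 0) := by
  have h1 : Tendsto (fun t : ℕ => (t : ℝ) ^ (-(2 / 3 - 2 * α))) atTop (nhds 0) :=
    (tendsto_rpow_neg_atTop (by linarith)).comp tendsto_natCast_atTop_atTop
  have h2 := h1.mul hc
  rw [zero_mul] at h2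
  have h3 : Tendsto (fun t : ℕ => ((t : ℝ) ^ α * y t) ^ 2) atTop (nhds 0) := by
    refine h2.congr' ?_
    filter_upwards [eventually_gt_atTop 0] with t ht
    have ht' : (0 : ℝ) < t := by exact_mod_cast ht
    rw [← mul_assoc, ← Real.rpow_add ht', mul_pow, ← Real.rpow_natCast ((t : ℝ) ^ α) 2,
      ← Real.rpow_mul ht'.le]
    congr 2
    push_cast
    ring
  have h4 := h3.sqrt
  simp only [Real.sqrt_sq_eq_abs, Real.sqrt_zero] at h4
  exact (tendsto_zero_iff_abs_tendsto_zero _).2 h4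

/-- two-sided drift lemma: if `X(0)=0`, `X(t+1)-X(t) ∈ {0,1}`, `x(t)=X(t)/t`
satisfies `|E[x(t+1)-x(t) | F_t] - h(x(t))/t| ≤ C/t²` for a strictly decreasing drift `h` with
`h(0)>0`, `h(1)<0` and `h' < -1` on `(0,1)`, and `ρ ∈ (0,1)` is the root of `h`, then for any
`α < 1/3`, a.s. `t^α · (x(t)-ρ) → 0`. -/
theorem drift_lemma_two_sided
    {Ω : Type*} {m0 : MeasurableSpace Ω} {μ : Measure Ω} [IsProbabilityMeasure μ]
    (ℱ : Filtration ℕ m0)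
    (X : ℕ → Ω → ℤ)
    (hadapted : Adapted ℱ fun t ω => (X t ω : ℝ))
    (hinit : ∀ ω, X 0 ω = 0)
    (hstep : ∀ t, ∀ ω, X (t + 1) ω - X t ω = 0 ∨ X (t + 1) ω - X t ω = 1)
    (h : ℝ → ℝ)
    (hcont : ContinuousOn h (Set.Icc 0 1))
    (hanti : StrictAntiOn h (Set.Icc 0 1))
    (hdiff : ∀ x ∈ Set.Ioo (0 : ℝ) 1, DifferentiableAt ℝ h x)
    (h0 : 0 < h 0) (h1 : h 1 < 0)
    (hderiv : ∀ x ∈ Set.Ioo (0 : ℝ) 1, deriv h x < -1)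
    (ρ : ℝ) (hρ : ρ ∈ Set.Ioo (0 : ℝ) 1) (hroot : h ρ = 0)
    (C : ℝ) (hC : 0 < C)
    (hdrift : ∀ t : ℕ, 1 ≤ t →
      ∀ᵐ ω ∂μ,
        abs ((μ[fun ω' => (X (t + 1) ω' : ℝ) / ((t : ℝ) + 1) - (X t ω' : ℝ) / (t : ℝ) | ℱ t]) ω
              - h ((X t ω : ℝ) / (t : ℝ)) / (t : ℝ))
          ≤ C / (t : ℝ) ^ 2) :
    ∀ α : ℝ, α < 1 / 3 →
      ∀ᵐ ω ∂μ,
        Tendsto (fun t : ℕ => (t : ℝ) ^ α * ((X t ω : ℝ) / (t : ℝ) - ρ))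
          atTop (nhds 0) := by
  intro α hα
  have hX : ∀ t ω, 0 ≤ X t ω ∧ X t ω ≤ t := by
    intro t ω
    induction t with
    | zero => simp [hinit]
    | succ t ih => push_cast; rcases hstep t ω with h | h <;> omega
  set x : ℕ → Ω → ℝ := fun t ω => (X t ω : ℝ) / (t : ℝ) with hx
  -- At `t = 0` the junk value `x 0 = 0 / 0 = 0` also lies in `[0, 1]`.
  have hx01 : ∀ t ω, x t ω ∈ Set.Icc (0 : ℝ) 1 := fun t ω =>
    ⟨div_nonneg (by exact_mod_cast (hX t ω).1) (by positivity),
      div_le_one_of_le₀ (by exact_mod_cast (hX t ω).2) (by positivity)⟩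
  have hy : ∀ t ω, |x t ω - ρ| ≤ 1 := fun t ω => by
    have := hx01 t ω
    rw [abs_le]
    constructor <;> linarith [this.1, this.2, hρ.1, hρ.2]
  have hxm : ∀ t, StronglyMeasurable[ℱ t] (x t) := fun t =>
    ((hadapted t).div_const _).stronglyMeasurable
  have hΔ : ∀ t, 1 ≤ t → ∀ ω, |x (t + 1) ω - x t ω| ≤ 1 / ((t : ℝ) + 1) := by
    intro t ht ω
    have ht0 : (0 : ℝ) < t := by exact_mod_cast ht
    have hx1 := hx01 t ω
    have hXx : (X t ω : ℝ) = x t ω * t := by simp only [hx]; field_simp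
    have hsub : x (t + 1) ω - x t ω
        = (((X (t + 1) ω - X t ω : ℤ) : ℝ) - x t ω) / ((t : ℝ) + 1) := by
      have : x (t + 1) ω = (X (t + 1) ω : ℝ) / ((t : ℝ) + 1) := by simp only [hx]; push_cast; rfl
      rw [this]
      push_cast
      rw [hXx]
      field_simp
      ring
    rw [hsub, abs_div, abs_of_pos (by positivity : (0 : ℝ) < (t : ℝ) + 1)]
    gcongr
    rcases hstep t ω with h | h <;> rw [h, abs_le] <;> push_cast <;> constructor <;>
      linarith [hx1.1, hx1.2]
  set W : ℕ → Ω → ℝ := fun t ω => (t : ℝ) ^ (2 / 3 : ℝ) * (x t ω - ρ) ^ 2 with hW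
  set a : ℕ → ℝ := fun t => (8 * C + 1) * (((t : ℝ) + 1) ^ (2 / 3 : ℝ) / ((t : ℝ) + 1) ^ 2) with ha
  have hym : ∀ t, StronglyMeasurable[ℱ t] (fun ω => x t ω - ρ) := fun t =>
    (hxm t).sub stronglyMeasurable_const
  have hWm : StronglyAdapted ℱ W := fun t => ((hym t).pow 2).const_mul _
  have hyint : ∀ t, Integrable (fun ω => x t ω - ρ) μ := fun t =>
    Integrable.of_bound ((hym t).mono (ℱ.le t)).aestronglyMeasurable 1 (ae_of_all _ (hy t))
  have hWle : ∀ t ω, W t ω ≤ (t : ℝ) ^ (2 / 3 : ℝ) := fun t ω =>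
    mul_le_of_le_one_right (by positivity) ((sq_le_one_iff_abs_le_one _).2 (hy t ω))
  have hW0 : ∀ t ω, 0 ≤ W t ω := fun t ω => by positivity
  have hWint : ∀ t, Integrable (W t) μ := fun t =>
    Integrable.of_bound ((hWm t).mono (ℱ.le t)).aestronglyMeasurable ((t : ℝ) ^ (2 / 3 : ℝ))
      (ae_of_all _ fun ω => by rw [Real.norm_of_nonneg (hW0 t ω)]; exact hWle t ω)
  have hWdrift : ∀ t, ∀ᵐ ω ∂μ, (μ[W (t + 1) | ℱ t]) ω ≤ W t ω + a t := by
    intro t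
    rcases Nat.eq_zero_or_pos t with rfl | ht
    -- The drift hypothesis starts at `t = 1`; at `t = 0` the error `a 0 ≥ 1` absorbs `W 1 ≤ 1`.
    · have hle : W (0 + 1) ≤ᵐ[μ] fun _ => (1 : ℝ) :=
        ae_of_all _ fun ω => (hWle (0 + 1) ω).trans (by simp)
      filter_upwards [condExp_mono (m := ℱ 0) (hWint (0 + 1)) (integrable_const (1 : ℝ)) hle]
        with ω h2
      rw [condExp_const (ℱ.le 0)] at h2
      have : 1 ≤ a 0 := by simp [ha]; linarith
      linarith [hW0 0 ω]
    have ht1 : (1 : ℝ) ≤ t := by exact_mod_cast ht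
    set Δ : Ω → ℝ := fun ω => (X (t + 1) ω : ℝ) / ((t : ℝ) + 1) - (X t ω : ℝ) / (t : ℝ) with hΔdef
    have hΔx : ∀ ω, Δ ω = x (t + 1) ω - x t ω := fun ω => by simp [hΔdef, hx]
    set w : ℝ := ((t : ℝ) + 1) ^ (2 / 3 : ℝ) with hw
    -- `W (t + 1)` is dominated by `f * Δ + g`, with `f` and `g` measurable at time `t`.
    set f : Ω → ℝ := fun ω => 2 * w * (x t ω - ρ) with hf
    set g : Ω → ℝ := fun ω => w * ((x t ω - ρ) ^ 2 + 1 / ((t : ℝ) + 1) ^ 2) with hg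
    have hfm : StronglyMeasurable[ℱ t] f := (hym t).const_mul _
    have hgm : StronglyMeasurable[ℱ t] g :=
      (((hym t).pow 2).add stronglyMeasurable_const).const_mul _
    have hΔint : Integrable Δ μ := by
      refine ((hyint (t + 1)).sub (hyint t)).congr (ae_of_all _ fun ω => ?_)
      simp [hΔx]
    have hfΔ : Integrable (f * Δ) μ := by
      refine hΔint.bdd_mul (c := |2 * w|) (hfm.mono (ℱ.le t)).aestronglyMeasurable
        (ae_of_all _ fun ω => ?_)
      rw [Real.norm_eq_abs, hf, abs_mul]
      exact mul_le_of_le_one_right (abs_nonneg _) (hy t ω)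
    have hgint : Integrable g μ := by
      refine Integrable.of_bound (hgm.mono (ℱ.le t)).aestronglyMeasurable
        (w * (1 + 1 / ((t : ℝ) + 1) ^ 2)) (ae_of_all _ fun ω => ?_)
      have hw0 : 0 ≤ w := by positivity
      rw [Real.norm_of_nonneg (by positivity)]
      have := (sq_le_one_iff_abs_le_one _).2 (hy t ω)
      simp only [hg]
      gcongr
    have hdom : W (t + 1) ≤ᵐ[μ] f * Δ + g := by
      refine ae_of_all _ fun ω => ?_
      have hsq : (x (t + 1) ω - x t ω) ^ 2 ≤ 1 / ((t : ℝ) + 1) ^ 2 := by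
        have := pow_le_pow_left₀ (abs_nonneg _) (hΔ t ht ω) 2
        rwa [sq_abs, div_pow, one_pow] at this
      have hw0 : 0 ≤ w := by positivity
      have hWt : W (t + 1) ω = w * (x (t + 1) ω - ρ) ^ 2 := by simp [hW, hw]
      simp only [Pi.add_apply, Pi.mul_apply, hWt, hΔx, hf, hg]
      nlinarith [mul_le_mul_of_nonneg_left hsq hw0]
    filter_upwards [condExp_mono (m := ℱ t) (hWint (t + 1)) (hfΔ.add hgint) hdom,
      condExp_add hfΔ hgint (ℱ t), condExp_mul_of_stronglyMeasurable_left hfm hfΔ hΔint,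
      hdrift t ht] with ω e1 e2 e3 e4
    rw [condExp_of_stronglyMeasurable (ℱ.le t) hgm hgint] at e2
    simp only [Pi.add_apply, Pi.mul_apply] at e2 e3
    have hmain := weighted_drift_le ht1 hC (hy t ω)
      (mul_drift_le hcont hdiff hderiv hρ hroot (hx01 t ω)) e4
    have hfg : f ω * (μ[Δ | ℱ t]) ω + g ω = w * ((x t ω - ρ) ^ 2
        + 2 * (x t ω - ρ) * (μ[Δ | ℱ t]) ω + 1 / ((t : ℝ) + 1) ^ 2) := by
      simp only [hf, hg]; ring
    calc (μ[W (t + 1) | ℱ t]) ω ≤ f ω * (μ[Δ | ℱ t]) ω + g ω := by rw [← e3, ← e2]; exact e1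
      _ ≤ W t ω + a t := by rw [hfg]; exact hmain
  filter_upwards [ae_exists_tendsto_of_condExp_le_add_summable ℱ W a hWm hWint hW0
    (fun t => by positivity) (summable_weighted_error.mul_left _) hWdrift] with ω ⟨c, hc⟩
  exact tendsto_of_tendsto_weighted_sq hα hc
end

section
/- For each integer m ≥ 1, let ρ_m be the unique root in (0,1) of 2·(1 - z/2)^m - z - 1 = 0, and set r_m = 1 - ρ_m. Then r_m = 1 - (2 log 2)/m + O(m^{-2}); that is, there exist a constant K > 0 and an integer m₀ such that for all m ≥ m₀, |r_m - (1 - (2 log 2)/m)| ≤ K/m². -/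
/-!
Taking logarithms, the root equation reads `log 2 = log (1 + ρ) - m * log (1 - ρ / 2)`.
The bounds `0 ≤ log (1 + ρ) ≤ ρ` and `ρ / 2 ≤ -log (1 - ρ / 2) ≤ ρ / 2 + ρ ^ 2 / 2` turn this into
`m * ρ / 2 ≤ log 2 ≤ m * ρ / 2 + ρ + m * ρ ^ 2 / 2`. The first inequality gives `ρ ≤ 2 / m`, and
then the second gives `0 ≤ 2 * log 2 / m - ρ ≤ 2 * ρ / m + ρ ^ 2 ≤ 8 / m ^ 2`.
-/

/-- if `ρ_m` is the unique root in `(0,1)` of `2(1 - z/2)^m - z - 1 = 0` and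
`r_m = 1 - ρ_m`, then `r_m = 1 - (2 log 2)/m + O(m⁻²)`. -/
theorem greedy_matching_PAM_asymptotics
    (ρ : ℕ → ℝ)
    (hρ : ∀ m : ℕ, 1 ≤ m →
      ρ m ∈ Set.Ioo (0 : ℝ) 1 ∧ 2 * (1 - ρ m / 2) ^ m - ρ m - 1 = 0) :
    ∃ K : ℝ, 0 < K ∧ ∃ m₀ : ℕ, ∀ m : ℕ, m₀ ≤ m →
      |(1 - ρ m) - (1 - 2 * Real.log 2 / (m : ℝ))| ≤ K / (m : ℝ) ^ 2 := by
  refine ⟨8, by norm_num, 1, fun m hm => ?_⟩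
  obtain ⟨⟨h0, h1⟩, heq⟩ := hρ m hm
  generalize ρ m = z at *
  have hm1 : (1 : ℝ) ≤ m := by exact_mod_cast hm
  have hm0 : (0 : ℝ) < m := by linarith
  have hpos : 0 < 1 - z / 2 := by linarith
  have hlog : Real.log 2 + m * Real.log (1 - z / 2) = Real.log (1 + z) := by
    rw [← Real.log_pow, ← Real.log_mul (by norm_num) (by positivity)]
    congr 1
    linarith
  have hA0 : 0 ≤ Real.log (1 + z) := Real.log_nonneg (by linarith)
  have hA1 : Real.log (1 + z) ≤ z := by
    linarith [Real.log_le_sub_one_of_pos (show 0 < 1 + z by linarith)]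
  have hB0 : Real.log (1 - z / 2) ≤ -(z / 2) := by
    linarith [Real.log_le_sub_one_of_pos hpos]
  have hB1 : -(z / 2 + z ^ 2 / 2) ≤ Real.log (1 - z / 2) := by
    have h := Real.one_sub_inv_le_log_of_pos hpos
    have h2 : (1 - z / 2)⁻¹ ≤ 1 + (z / 2 + z ^ 2 / 2) := by
      rw [inv_le_iff_one_le_mul₀ hpos]
      nlinarith [mul_pos h0 h0, mul_pos (mul_pos h0 h0) (sub_pos.2 h1)]
    linarith
  have hlow : m * z / 2 ≤ Real.log 2 := by nlinarith
  have hup : Real.log 2 ≤ m * z / 2 + z + m * z ^ 2 / 2 := by nlinarith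
  have hl2 : Real.log 2 ≤ 1 := by linarith [Real.log_two_lt_d9]
  have hmz : m * z ≤ 2 := by linarith
  have hmz0 : 0 < m * z := by positivity
  have hrw : (1 - z) - (1 - 2 * Real.log 2 / (m : ℝ)) =
      (2 * Real.log 2 * m - z * m ^ 2) / (m : ℝ) ^ 2 := by
    field_simp
    ring
  rw [hrw, abs_of_nonneg]
  · gcongr
    nlinarith [mul_le_mul_of_nonneg_left hup hm0.le]
  · apply div_nonneg _ (by positivity)
    nlinarith
end

section
/- Let m ≥ 1 be an integer and let ρ_m be the unique root in (0,1) of 2·(1-z)^m - z - 1 = 0. On a probability space with a filtration (F_t)_{t≥1}, let (X(t))_{t≥1} be an adapted integer-valued process with X(1) = 1, X(t+1) - X(t) ∈ {-1,1} for all t ≥ 1, and conditional transition probability P(X(t+1) = X(t)+1 | F_t) = (1 - X(t)/t)^m almost surely for every t ≥ 1. Then for every α < 1/3, almost surely lim_{t→∞} t^α · |X(t)/t - ρ_m| = 0. Equivalently, writing |M(t)| = (t - X(t))/2 for the number of matching edges, almost surely lim_{t→∞} t^α · |2|M(t)|/t - r_m| = 0, where r_m = 1 - ρ_m is the unique root in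 (0,1) of 2(1 - z^m) - z = 0. -/
/-!
Write `Z t = X t / t` and `W t = (Z t - ρ)²`. One step changes `Z` by `(ΔX - Z t) / (t + 1)`, and the
conditional mean of `ΔX - Z t` is `f (Z t)` with `f z = 2 (1 - z)^m - z - 1`. Since `(1 - z)^m` is
decreasing for `z ≤ 1` and `f ρ = 0`, we have `(z - ρ) f z ≤ -(z - ρ)²` (`drift_le`); together with
`|ΔX - Z t| ≤ 2` this gives
`E[W (t+1) | ℱ t] ≤ (1 - 2/(t+1)) W t + 4/(t+1)²`.
After multiplication by `(t+1)^(2/3)` the contraction factor absorbs the growth of the weight, so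
`V t = t^(2/3) W t` satisfies `E[V (t+1) | ℱ t] ≤ V t + 4 (t+1)^(-4/3)` (`condExp_weightedSq_le`).
A nonnegative process whose conditional drift is bounded by a summable sequence converges almost
surely (`ae_tendsto_of_condExp_le_add`, from the martingale convergence theorem). Hence `V t`
converges, and `t^(2α) W t = t^(2α - 2/3) V t → 0` for `α < 1/3`.
-/

open MeasureTheory ProbabilityTheory Filter

/-- A Robbins–Siegmund type theorem: subtracting the partial sums of `a` from `V` yields a
supermartingale, which is bounded in `L¹` because it is bounded below. -/
lemma ae_tendsto_of_condExp_le_add {Ω : Type*} {m0 : MeasurableSpace Ω} {μ : Measure Ω}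
    [IsProbabilityMeasure μ] {ℱ : Filtration ℕ m0} {V : ℕ → Ω → ℝ} {a : ℕ → ℝ}
    (hV : StronglyAdapted ℱ V) (hint : ∀ n, Integrable (V n) μ) (hnn : ∀ n ω, 0 ≤ V n ω)
    (ha : ∀ n, 0 ≤ a n) (hsum : Summable a)
    (hle : ∀ n, μ[V (n + 1) | ℱ n] ≤ᵐ[μ] fun ω => V n ω + a n) :
    ∀ᵐ ω ∂μ, ∃ c, Tendsto (fun n => V n ω) atTop (nhds c) := by
  set S : ℕ → ℝ := fun n => ∑ i ∈ Finset.range n, a i with hS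
  set C : ℝ := ∑' i, a i with hC
  have hSC : ∀ n, S n ≤ C := fun n => hsum.sum_le_tsum _ (fun i _ => ha i)
  have hS0 : ∀ n, 0 ≤ S n := fun n => Finset.sum_nonneg fun i _ => ha i
  have hC0 : 0 ≤ C := tsum_nonneg ha
  let f : ℕ → Ω → ℝ := fun n ω => V n ω - S n
  have hfint : ∀ n, Integrable (f n) μ := fun n => (hint n).sub (integrable_const _)
  have hsuper : Supermartingale f ℱ μ := by
    refine supermartingale_nat (fun n => (hV n).sub stronglyMeasurable_const) hfint ?_
    intro n
    have h1 : μ[f (n + 1) | ℱ n] =ᵐ[μ] μ[V (n + 1) | ℱ n] - μ[fun _ : Ω => S (n + 1) | ℱ n] :=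
      condExp_sub (hint (n + 1)) (integrable_const _) _
    rw [condExp_const (ℱ.le n)] at h1
    filter_upwards [h1, hle n] with ω h1 h2
    have : S (n + 1) = S n + a n := Finset.sum_range_succ _ _
    simp only [Pi.sub_apply] at h1
    rw [h1, this]
    simp only [f]
    linarith
  have hbdd : ∀ n, eLpNorm ((-f) n) 1 μ ≤ ((∫ ω, f 0 ω ∂μ) + 2 * C).toNNReal := by
    intro n
    have h0 : ∫ ω, f n ω ∂μ ≤ ∫ ω, f 0 ω ∂μ := by
      simpa using hsuper.setIntegral_le (Nat.zero_le n) MeasurableSet.univ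
    have h1 : ∫ ω, ‖(-f) n ω‖ ∂μ ≤ ∫ ω, (f n ω + 2 * C) ∂μ := by
      refine integral_mono (hfint n).neg.norm ((hfint n).add (integrable_const _)) fun ω => ?_
      have := hnn n ω
      have := hSC n
      simp only [Pi.neg_apply, norm_neg, Real.norm_eq_abs, f]
      exact abs_le.2 ⟨by linarith, by linarith⟩
    rw [integral_add (hfint n) (integrable_const _)] at h1
    simp only [integral_const, probReal_univ, one_smul] at h1
    have hneg : Integrable ((-f) n) μ := (hfint n).neg
    rw [eLpNorm_one_eq_lintegral_enorm, ← ofReal_integral_norm_eq_lintegral_enorm hneg]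
    exact ENNReal.ofReal_le_ofReal (by linarith)
  have hconv := hsuper.neg.exists_ae_tendsto_of_bdd hbdd
  filter_upwards [hconv] with ω ⟨c, hc⟩
  refine ⟨-c + C, ?_⟩
  have := hc.neg.add hsum.hasSum.tendsto_sum_nat
  refine this.congr fun n => ?_
  simp [f, hS]

/-- The drift `2 (1 - z)^m - z - 1` pulls towards its root `ρ` with slope at least one. -/
lemma drift_le_s12 {m : ℕ} {ρ z : ℝ} (hρ : ρ < 1) (hroot : 2 * (1 - ρ) ^ m - ρ - 1 = 0) (hz : z ≤ 1) :
    (z - ρ) * (2 * (1 - z) ^ m - z - 1) ≤ -(z - ρ) ^ 2 := by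
  have key : (z - ρ) * ((1 - z) ^ m - (1 - ρ) ^ m) ≤ 0 := by
    rcases le_total z ρ with h | h
    · have : (1 - ρ) ^ m ≤ (1 - z) ^ m := pow_le_pow_left₀ (by linarith) (by linarith) m
      exact mul_nonpos_of_nonpos_of_nonneg (by linarith) (by linarith)
    · have : (1 - z) ^ m ≤ (1 - ρ) ^ m := pow_le_pow_left₀ (by linarith) (by linarith) m
      exact mul_nonpos_of_nonneg_of_nonpos (by linarith) (by linarith)
  have h : (1 - ρ) ^ m = (ρ + 1) / 2 := by linarith
  rw [h] at key
  nlinarith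

lemma weight_contraction {t : ℝ} (ht : 1 ≤ t) :
    (t + 1) ^ (2 / 3 : ℝ) * (1 - 2 / (t + 1)) ≤ t ^ (2 / 3 : ℝ) := by
  have ht0 : 0 < t := by linarith
  have h1 : (1 : ℝ) ≤ (t + 1) / t := by rw [le_div_iff₀ ht0]; linarith
  have h2 : (t + 1) ^ (2 / 3 : ℝ) ≤ (t + 1) / t * t ^ (2 / 3 : ℝ) := by
    have h3 : ((t + 1) / t) ^ (2 / 3 : ℝ) ≤ (t + 1) / t :=
      Real.rpow_le_self_of_one_le h1 (by norm_num)
    rw [Real.div_rpow (by linarith) ht0.le] at h3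
    rwa [div_le_iff₀ (Real.rpow_pos_of_pos ht0 _)] at h3
  have h4 : 0 ≤ 1 - 2 / (t + 1) := by
    rw [sub_nonneg, div_le_one (by linarith)]; linarith
  have h5 : (t + 1) / t * (1 - 2 / (t + 1)) ≤ 1 := by
    have : (t + 1) / t * (1 - 2 / (t + 1)) = 1 - 1 / t := by field_simp; ring
    rw [this]
    have : 0 < 1 / t := by positivity
    linarith
  have hp : 0 ≤ t ^ (2 / 3 : ℝ) := Real.rpow_nonneg ht0.le _
  calc _ ≤ (t + 1) / t * t ^ (2 / 3 : ℝ) * (1 - 2 / (t + 1)) := by gcongr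
    _ = ((t + 1) / t * (1 - 2 / (t + 1))) * t ^ (2 / 3 : ℝ) := by ring
    _ ≤ 1 * t ^ (2 / 3 : ℝ) := by gcongr
    _ = _ := one_mul _

lemma abs_chain_le {Ω : Type*} {X : ℕ → Ω → ℤ} (hinit : ∀ ω, X 1 ω = 1)
    (hstep : ∀ t, 1 ≤ t → ∀ ω, X (t + 1) ω - X t ω = -1 ∨ X (t + 1) ω - X t ω = 1)
    (t : ℕ) (ht : 1 ≤ t) (ω : Ω) : |X t ω| ≤ t := by
  induction t, ht using Nat.le_induction with
  | base => simp [hinit]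
  | succ n hn ih =>
    rw [abs_le] at ih ⊢
    push_cast
    rcases hstep n hn ω with h | h <;> constructor <;> linarith [ih.1, ih.2]

/-- The squared deviation of `X t / t` from `ρ`, weighted by `t^(2/3)`. -/
noncomputable def weightedSq {Ω : Type*} (X : ℕ → Ω → ℤ) (ρ : ℝ) (t : ℕ) (ω : Ω) : ℝ :=
  (t : ℝ) ^ (2 / 3 : ℝ) * ((X t ω : ℝ) / (t : ℝ) - ρ) ^ 2

lemma condExp_weightedSq_le
    {Ω : Type*} {m0 : MeasurableSpace Ω} {μ : Measure Ω} [IsProbabilityMeasure μ]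
    {m : ℕ} {ρ : ℝ} (hρ : ρ ∈ Set.Ioo (0 : ℝ) 1) (hρroot : 2 * (1 - ρ) ^ m - ρ - 1 = 0)
    {ℱ : Filtration ℕ m0} {X : ℕ → Ω → ℤ}
    (hadapted : Adapted ℱ fun t ω => (X t ω : ℝ))
    (hstep : ∀ t, 1 ≤ t → ∀ ω, X (t + 1) ω - X t ω = -1 ∨ X (t + 1) ω - X t ω = 1)
    (htrans : ∀ t, 1 ≤ t →
      μ[Set.indicator {ω | X (t + 1) ω = X t ω + 1} (fun _ => (1 : ℝ)) | ℱ t]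
        =ᵐ[μ] fun ω => (1 - (X t ω : ℝ) / (t : ℝ)) ^ m)
    (habs : ∀ t, 1 ≤ t → ∀ ω, |(X t ω : ℝ) / t| ≤ 1)
    (hint : ∀ t, 1 ≤ t → Integrable (weightedSq X ρ t) μ) (t : ℕ) (ht : 1 ≤ t) :
    μ[weightedSq X ρ (t + 1) | ℱ t] ≤ᵐ[μ]
      fun ω => weightedSq X ρ t ω + 4 * ((t : ℝ) + 1) ^ (-(4 / 3) : ℝ) := by
  have ht1 : (1 : ℝ) ≤ t := by exact_mod_cast ht
  have ht0 : (0 : ℝ) < t := by linarith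
  have hs0 : (0 : ℝ) < (t : ℝ) + 1 := by linarith
  set s : ℝ := (t : ℝ) + 1 with hs
  set w : ℝ := s ^ (2 / 3 : ℝ) with hw
  have hw0 : 0 < w := Real.rpow_pos_of_pos hs0 _
  have hwK : s ^ (-(4 / 3) : ℝ) = w / s ^ 2 := by
    rw [hw, ← Real.rpow_natCast s 2, ← Real.rpow_sub hs0]; norm_num
  let I : Ω → ℝ := Set.indicator {ω | X (t + 1) ω = X t ω + 1} (fun _ => (1 : ℝ))
  let Z : Ω → ℝ := fun ω => (X t ω : ℝ) / t
  have hZm : Measurable[ℱ t] Z := (hadapted t).div_const _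
  have hZle : ∀ ω, |Z ω| ≤ 1 := habs t ht
  have hIle : ∀ ω, |I ω| ≤ 1 := fun ω => by
    by_cases h : X (t + 1) ω = X t ω + 1 <;> simp [I, h]
  have hIm : Measurable I := by
    refine measurable_const.indicator ?_
    have h1 : Measurable fun ω => (X (t + 1) ω : ℝ) := (hadapted (t + 1)).mono (ℱ.le _) le_rfl
    have h2 : Measurable fun ω => (X t ω : ℝ) := (hadapted t).mono (ℱ.le _) le_rfl
    have h3 := measurableSet_eq_fun h1 (h2.add_const 1)
    convert h3 using 1
    ext ω
    simp only [Set.mem_ofPred_eq]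
    exact_mod_cast Iff.rfl
  have hIint : Integrable I μ :=
    Integrable.of_bound hIm.aestronglyMeasurable 1 (ae_of_all _ hIle)
  -- The next value of the weighted square is at most `A + B * I`, with `A`, `B` known at time `t`.
  let A : Ω → ℝ := fun ω =>
    w * ((Z ω - ρ) ^ 2 - 2 * (Z ω - ρ) * (1 + Z ω) / s) + 4 * (w / s ^ 2)
  let B : Ω → ℝ := fun ω => w * (4 * (Z ω - ρ) / s)
  have hAm : Measurable[ℱ t] A := by
    refine Measurable.add_const (Measurable.const_mul ?_ w) _
    exact ((hZm.sub_const ρ).pow_const 2).sub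
      ((((hZm.sub_const ρ).const_mul 2).mul (hZm.const_add 1)).div_const s)
  have hBm : Measurable[ℱ t] B :=
    (((hZm.sub_const ρ).const_mul 4).div_const s).const_mul w
  have hdev : ∀ ω, |Z ω - ρ| ≤ 2 := fun ω => by
    have := abs_le.1 (hZle ω)
    exact abs_le.2 ⟨by linarith [hρ.2], by linarith [hρ.1]⟩
  have hAint : Integrable A μ := by
    refine Integrable.of_bound (hAm.mono (ℱ.le _) le_rfl).aestronglyMeasurable
      (w * (2 ^ 2 + 2 * 2 * 2 / s) + 4 * (w / s ^ 2)) (ae_of_all _ fun ω => ?_)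
    have h2 : |1 + Z ω| ≤ 2 := by
      have := abs_le.1 (hZle ω)
      exact abs_le.2 ⟨by linarith, by linarith⟩
    have h1 := hdev ω
    simp only [A, Real.norm_eq_abs]
    refine (abs_add_le _ _).trans ?_
    rw [abs_of_nonneg (by positivity : 0 ≤ 4 * (w / s ^ 2)), abs_mul, abs_of_pos hw0]
    gcongr
    refine (abs_sub _ _).trans ?_
    rw [abs_pow, abs_div, abs_mul, abs_mul, abs_of_pos hs0, abs_two]
    gcongr
  have hBle : ∀ ω, ‖B ω‖ ≤ w * (4 * 2 / s) := fun ω => by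
    have h1 := hdev ω
    simp only [B, Real.norm_eq_abs]
    rw [abs_mul, abs_div, abs_mul, abs_of_pos hs0, abs_of_pos hw0,
      abs_of_pos (by norm_num : (0:ℝ) < 4)]
    gcongr
  have hBIint : Integrable (B * I) μ :=
    hIint.bdd_mul (hBm.mono (ℱ.le _) le_rfl).aestronglyMeasurable (ae_of_all _ hBle)
  have hpt : ∀ ω, weightedSq X ρ (t + 1) ω ≤ (A + B * I) ω := fun ω => by
    have hX : (X (t + 1) ω : ℝ) = X t ω + (2 * I ω - 1) := by
      rcases hstep t ht ω with h | h
      · have h' : X (t + 1) ω = X t ω - 1 := by linarith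
        have : ¬ (X (t + 1) ω = X t ω + 1) := by omega
        have hI : I ω = 0 := Set.indicator_of_notMem (s := {ω | X (t + 1) ω = X t ω + 1}) this _
        rw [hI, h']
        push_cast; ring
      · have h' : X (t + 1) ω = X t ω + 1 := by linarith
        have hI : I ω = 1 := Set.indicator_of_mem (s := {ω | X (t + 1) ω = X t ω + 1}) h' _
        rw [hI, h']
        push_cast; ring
    have hI01 : I ω = 0 ∨ I ω = 1 := by
      by_cases h : X (t + 1) ω = X t ω + 1 <;> simp [I, h]
    have hXZ : (X t ω : ℝ) = t * Z ω := by simp only [Z]; field_simp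
    have hnext : (X (t + 1) ω : ℝ) / ((t + 1 : ℕ) : ℝ) - ρ
        = (Z ω - ρ) + (2 * I ω - 1 - Z ω) / s := by
      rw [hX, hXZ]; push_cast; rw [← hs]
      have : (t : ℝ) = s - 1 := by rw [hs]; ring
      rw [this]; field_simp; ring
    have hsq : (2 * I ω - 1 - Z ω) ^ 2 ≤ 4 := by
      have := abs_le.1 (hZle ω)
      rcases hI01 with h | h <;> rw [h] <;> nlinarith
    have hexp : (A + B * I) ω - weightedSq X ρ (t + 1) ω
        = w * ((4 - (2 * I ω - 1 - Z ω) ^ 2) / s ^ 2) := by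
      simp only [weightedSq, Pi.add_apply, Pi.mul_apply, A, B]
      rw [hnext]; push_cast; rw [← hs, ← hw]; field_simp; ring
    have : 0 ≤ w * ((4 - (2 * I ω - 1 - Z ω) ^ 2) / s ^ 2) :=
      mul_nonneg hw0.le (div_nonneg (by linarith) (by positivity))
    linarith
  have hmono : μ[weightedSq X ρ (t + 1) | ℱ t] ≤ᵐ[μ] μ[A + B * I | ℱ t] :=
    condExp_mono (hint (t + 1) (by omega)) (hAint.add hBIint) (ae_of_all _ hpt)
  have hadd : μ[A + B * I | ℱ t] =ᵐ[μ] μ[A | ℱ t] + μ[B * I | ℱ t] :=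
    condExp_add hAint hBIint _
  have hAc : μ[A | ℱ t] = A := condExp_of_stronglyMeasurable (ℱ.le t) hAm.stronglyMeasurable hAint
  have hBc : μ[B * I | ℱ t] =ᵐ[μ] B * μ[I | ℱ t] :=
    condExp_mul_of_stronglyMeasurable_left hBm.stronglyMeasurable hBIint hIint
  rw [hAc] at hadd
  filter_upwards [hmono, hadd, hBc, htrans t ht] with ω h1 h2 h3 h4
  simp only [Pi.add_apply] at h2
  rw [h3, Pi.mul_apply] at h2
  have h4' : (μ[I | ℱ t]) ω = (1 - Z ω) ^ m := h4
  rw [h4'] at h2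
  refine h1.trans (h2.trans_le ?_)
  have hdr := drift_le_s12 (m := m) hρ.2 hρroot (abs_le.1 (hZle ω)).2
  have hcon := weight_contraction ht1
  have e1 : A ω + B ω * (1 - Z ω) ^ m
      = w * ((Z ω - ρ) ^ 2 + 2 * ((Z ω - ρ) * (2 * (1 - Z ω) ^ m - Z ω - 1)) / s)
        + 4 * (w / s ^ 2) := by
    simp only [A, B]; field_simp; ring
  rw [e1, hwK]
  gcongr
  calc w * ((Z ω - ρ) ^ 2 + 2 * ((Z ω - ρ) * (2 * (1 - Z ω) ^ m - Z ω - 1)) / s)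
      ≤ w * ((Z ω - ρ) ^ 2 + 2 * (-(Z ω - ρ) ^ 2) / s) := by gcongr
    _ = (w * (1 - 2 / s)) * (Z ω - ρ) ^ 2 := by ring
    _ ≤ (t : ℝ) ^ (2 / 3 : ℝ) * (Z ω - ρ) ^ 2 := by gcongr
    _ = weightedSq X ρ t ω := rfl

/-- for the greedy matching chain on the uniform attachment model
(`X(t)` = number of unmatched vertices, `P(X(t+1)=X(t)+1|F_t) = (1-X(t)/t)^m`,
otherwise `X` decreases by one), for every `α < 1/3`, a.s.
`t^α |X(t)/t - ρ_m| → 0`; equivalently, with `|M(t)| = (t - X(t))/2` matching edges,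
a.s. `t^α |2|M(t)|/t - r_m| → 0`, where `r_m = 1 - ρ_m` is the unique root in `(0,1)`
of `2(1 - z^m) - z = 0`. -/
theorem greedy_matching_UAM
    {Ω : Type*} {m0 : MeasurableSpace Ω} {μ : Measure Ω} [IsProbabilityMeasure μ]
    (m : ℕ) (hm : 1 ≤ m)
    (ρ : ℝ) (hρ : ρ ∈ Set.Ioo (0 : ℝ) 1) (hρroot : 2 * (1 - ρ) ^ m - ρ - 1 = 0)
    (ℱ : Filtration ℕ m0)
    (X : ℕ → Ω → ℤ)
    (hadapted : Adapted ℱ fun t ω => (X t ω : ℝ))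
    (hinit : ∀ ω, X 1 ω = 1)
    (hstep : ∀ t, 1 ≤ t → ∀ ω, X (t + 1) ω - X t ω = -1 ∨ X (t + 1) ω - X t ω = 1)
    (htrans : ∀ t, 1 ≤ t →
      μ[Set.indicator {ω | X (t + 1) ω = X t ω + 1} (fun _ => (1 : ℝ)) | ℱ t]
        =ᵐ[μ] fun ω => (1 - (X t ω : ℝ) / (t : ℝ)) ^ m) :
    ((1 - ρ) ∈ Set.Ioo (0 : ℝ) 1 ∧ 2 * (1 - (1 - ρ) ^ m) - (1 - ρ) = 0 ∧
      ∀ z ∈ Set.Ioo (0 : ℝ) 1, 2 * (1 - z ^ m) - z = 0 → z = 1 - ρ) ∧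
    ∀ α : ℝ, α < 1 / 3 →
      ∀ᵐ ω ∂μ,
        Tendsto (fun t : ℕ => (t : ℝ) ^ α * |(X t ω : ℝ) / (t : ℝ) - ρ|)
          atTop (nhds 0) ∧
        Tendsto
          (fun t : ℕ =>
            (t : ℝ) ^ α * |2 * (((t : ℝ) - (X t ω : ℝ)) / 2) / (t : ℝ) - (1 - ρ)|)
          atTop (nhds 0) := by
  obtain ⟨hρ0, hρ1⟩ := hρ
  refine ⟨⟨⟨by linarith, by linarith⟩, by linarith, ?_⟩, ?_⟩
  · intro z hz hroot
    rcases lt_trichotomy z (1 - ρ) with h | h | h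
    · have : z ^ m ≤ (1 - ρ) ^ m := pow_le_pow_left₀ hz.1.le h.le m
      linarith
    · exact h
    · have : (1 - ρ) ^ m ≤ z ^ m := pow_le_pow_left₀ (by linarith) h.le m
      linarith
  intro α hα
  have habs : ∀ t, 1 ≤ t → ∀ ω, |(X t ω : ℝ) / t| ≤ 1 := fun t ht ω => by
    have h : |(X t ω : ℝ)| ≤ t := by exact_mod_cast abs_chain_le hinit hstep t ht ω
    have ht0 : (0 : ℝ) < t := by exact_mod_cast ht
    rw [abs_div, abs_of_pos ht0]
    exact (div_le_one ht0).2 h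
  have hmeas : ∀ t, Measurable[ℱ t] (weightedSq X ρ t) := fun t =>
    ((((hadapted t).div_const _).sub_const ρ).pow_const 2).const_mul _
  have hint : ∀ t, 1 ≤ t → Integrable (weightedSq X ρ t) μ := fun t ht => by
    refine Integrable.of_bound ((hmeas t).mono (ℱ.le t) le_rfl).aestronglyMeasurable
      ((t : ℝ) ^ (2 / 3 : ℝ) * 2 ^ 2) (ae_of_all _ fun ω => ?_)
    have h := abs_le.1 (habs t ht ω)
    have h2 : |(X t ω : ℝ) / t - ρ| ≤ 2 := abs_le.2 ⟨by linarith, by linarith⟩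
    rw [weightedSq, Real.norm_eq_abs, abs_mul, abs_pow,
      abs_of_nonneg (Real.rpow_nonneg (Nat.cast_nonneg t) _)]
    gcongr
  -- The hypotheses only concern times `t ≥ 1`, so the time index is shifted by one.
  let 𝒢 : Filtration ℕ m0 :=
    ⟨fun n => ℱ (n + 1), fun i j hij => ℱ.mono (Nat.succ_le_succ hij), fun n => ℱ.le _⟩
  have hsummable : Summable fun n : ℕ => 4 * (((n + 1 : ℕ) : ℝ) + 1) ^ (-(4 / 3) : ℝ) := by
    have h : Summable fun n : ℕ => (n : ℝ) ^ (-(4 / 3) : ℝ) :=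
      Real.summable_nat_rpow.2 (by norm_num)
    refine (((summable_nat_add_iff 2).2 h).mul_left 4).congr fun n => ?_
    push_cast
    rw [add_assoc, one_add_one_eq_two]
  have hconv := ae_tendsto_of_condExp_le_add (μ := μ) (ℱ := 𝒢)
    (V := fun n => weightedSq X ρ (n + 1)) (fun n => (hmeas (n + 1)).stronglyMeasurable)
    (fun n => hint (n + 1) (by omega))
    (fun n ω => mul_nonneg (Real.rpow_nonneg (Nat.cast_nonneg _) _) (sq_nonneg _))
    (fun n => by positivity) hsummable
    (fun n => condExp_weightedSq_le ⟨hρ0, hρ1⟩ hρroot hadapted hstep htrans habs hint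
      (n + 1) (by omega))
  filter_upwards [hconv] with ω ⟨c, hc⟩
  have hV : Tendsto (fun t => weightedSq X ρ t ω) atTop (nhds c) :=
    (tendsto_add_atTop_iff_nat 1).1 hc
  have hpow : Tendsto (fun t : ℕ => (t : ℝ) ^ (2 * α - 2 / 3)) atTop (nhds 0) := by
    have h := (tendsto_rpow_neg_atTop (y := 2 / 3 - 2 * α) (by linarith)).comp
      tendsto_natCast_atTop_atTop
    refine h.congr fun t => ?_
    simp only [Function.comp_apply, neg_sub]
  have hsqrt := (hpow.mul hV).sqrt
  rw [zero_mul, Real.sqrt_zero] at hsqrt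
  have hmain : Tendsto (fun t : ℕ => (t : ℝ) ^ α * |(X t ω : ℝ) / (t : ℝ) - ρ|)
      atTop (nhds 0) := by
    refine hsqrt.congr' ?_
    filter_upwards [eventually_ge_atTop 1] with t ht
    have ht0 : (0 : ℝ) < t := by exact_mod_cast ht
    have e : (t : ℝ) ^ (2 * α - 2 / 3) * weightedSq X ρ t ω
        = ((t : ℝ) ^ α * |(X t ω : ℝ) / (t : ℝ) - ρ|) ^ 2 := by
      rw [weightedSq, ← mul_assoc, ← Real.rpow_add ht0, mul_pow, sq_abs, ← Real.rpow_natCast (_ ^ α),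
        ← Real.rpow_mul ht0.le]
      congr 2
      push_cast; ring
    rw [e, Real.sqrt_sq (by positivity)]
  refine ⟨hmain, hmain.congr' ?_⟩
  filter_upwards [eventually_ge_atTop 1] with t ht
  have ht0 : (t : ℝ) ≠ 0 := by positivity
  rw [← abs_neg]
  congr 2
  field_simp
  ring
end

section
/- For each integer m ≥ 1, the function z ↦ 2(1 - z^m) - z has a unique root r_m in the interval (0,1), and r_m = 1 - (log 2)/m + O(m^{-2}); that is, there exist a constant K > 0 and an integer m₀ such that for all m ≥ m₀, |r_m - (1 - (log 2)/m)| ≤ K/m². -/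
/-!
Existence of the root is the intermediate value theorem, uniqueness is strict monotonicity.
For the asymptotics put `d = 1 - z` and `L = log 2`. The equation reads `z ^ m = (1 + d) / 2`, i.e.
`m * log z = log (1 + d) - L`. The elementary bounds `1 - 1/z ≤ log z ≤ z - 1` and
`0 ≤ log (1 + d) ≤ d` give `L - 2 d ≤ m d ≤ L`, hence `L/m - 2/m² ≤ d ≤ L/m`.
The error constant is therefore `K = 2`, valid for every `m ≥ 1`.
-/

/-- Explicit error bound for a root, with the constant `2`. -/
lemma root_error_bound (m : ℕ) (hm : 1 ≤ m) (z : ℝ) (h0 : 0 < z) (h1 : z < 1)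
    (hz : 2 * (1 - z ^ m) - z = 0) :
    |z - (1 - Real.log 2 / (m : ℝ))| ≤ 2 / (m : ℝ) ^ 2 := by
  have hmpos : (0 : ℝ) < m := by exact_mod_cast hm
  have hpow : z ^ m = (2 - z) / 2 := by linarith
  have hlog : m * Real.log z = Real.log (2 - z) - Real.log 2 := by
    rw [← Real.log_pow, hpow, Real.log_div (by linarith) two_ne_zero]
  have hup : Real.log z ≤ z - 1 := Real.log_le_sub_one_of_pos h0
  have hlow : 1 - z⁻¹ ≤ Real.log z := Real.one_sub_inv_le_log_of_pos h0
  have hup2 : Real.log (2 - z) ≤ 2 - z - 1 := Real.log_le_sub_one_of_pos (by linarith)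
  have hlow2 : 0 ≤ Real.log (2 - z) := Real.log_nonneg (by linarith)
  have hL : Real.log 2 ≤ 1 := by linarith [Real.log_two_lt_d9]
  have hmd : m * (1 - z) ≤ Real.log 2 := by nlinarith
  have hzlow : z - 1 ≤ z * Real.log z := by
    have := mul_le_mul_of_nonneg_left hlow h0.le
    rwa [mul_sub, mul_inv_cancel₀ h0.ne', mul_one] at this
  have hmd2 : Real.log 2 - 2 * (1 - z) ≤ m * (1 - z) := by
    have h := mul_le_mul_of_nonneg_left hzlow hmpos.le
    have h' : m * (z * Real.log z) = z * (Real.log (2 - z) - Real.log 2) := by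
      rw [← hlog]; ring
    rw [h'] at h
    nlinarith
  have hd : 1 - z ≤ 1 / m := by
    rw [le_div_iff₀ hmpos]; linarith
  have e : z - (1 - Real.log 2 / (m : ℝ)) = (Real.log 2 - m * (1 - z)) / m := by
    field_simp; ring
  have e2 : 2 / (m : ℝ) ^ 2 = (2 * (1 / m)) / m := by field_simp
  rw [e, e2, abs_of_nonneg (div_nonneg (by linarith) hmpos.le)]
  gcongr
  linarith

/-- for each `m ≥ 1` the function `z ↦ 2(1 - z^m) - z` has a unique root `r_m`
in `(0,1)`, and `r_m = 1 - (log 2)/m + O(m⁻²)`. -/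
theorem greedy_matching_UAM_root_asymptotics :
    (∀ m : ℕ, 1 ≤ m → ∃! z : ℝ, z ∈ Set.Ioo (0 : ℝ) 1 ∧ 2 * (1 - z ^ m) - z = 0) ∧
    ∀ r : ℕ → ℝ,
      (∀ m : ℕ, 1 ≤ m → r m ∈ Set.Ioo (0 : ℝ) 1 ∧ 2 * (1 - (r m) ^ m) - r m = 0) →
      ∃ K : ℝ, 0 < K ∧ ∃ m₀ : ℕ, ∀ m : ℕ, m₀ ≤ m →
        |r m - (1 - Real.log 2 / (m : ℝ))| ≤ K / (m : ℝ) ^ 2 := by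
  refine ⟨fun m hm => ?_, fun r hr => ⟨2, two_pos, 1, fun m hm => ?_⟩⟩
  · have hm0 : m ≠ 0 := by omega
    have hc : ContinuousOn (fun z : ℝ => 2 * (1 - z ^ m) - z) (Set.Icc 0 1) := by fun_prop
    have hmem : (0 : ℝ) ∈ Set.Ioo (2 * (1 - (1 : ℝ) ^ m) - 1) (2 * (1 - (0 : ℝ) ^ m) - 0) := by
      simp [hm0]
    obtain ⟨z, hz, hz0⟩ := intermediate_value_Ioo' zero_le_one hc hmem
    refine ⟨z, ⟨hz, hz0⟩, fun y ⟨hy, hy0⟩ => ?_⟩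
    have hz1 : 2 * (1 - z ^ m) - z = 0 := hz0
    rcases lt_trichotomy y z with h | h | h
    · have := pow_lt_pow_left₀ h hy.1.le hm0
      linarith
    · exact h
    · have := pow_lt_pow_left₀ h hz.1.le hm0
      linarith
  · obtain ⟨⟨h0, h1⟩, hz⟩ := hr m hm
    exact root_error_bound m hm (r m) h0 h1 hz
end

section
/- Let m ≥ 1 be an integer and let w_m be the unique root in (0,1) of (1-w)^m - w = 0. On a probability space with a filtration (F_t)_{t≥1}, let (J(t))_{t≥1} be an adapted integer-valued process with J(1) = 1, J(t+1) - J(t) ∈ {0,1} for all t ≥ 1, and conditional transition probability P(J(t+1) = J(t)+1 | F_t) = (1 - J(t)/t)^m almost surely for every t ≥ 1. Then for every α < 1/3, almost surely lim_{t→∞} t^α · |J(t)/t - w_m| = 0. -/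
open MeasureTheory ProbabilityTheory Filter

/-!
Put `Y t = J t - w t`. Since `x ↦ (1 - x) ^ m` is decreasing on `[0, 1]` and fixes `w`, the
conditional drift `(1 - J t / t) ^ m - w` of `Y` has the sign opposite to that of `Y t`, while the
increments of `Y` are at most `1` in absolute value. Hence `E[Y (t + 1) ^ 2] ≤ E[Y t ^ 2] + 1`, and
`E[Y t ^ 2] ≤ t` (`integral_sq_le`).

Along the cubes, `∑ k, E[((k ^ 3) ^ (α - 1) * Y (k ^ 3)) ^ 2] ≤ ∑ k, k ^ (6 α - 3)`, which is finite
precisely when `α < 1 / 3`. So almost surely `(k ^ 3) ^ (α - 1) * Y (k ^ 3) → 0`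
(`ae_tendsto_zero_of_summable`). Between the cubes `k ^ 3` and `(k + 1) ^ 3` the process `Y` moves by
at most `7 k ^ 2`, which is negligible against `k ^ (3 (1 - α))`, again because `α < 1 / 3`
(`tendsto_of_cubes`).
-/

lemma abs_sub_le_of_unit_steps {y : ℕ → ℝ} (hy : ∀ t, 1 ≤ t → |y (t + 1) - y t| ≤ 1)
    {s : ℕ} (hs : 1 ≤ s) (n : ℕ) : |y (s + n) - y s| ≤ n := by
  induction n with
  | zero => simp
  | succ n ih =>
    have h := hy (s + n) (by omega)
    have := abs_sub_le (y (s + n + 1)) (y (s + n)) (y s)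
    rw [← add_assoc]
    push_cast
    linarith

/-- For a sequence with steps bounded by `1`, the decay `y t = o(t ^ (1 - α))` need only be checked
along the cubes: `α < 1 / 3` makes the gaps between consecutive cubes negligible. -/
lemma tendsto_of_cubes {y : ℕ → ℝ} (hy : ∀ t, 1 ≤ t → |y (t + 1) - y t| ≤ 1)
    {α : ℝ} (hα : α < 1 / 3)
    (hc : Tendsto (fun k : ℕ => ((k : ℝ) ^ 3) ^ (α - 1) * |y (k ^ 3)|) atTop (nhds 0)) :
    Tendsto (fun t : ℕ => (t : ℝ) ^ (α - 1) * |y t|) atTop (nhds 0) := by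
  have hb : Tendsto (fun k : ℕ => 7 * (k : ℝ) ^ (-(1 - 3 * α))) atTop (nhds 0) := by
    have := (tendsto_rpow_neg_atTop (y := 1 - 3 * α) (by linarith)).comp
      tendsto_natCast_atTop_atTop
    simpa using this.const_mul 7
  have hk : Tendsto (fun t : ℕ => ⌊(t : ℝ) ^ (1 / 3 : ℝ)⌋₊) atTop atTop :=
    tendsto_nat_floor_atTop.comp
      ((tendsto_rpow_atTop (by norm_num)).comp tendsto_natCast_atTop_atTop)
  have hlim := (hc.add hb).comp hk
  rw [add_zero] at hlim
  refine squeeze_zero' (Eventually.of_forall fun t => by positivity) ?_ hlim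
  filter_upwards [eventually_ge_atTop 1] with t ht
  simp only [Function.comp]
  set k := ⌊(t : ℝ) ^ (1 / 3 : ℝ)⌋₊ with hkdef
  have ht0 : (0 : ℝ) ≤ t := by positivity
  have hcube : ((t : ℝ) ^ (1 / 3 : ℝ)) ^ 3 = t := by
    rw [← Real.rpow_natCast, ← Real.rpow_mul ht0]; norm_num
  have hroot : (0 : ℝ) ≤ (t : ℝ) ^ (1 / 3 : ℝ) := by positivity
  have hk1 : 1 ≤ k := by
    rw [hkdef, Nat.one_le_floor_iff]
    exact Real.one_le_rpow (by exact_mod_cast ht) (by norm_num)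
  have hle : (k : ℝ) ^ 3 ≤ t := by
    rw [← hcube]
    exact pow_le_pow_left₀ (by positivity) (Nat.floor_le hroot) 3
  have hlt : (t : ℝ) < (k + 1) ^ 3 := by
    have h := pow_lt_pow_left₀ (Nat.lt_floor_add_one ((t : ℝ) ^ (1 / 3 : ℝ))) hroot
      (n := 3) (by norm_num)
    rwa [hcube] at h
  have hleN : k ^ 3 ≤ t := by exact_mod_cast hle
  have hkR : (1 : ℝ) ≤ k := by exact_mod_cast hk1
  clear_value k
  obtain ⟨n, rfl⟩ := Nat.exists_eq_add_of_le hleN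
  have hn : (n : ℝ) ≤ 7 * (k : ℝ) ^ 2 := by
    push_cast at hlt
    nlinarith
  have hosc : |y (k ^ 3 + n)| ≤ |y (k ^ 3)| + 7 * (k : ℝ) ^ 2 := by
    have h1 := abs_sub_le_of_unit_steps hy (Nat.one_le_pow 3 k hk1) n
    have h2 := abs_sub_abs_le_abs_sub (y (k ^ 3 + n)) (y (k ^ 3))
    linarith
  have hpow : ((k ^ 3 + n : ℕ) : ℝ) ^ (α - 1) ≤ ((k : ℝ) ^ 3) ^ (α - 1) :=
    Real.rpow_le_rpow_of_nonpos (by positivity) hle (by linarith)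
  have hexp : ((k : ℝ) ^ 3) ^ (α - 1) * (k : ℝ) ^ 2 = (k : ℝ) ^ (-(1 - 3 * α)) := by
    rw [← Real.rpow_natCast, ← Real.rpow_natCast, ← Real.rpow_mul (by positivity),
      ← Real.rpow_add (by positivity)]
    congr 1
    push_cast
    ring
  calc ((k ^ 3 + n : ℕ) : ℝ) ^ (α - 1) * |y (k ^ 3 + n)|
      ≤ ((k : ℝ) ^ 3) ^ (α - 1) * (|y (k ^ 3)| + 7 * (k : ℝ) ^ 2) := by gcongr
    _ = _ := by rw [← hexp]; ring

/-- Nonnegative random variables with summable expectations tend to zero almost surely, because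
their sum has finite expectation. -/
lemma ae_tendsto_zero_of_summable {Ω : Type*} {m0 : MeasurableSpace Ω} {μ : Measure Ω}
    {g : ℕ → Ω → ℝ} (hg0 : ∀ k ω, 0 ≤ g k ω) (hgi : ∀ k, Integrable (g k) μ)
    {b : ℕ → ℝ} (hgb : ∀ k, ∫ ω, g k ω ∂μ ≤ b k) (hb : Summable b) :
    ∀ᵐ ω ∂μ, Tendsto (fun k => g k ω) atTop (nhds 0) := by
  have hs : Summable fun k => ∫ ω, g k ω ∂μ :=
    Summable.of_nonneg_of_le (fun k => integral_nonneg (hg0 k)) hgb hb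
  have hsum : ∫⁻ ω, ∑' k, ENNReal.ofReal (g k ω) ∂μ ≠ ⊤ := by
    rw [lintegral_tsum fun k => (hgi k).aestronglyMeasurable.aemeasurable.ennreal_ofReal]
    simp_rw [← ofReal_integral_eq_lintegral_ofReal (hgi _) (ae_of_all _ (hg0 _))]
    exact hs.tsum_ofReal_ne_top
  have hm : AEMeasurable (fun ω => ∑' k, ENNReal.ofReal (g k ω)) μ :=
    AEMeasurable.tsum fun k => (hgi k).aestronglyMeasurable.aemeasurable.ennreal_ofReal
  filter_upwards [ae_lt_top' hm hsum] with ω hω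
  have h := (ENNReal.tendsto_toReal ENNReal.zero_ne_top).comp
    (ENNReal.tendsto_atTop_zero_of_tsum_ne_top hω.ne)
  simpa [Function.comp_def, ENNReal.toReal_ofReal, hg0] using h

/-- The drift `(1 - x) ^ m - w` points from `x` towards the fixed point `w`. -/
lemma drift_nonpos {m : ℕ} {w x : ℝ} (hw : w ∈ Set.Ioo (0 : ℝ) 1) (hwroot : (1 - w) ^ m - w = 0)
    (hx1 : x ≤ 1) : (x - w) * ((1 - x) ^ m - w) ≤ 0 := by
  have hfix : (1 - w) ^ m = w := by linarith
  rcases le_total x w with h | h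
  · have := pow_le_pow_left₀ (by linarith [hw.2]) (by linarith : 1 - w ≤ 1 - x) m
    exact mul_nonpos_of_nonpos_of_nonneg (by linarith) (by linarith)
  · have := pow_le_pow_left₀ (by linarith) (by linarith : 1 - x ≤ 1 - w) m
    exact mul_nonpos_of_nonneg_of_nonpos (by linarith) (by linarith)

lemma chain_bounds {Ω : Type*} {J : ℕ → Ω → ℤ} (hinit : ∀ ω, J 1 ω = 1)
    (hstep : ∀ t, 1 ≤ t → ∀ ω, J (t + 1) ω - J t ω = 0 ∨ J (t + 1) ω - J t ω = 1)
    {t : ℕ} (ht : 1 ≤ t) (ω : Ω) : 0 ≤ J t ω ∧ J t ω ≤ t := by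
  induction t, ht using Nat.le_induction with
  | base => simp [hinit]
  | succ t ht ih =>
    push_cast
    rcases hstep t ht ω with h | h <;> omega

/-- The second moment of `J t - w t` grows at most linearly, with constant `1`. -/
lemma integral_sq_le
    {Ω : Type*} {m0 : MeasurableSpace Ω} {μ : Measure Ω} [IsProbabilityMeasure μ]
    {m : ℕ} {w : ℝ} (hw : w ∈ Set.Ioo (0 : ℝ) 1) (hwroot : (1 - w) ^ m - w = 0)
    (ℱ : Filtration ℕ m0) {J : ℕ → Ω → ℤ}
    (hadapted : Adapted ℱ fun t ω => (J t ω : ℝ))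
    (hinit : ∀ ω, J 1 ω = 1)
    (hstep : ∀ t, 1 ≤ t → ∀ ω, J (t + 1) ω - J t ω = 0 ∨ J (t + 1) ω - J t ω = 1)
    (htrans : ∀ t, 1 ≤ t →
      μ[Set.indicator {ω | J (t + 1) ω = J t ω + 1} (fun _ => (1 : ℝ)) | ℱ t]
        =ᵐ[μ] fun ω => (1 - (J t ω : ℝ) / (t : ℝ)) ^ m)
    {t : ℕ} (ht : 1 ≤ t) :
    Integrable (fun ω => ((J t ω : ℝ) - w * t) ^ 2) μ ∧
      ∫ ω, ((J t ω : ℝ) - w * t) ^ 2 ∂μ ≤ t := by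
  have hmeas : ∀ s, Measurable fun ω => (J s ω : ℝ) := fun s => (hadapted s).mono (ℱ.le s) le_rfl
  have hYb : ∀ s, 1 ≤ s → ∀ ω, |(J s ω : ℝ) - w * s| ≤ s := by
    intro s hs ω
    obtain ⟨h0, h1⟩ := chain_bounds hinit hstep hs ω
    have h0' : (0 : ℝ) ≤ J s ω := by exact_mod_cast h0
    have h1' : (J s ω : ℝ) ≤ s := by exact_mod_cast h1
    rw [abs_le]
    constructor <;> nlinarith [hw.1, hw.2]
  have hint : ∀ s, 1 ≤ s → Integrable (fun ω => ((J s ω : ℝ) - w * s) ^ 2) μ := by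
    intro s hs
    refine Integrable.of_bound (((hmeas s).sub_const _).pow_const 2).aestronglyMeasurable
      ((s : ℝ) ^ 2) (ae_of_all _ fun ω => ?_)
    rw [norm_pow, Real.norm_eq_abs]
    exact pow_le_pow_left₀ (abs_nonneg _) (hYb s hs ω) 2
  refine ⟨hint t ht, ?_⟩
  induction t, ht using Nat.le_induction with
  | base =>
    simp only [hinit, integral_const, Int.cast_one, Nat.cast_one]
    simp
    rw [abs_le]
    constructor <;> linarith [hw.1, hw.2]
  | succ t ht ih =>
    have ht0 : (0 : ℝ) < t := by exact_mod_cast ht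
    set Y : Ω → ℝ := fun ω => (J t ω : ℝ) - w * t with hY
    set ξ : Ω → ℝ := Set.indicator {ω | J (t + 1) ω = J t ω + 1} (fun _ => (1 : ℝ)) with hξ
    have hξJ : ∀ ω, ξ ω = J (t + 1) ω - J t ω := by
      intro ω
      rcases hstep t ht ω with h | h
      · have h1 : J (t + 1) ω = J t ω := by omega
        simp [hξ, h1]
      · have h1 : J (t + 1) ω = J t ω + 1 := by omega
        simp [hξ, h1]
    have hξ01 : ∀ ω, 0 ≤ ξ ω ∧ ξ ω ≤ 1 := by
      intro ω
      rw [hξJ]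
      rcases hstep t ht ω with h | h
      · have : (J (t + 1) ω : ℝ) - J t ω = 0 := by exact_mod_cast h
        rw [this]; norm_num
      · have : (J (t + 1) ω : ℝ) - J t ω = 1 := by exact_mod_cast h
        rw [this]; norm_num
    have hξm : Measurable ξ := by
      have : ξ = fun ω => (J (t + 1) ω : ℝ) - J t ω := funext hξJ
      rw [this]
      exact (hmeas _).sub (hmeas _)
    have hξi : Integrable ξ μ :=
      Integrable.of_bound hξm.aestronglyMeasurable 1 (ae_of_all _ fun ω => by
        rw [Real.norm_eq_abs, abs_of_nonneg (hξ01 ω).1]; exact (hξ01 ω).2)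
    have hYsm : StronglyMeasurable[ℱ t] Y :=
      ((hadapted t).sub_const _).stronglyMeasurable
    have hYi : Integrable Y μ :=
      Integrable.of_bound ((hmeas t).sub_const _).aestronglyMeasurable t
        (ae_of_all _ fun ω => hYb t ht ω)
    have hYξi : Integrable (Y * ξ) μ := by
      refine hYi.mul_bdd (c := 1) hξm.aestronglyMeasurable (ae_of_all _ fun ω => ?_)
      rw [Real.norm_eq_abs, abs_of_nonneg (hξ01 ω).1]; exact (hξ01 ω).2
    have hpull : μ[Y * ξ | ℱ t] =ᵐ[μ] Y * μ[ξ | ℱ t] :=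
      condExp_mul_of_stronglyMeasurable_left hYsm hYξi hξi
    -- The cross term `E[Y (ξ - w)]` is nonpositive: conditioning on `ℱ t` turns it into the drift.
    have hcross : ∫ ω, (Y * ξ) ω ∂μ ≤ ∫ ω, w * Y ω ∂μ := by
      rw [← integral_condExp (ℱ.le t)]
      refine integral_mono_ae integrable_condExp (hYi.const_mul w) ?_
      filter_upwards [hpull, htrans t ht] with ω h1 h2
      have hx1 : (J t ω : ℝ) / t ≤ 1 := by
        rw [div_le_one ht0]
        exact_mod_cast (chain_bounds hinit hstep ht ω).2
      have hd := mul_le_mul_of_nonneg_left (drift_nonpos hw hwroot hx1) ht0.le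
      have hYx : Y ω = t * ((J t ω : ℝ) / t - w) := by
        simp only [hY]; field_simp
      rw [h1, Pi.mul_apply, h2]
      rw [← mul_assoc, ← hYx] at hd
      linarith
    have hYsq : Integrable (fun ω => Y ω ^ 2) μ := hint t ht
    have hdrift : Integrable (fun ω => 2 * ((Y * ξ) ω - w * Y ω)) μ :=
      (hYξi.sub (hYi.const_mul w)).const_mul 2
    have hadd : Integrable (fun ω => Y ω ^ 2 + 2 * ((Y * ξ) ω - w * Y ω)) μ := hYsq.add hdrift
    calc ∫ ω, ((J (t + 1) ω : ℝ) - w * ((t + 1 : ℕ) : ℝ)) ^ 2 ∂μ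
        ≤ ∫ ω, (Y ω ^ 2 + 2 * ((Y * ξ) ω - w * Y ω) + 1) ∂μ := by
          refine integral_mono (hint (t + 1) (by omega))
            (hadd.add (integrable_const 1)) fun ω => ?_
          have hJ : (J (t + 1) ω : ℝ) - w * ((t + 1 : ℕ) : ℝ) = Y ω + (ξ ω - w) := by
            rw [hξJ]; simp only [hY]; push_cast; ring
          have hsq : (ξ ω - w) ^ 2 ≤ 1 := by
            rw [sq_le_one_iff_abs_le_one, abs_le]
            constructor <;> linarith [(hξ01 ω).1, (hξ01 ω).2, hw.1, hw.2]
          simp only [hJ, Pi.mul_apply]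
          linarith
      _ = ∫ ω, Y ω ^ 2 ∂μ + 2 * (∫ ω, (Y * ξ) ω ∂μ - ∫ ω, w * Y ω ∂μ) + 1 := by
          rw [integral_add hadd (integrable_const 1), integral_add hYsq hdrift,
            integral_const_mul, integral_sub hYξi (hYi.const_mul w)]
          simp
      _ ≤ ((t + 1 : ℕ) : ℝ) := by push_cast; linarith

/-- for the greedy independent set chain on the uniform attachment model
(`J(t)` = size of the independent set, `P(J(t+1)=J(t)+1|F_t) = (1-J(t)/t)^m`), for every
`α < 1/3`, a.s. `t^α |J(t)/t - w_m| → 0`, where `w_m` is the unique root of `(1-w)^m - w`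
in `(0,1)`. -/
theorem greedy_independent_set_UAM
    {Ω : Type*} {m0 : MeasurableSpace Ω} {μ : Measure Ω} [IsProbabilityMeasure μ]
    (m : ℕ) (hm : 1 ≤ m)
    (w : ℝ) (hw : w ∈ Set.Ioo (0 : ℝ) 1) (hwroot : (1 - w) ^ m - w = 0)
    (ℱ : Filtration ℕ m0)
    (J : ℕ → Ω → ℤ)
    (hadapted : Adapted ℱ fun t ω => (J t ω : ℝ))
    (hinit : ∀ ω, J 1 ω = 1)
    (hstep : ∀ t, 1 ≤ t → ∀ ω, J (t + 1) ω - J t ω = 0 ∨ J (t + 1) ω - J t ω = 1)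
    (htrans : ∀ t, 1 ≤ t →
      μ[Set.indicator {ω | J (t + 1) ω = J t ω + 1} (fun _ => (1 : ℝ)) | ℱ t]
        =ᵐ[μ] fun ω => (1 - (J t ω : ℝ) / (t : ℝ)) ^ m) :
    ∀ α : ℝ, α < 1 / 3 →
      ∀ᵐ ω ∂μ,
        Tendsto (fun t : ℕ => (t : ℝ) ^ α * |(J t ω : ℝ) / (t : ℝ) - w|)
          atTop (nhds 0) := by
  intro α hα
  have hmom : ∀ t, 1 ≤ t → _ := fun t ht =>
    integral_sq_le hw hwroot ℱ hadapted hinit hstep htrans (t := t) ht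
  -- The cubes are shifted to `(k + 1) ^ 3`, since nothing is known about `J 0`.
  have hcubes : ∀ᵐ ω ∂μ, Tendsto (fun k : ℕ =>
      ((((k + 1 : ℕ) : ℝ) ^ 3) ^ (α - 1)) ^ 2 *
        ((J ((k + 1) ^ 3) ω : ℝ) - w * (((k + 1) ^ 3 : ℕ) : ℝ)) ^ 2) atTop (nhds 0) := by
    have hone : ∀ k : ℕ, 1 ≤ (k + 1) ^ 3 := fun k => Nat.one_le_pow _ _ (by omega)
    refine ae_tendsto_zero_of_summable (b := fun k : ℕ => ((k + 1 : ℕ) : ℝ) ^ (6 * α - 3))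
      (fun k ω => by positivity) (fun k => (hmom _ (hone k)).1.const_mul _) (fun k => ?_) ?_
    · rw [integral_const_mul]
      have hk : (0 : ℝ) < ((k + 1 : ℕ) : ℝ) := by positivity
      calc _ ≤ ((((k + 1 : ℕ) : ℝ) ^ 3) ^ (α - 1)) ^ 2 * (((k + 1) ^ 3 : ℕ) : ℝ) :=
            mul_le_mul_of_nonneg_left (hmom _ (hone k)).2 (by positivity)
        _ = ((k + 1 : ℕ) : ℝ) ^ (6 * α - 3) := by
          rw [Nat.cast_pow]
          simp only [← Real.rpow_natCast]
          rw [← Real.rpow_mul hk.le, ← Real.rpow_mul hk.le, ← Real.rpow_add hk]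
          congr 1
          push_cast
          ring
    · exact (summable_nat_add_iff 1).2 (Real.summable_nat_rpow.2 (by linarith))
  filter_upwards [hcubes] with ω hω
  have hroot := hω.sqrt
  simp only [← mul_pow, Real.sqrt_sq_eq_abs, Real.sqrt_zero] at hroot
  have hlim := tendsto_of_cubes (y := fun t => (J t ω : ℝ) - w * t) ?_ hα ?_
  · refine hlim.congr' ?_
    filter_upwards [eventually_ge_atTop 1] with t ht
    have ht0 : (0 : ℝ) < t := by exact_mod_cast ht
    have hdiv : (J t ω : ℝ) / t - w = ((J t ω : ℝ) - w * t) / t := by field_simp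
    rw [hdiv, abs_div, abs_of_pos ht0, Real.rpow_sub_one ht0.ne']
    ring
  · intro t ht
    have hrw : ((J (t + 1) ω : ℝ) - w * ((t + 1 : ℕ) : ℝ)) - ((J t ω : ℝ) - w * t)
        = ((J (t + 1) ω - J t ω : ℤ) : ℝ) - w := by push_cast; ring
    simp only [hrw]
    rw [abs_le]
    rcases hstep t ht ω with h | h <;> rw [h] <;> push_cast <;>
      constructor <;> linarith [hw.1, hw.2]
  · rw [← tendsto_add_atTop_iff_nat 1]
    refine hroot.congr fun k => ?_
    rw [abs_mul, abs_of_nonneg (by positivity)]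
end

section
/- For each integer m ≥ 1, the equation (1-w)^m = w has a unique root w_m in the interval (0,1), and as m → ∞, w_m = (log m)/m + O(m^{-1}·log log m); that is, there exist a constant K > 0 and an integer m₀ such that for all m ≥ m₀, |w_m - (log m)/m| ≤ K·(log log m)/m. -/
/-!
Existence of the root is the intermediate value theorem for `(1 - w)^m - w` on `[0, 1]`, and
uniqueness holds because `(1 - w)^m` is antitone while `w` is strictly increasing.

For the asymptotics write `L = log m`. Since `w = (1 - w)^m ≤ exp (-m w)`, having `w > L / m`
would give `w < 1 / m ≤ L / m`; hence `w ≤ L / m` (`root_le`). Feeding this bound back into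
`log w = m log (1 - w) ≥ -m w / (1 - w)` yields `m w ≥ (L - log L) (1 - w) ≥ L - log L - L² / m`
(`le_root`). As `L² / m ≤ 1 ≤ log L` eventually, the constant `K = 2` works.
-/

theorem existsUnique_root (m : ℕ) (hm : 1 ≤ m) :
    ∃! w : ℝ, w ∈ Set.Ioo (0 : ℝ) 1 ∧ (1 - w) ^ m = w := by
  have hm0 : m ≠ 0 := by omega
  have hcont : ContinuousOn (fun w : ℝ => (1 - w) ^ m - w) (Set.Icc 0 1) := by fun_prop
  have hivt := intermediate_value_Ioo' (zero_le_one' ℝ) hcont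
  obtain ⟨w, hw, hw0⟩ := hivt (show (0 : ℝ) ∈ _ by simp [hm0])
  refine ⟨w, ⟨hw, by linarith [hw0]⟩, ?_⟩
  rintro v ⟨hv, hveq⟩
  have hweq : (1 - w) ^ m = w := by linarith [hw0]
  rcases lt_trichotomy v w with h | h | h
  · have := pow_le_pow_left₀ (by linarith [hw.2] : 0 ≤ 1 - w) (by linarith : 1 - w ≤ 1 - v) m
    linarith
  · exact h
  · have := pow_le_pow_left₀ (by linarith [hv.2] : 0 ≤ 1 - v) (by linarith : 1 - v ≤ 1 - w) m
    linarith

theorem root_le {m : ℕ} (hm : 1 ≤ m) {w : ℝ} (hw : w ∈ Set.Ioo (0 : ℝ) 1)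
    (heq : (1 - w) ^ m = w) (hL : 1 ≤ Real.log m) : w ≤ Real.log m / m := by
  have hmpos : (0 : ℝ) < m := by exact_mod_cast hm
  by_contra! h
  have hlog : m * Real.log (1 - w) = Real.log w := by
    rw [← Real.log_pow, heq]
  have hlog1 : Real.log (1 - w) ≤ -w := by
    linarith [Real.log_le_sub_one_of_pos (by linarith [hw.2] : 0 < 1 - w)]
  have hmw : Real.log m < w * m := (div_lt_iff₀ hmpos).1 h
  have hlt : Real.log w < -Real.log m := by nlinarith
  have hge : -Real.log m ≤ Real.log w := by
    rw [← Real.log_inv]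
    refine Real.log_le_log (by positivity) ?_
    calc (m : ℝ)⁻¹ = 1 / m := by rw [one_div]
      _ ≤ Real.log m / m := by gcongr
      _ ≤ w := h.le
  linarith

theorem le_root {m : ℕ} (hm : 1 ≤ m) {w : ℝ} (hw : w ∈ Set.Ioo (0 : ℝ) 1)
    (heq : (1 - w) ^ m = w) (hL : 1 ≤ Real.log m) :
    Real.log m - Real.log (Real.log m) - Real.log m ^ 2 / m ≤ m * w := by
  have hmpos : (0 : ℝ) < m := by exact_mod_cast hm
  have hw1 : 0 < 1 - w := by linarith [hw.2]
  have hup := root_le hm hw heq hL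
  have hlog : m * Real.log (1 - w) = Real.log w := by
    rw [← Real.log_pow, heq]
  have hlogw : Real.log w ≤ Real.log (Real.log m) - Real.log m := by
    rw [← Real.log_div (by linarith) hmpos.ne']
    exact Real.log_le_log hw.1 hup
  have hlow : -w ≤ (1 - w) * Real.log (1 - w) := by
    have h := mul_le_mul_of_nonneg_left (Real.one_sub_inv_le_log_of_pos hw1) hw1.le
    rw [mul_sub, mul_inv_cancel₀ hw1.ne'] at h
    linarith
  have hkey : (Real.log m - Real.log (Real.log m)) * (1 - w) ≤ m * w := by nlinarith
  have hLL : 0 ≤ Real.log (Real.log m) := Real.log_nonneg hL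
  have hLw : Real.log m * w ≤ Real.log m ^ 2 / m := by
    calc Real.log m * w ≤ Real.log m * (Real.log m / m) := by gcongr
      _ = Real.log m ^ 2 / m := by ring
  nlinarith [mul_nonneg hLL hw.1.le]

/-- for each `m ≥ 1` the equation `(1-w)^m = w` has a unique root `w_m` in
`(0,1)`, and `w_m = (log m)/m + O(m⁻¹ log log m)` as `m → ∞`. -/
theorem greedy_independent_set_root_asymptotics :
    (∀ m : ℕ, 1 ≤ m → ∃! w : ℝ, w ∈ Set.Ioo (0 : ℝ) 1 ∧ (1 - w) ^ m = w) ∧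
    ∀ w : ℕ → ℝ,
      (∀ m : ℕ, 1 ≤ m → w m ∈ Set.Ioo (0 : ℝ) 1 ∧ (1 - w m) ^ m = w m) →
      ∃ K : ℝ, 0 < K ∧ ∃ m₀ : ℕ, ∀ m : ℕ, m₀ ≤ m →
        |w m - Real.log m / (m : ℝ)| ≤ K * Real.log (Real.log m) / (m : ℝ) := by
  refine ⟨existsUnique_root, fun w hw => ⟨2, two_pos, ?_⟩⟩
  have hlog : Filter.Tendsto (fun m : ℕ => Real.log m) Filter.atTop Filter.atTop :=
    Real.tendsto_log_atTop.comp tendsto_natCast_atTop_atTop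
  have hloglog := Real.tendsto_log_atTop.comp hlog
  have hsq : ∀ᶠ m : ℕ in Filter.atTop, ‖Real.log m ^ 2‖ ≤ 1 * ‖(m : ℝ)‖ :=
    tendsto_natCast_atTop_atTop.eventually
      ((Real.isLittleO_pow_log_id_atTop (n := 2)).bound one_pos)
  rw [← Filter.eventually_atTop]
  filter_upwards [Filter.eventually_ge_atTop 1, hlog.eventually_ge_atTop 1,
    hloglog.eventually_ge_atTop 1, hsq] with m hm hL hLL hsqm
  simp only [Function.comp_apply] at hLL
  obtain ⟨hmem, heq⟩ := hw m hm
  have hmpos : (0 : ℝ) < m := by exact_mod_cast hm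
  have hup := root_le hm hmem heq hL
  have hlo := le_root hm hmem heq hL
  have hsq1 : Real.log m ^ 2 / m ≤ 1 := by
    rw [div_le_one hmpos]
    simpa [abs_of_nonneg] using hsqm
  rw [abs_of_nonpos (by linarith), neg_sub, sub_le_iff_le_add, div_add' _ _ _ hmpos.ne']
  gcongr
  linarith
end

section
/- Let m ≥ 1 be an integer, c > 0 and C > 0 real numbers, and define f(w) = c·(-w + (1-w)^m) with unique root w_m ∈ (0,1). On a probability space with a filtration (F_t)_{t≥1}, let (w(t))_{t≥1} be an adapted process with values in [0,1] such that |w(t+1) - w(t)| ≤ 2/(t+1) for all t, and for every t ≥ 1, almost surely |E[w(t+1) | F_t] - w(t) - f(w(t))/(t+1)| ≤ C/t². Then for every α < min{1, 2c} there exists a constant A > 0 such that E[(w(t) - w_m)²] ≤ A·t^{-α} for all t ≥ 1. -/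
open MeasureTheory ProbabilityTheory Filter

/-!
Write `a t = E[(w t - wm)²]`. Expanding the square of `w (t+1) - wm = (w t - wm) + increment`,
the increment's square contributes `O(t⁻²)`, and conditioning on `ℱ t` turns the cross term into
`2 E[(w t - wm) f(w t)] / (t+1) + O(t⁻²)`. Since `f(wm) = 0` and `w ↦ (1-w)^m` is decreasing on
`[0,1]`, one has `(w - wm) f(w) ≤ -c (w - wm)²`. This gives the scalar recursion
`a (t+1) ≤ (1 - 2c/(t+1)) a t + K/(t+1)²` (`l2_recursion`), and the rate `t^{-α}`
follows by induction on `t`, Bernoulli's inequality controlling `((t+1)/t)^α` (`rate_of_recursion`).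
-/

/-- The drift contracts towards its root `wm` with rate at least `c`. -/
lemma drift_contracts (m : ℕ) {c wm x : ℝ} (hc : 0 < c) (hwm : wm ∈ Set.Ioo (0 : ℝ) 1)
    (hroot : c * (-wm + (1 - wm) ^ m) = 0) (hx : x ∈ Set.Icc (0 : ℝ) 1) :
    (x - wm) * (c * (-x + (1 - x) ^ m)) ≤ -c * (x - wm) ^ 2 := by
  obtain ⟨h0, h1⟩ := hwm
  obtain ⟨hx0, hx1⟩ := hx
  have hr : (1 - wm) ^ m = wm := by
    rcases mul_eq_zero.mp hroot with h | h <;> linarith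
  have key : (x - wm) * ((1 - x) ^ m - wm) ≤ 0 := by
    rcases le_total x wm with h | h
    · have : (1 - wm) ^ m ≤ (1 - x) ^ m := pow_le_pow_left₀ (by linarith) (by linarith) m
      exact mul_nonpos_of_nonpos_of_nonneg (by linarith) (by linarith)
    · have : (1 - x) ^ m ≤ (1 - wm) ^ m := pow_le_pow_left₀ (by linarith) (by linarith) m
      exact mul_nonpos_of_nonneg_of_nonpos (by linarith) (by linarith)
  nlinarith [mul_le_mul_of_nonneg_left key hc.le]

/-- Sequences bounded above by `1` with `a (t+1) ≤ (1 - β/(t+1)) a t + K/(t+1)²` are at most of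
order `t^{-α}` for every `0 ≤ α < β ≤ 1`. -/
lemma rate_of_recursion {a : ℕ → ℝ} {α β K : ℝ} (hα : 0 ≤ α) (hαβ : α < β) (hβ : β ≤ 1)
    (hK : 0 ≤ K) (ha1 : ∀ t, a t ≤ 1)
    (hrec : ∀ t : ℕ, 1 ≤ t →
      a (t + 1) ≤ (1 - β / ((t : ℝ) + 1)) * a t + K / ((t : ℝ) + 1) ^ 2) :
    ∃ A : ℝ, 0 < A ∧ ∀ t : ℕ, 1 ≤ t → a t ≤ A * (t : ℝ) ^ (-α) := by
  have hd : 0 < β - α := by linarith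
  -- Beyond `2α/(β-α)` the second-order Bernoulli error is absorbed by half of the gap `β - α`;
  -- before that, the bound `a ≤ 1` suffices.
  set S : ℝ := 2 * α / (β - α) + 1 with hS
  have hS0 : 0 ≤ 2 * α / (β - α) := by positivity
  set A : ℝ := S + 2 * K / (β - α) with hA
  have hK0 : 0 ≤ 2 * K / (β - α) := by positivity
  have hApos : 0 < A := by linarith
  refine ⟨A, hApos, fun t ht => ?_⟩
  induction t, ht using Nat.le_induction with
  | base => simpa using (ha1 1).trans (by linarith)
  | succ t ht ih =>
    have ht1 : (1 : ℝ) ≤ t := by exact_mod_cast ht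
    have ht0 : (0 : ℝ) < t := by linarith
    push_cast
    set s : ℝ := (t : ℝ) + 1 with hs
    have hs1 : 1 ≤ s := by linarith
    have hs0 : 0 < s := by linarith
    have hinv : s⁻¹ ≤ s ^ (-α) := by
      rw [← Real.rpow_neg_one]
      exact Real.rpow_le_rpow_of_exponent_le hs1 (by linarith)
    by_cases hsS : s ≤ S
    · calc a (t + 1) ≤ 1 := ha1 _
        _ = s * s⁻¹ := by field_simp
        _ ≤ A * s ^ (-α) := by gcongr; linarith
    · have htS : 2 * α / (β - α) < t := by linarith
      have hαt : 2 * α < t * (β - α) := (div_lt_iff₀ hd).mp htS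
      have hbern : (t : ℝ) ^ (-α) ≤ (1 + α / t) * s ^ (-α) := by
        have h1 : (1 + 1 / (t : ℝ)) ^ α ≤ 1 + α * (1 / t) :=
          rpow_one_add_le_one_add_mul_self
            (by have : (0 : ℝ) ≤ 1 / t := by positivity
                linarith) hα (by linarith)
        have h2 : 1 + 1 / (t : ℝ) = s / t := by rw [hs]; field_simp
        rw [h2, Real.div_rpow hs0.le ht0.le] at h1
        rw [Real.rpow_neg ht0.le, Real.rpow_neg hs0.le]
        have hsp := Real.rpow_pos_of_pos hs0 α
        calc ((t : ℝ) ^ α)⁻¹ = s ^ α / t ^ α * (s ^ α)⁻¹ := by field_simp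
          _ ≤ (1 + α / t) * (s ^ α)⁻¹ := by
            gcongr
            linarith [h1, mul_one_div α (t : ℝ)]
      have hcoef0 : 0 ≤ 1 - β / s := by
        rw [sub_nonneg, div_le_one hs0]; linarith
      have hcoef : (1 - β / s) * (1 + α / t) ≤ 1 - (β - α) / 2 / s := by
        have : (1 - (β - α) / 2 / s) - (1 - β / s) * (1 + α / t)
            = ((β - α) * t / 2 - α + α * β) / (s * t) := by
          rw [hs]; field_simp; ring
        have h3 : 0 ≤ ((β - α) * t / 2 - α + α * β) / (s * t) := by
          have : 0 ≤ α * β := mul_nonneg hα (by linarith)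
          apply div_nonneg _ (by positivity)
          linarith
        linarith
      have hKA : K ≤ A * ((β - α) / 2) := by
        have : 2 * K / (β - α) * ((β - α) / 2) = K := by field_simp
        have h4 : 0 ≤ S * ((β - α) / 2) := mul_nonneg (by linarith) (by linarith)
        rw [hA, add_mul]; linarith
      have hKs : K / s ^ 2 ≤ A * ((β - α) / 2 / s) * s ^ (-α) := by
        calc K / s ^ 2 = K * s⁻¹ * s⁻¹ := by field_simp
          _ ≤ A * ((β - α) / 2) * s⁻¹ * s ^ (-α) := by gcongr
          _ = _ := by ring
      have hsp := Real.rpow_pos_of_pos hs0 (-α)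
      calc a (t + 1) ≤ (1 - β / s) * a t + K / s ^ 2 := hrec t ht
        _ ≤ (1 - β / s) * (A * ((1 + α / t) * s ^ (-α))) + K / s ^ 2 := by
          gcongr
          exact ih.trans (by gcongr)
        _ = A * s ^ (-α) * ((1 - β / s) * (1 + α / t)) + K / s ^ 2 := by ring
        _ ≤ A * s ^ (-α) * (1 - (β - α) / 2 / s)
            + A * ((β - α) / 2 / s) * s ^ (-α) := by gcongr
        _ = A * s ^ (-α) := by ring

/-- One step of the process: with `x = w t`, `y = w (t+1)`, `s = t+1` and `𝒢 = ℱ t`, the mean square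
distance to `wm` contracts by the factor `1 - 2c/s`, up to the errors coming from the drift
(`ε`) and from the size of the increment (`δ`). -/
lemma l2_recursion {Ω : Type*} {𝒢 m0 : MeasurableSpace Ω} {μ : Measure Ω}
    [IsProbabilityMeasure μ]
    (m : ℕ) {c wm s δ ε : ℝ} (hc : 0 < c) (hs : 0 < s) (hwm : wm ∈ Set.Ioo (0 : ℝ) 1)
    (hroot : c * (-wm + (1 - wm) ^ m) = 0)
    (h𝒢 : 𝒢 ≤ m0) {x y : Ω → ℝ}
    (hxm : Measurable[𝒢] x) (hym : Measurable y)
    (hx : ∀ ω, x ω ∈ Set.Icc (0 : ℝ) 1) (hy : ∀ ω, y ω ∈ Set.Icc (0 : ℝ) 1)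
    (hincr : ∀ ω, |y ω - x ω| ≤ δ)
    (hdrift : ∀ᵐ ω ∂μ, |(μ[y | 𝒢]) ω - x ω - c * (-(x ω) + (1 - x ω) ^ m) / s| ≤ ε) :
    ∫ ω, (y ω - wm) ^ 2 ∂μ ≤ (1 - 2 * c / s) * ∫ ω, (x ω - wm) ^ 2 ∂μ + (2 * ε + δ ^ 2) := by
  have hxm0 : Measurable x := hxm.mono h𝒢 le_rfl
  have hzabs : ∀ ω, |x ω - wm| ≤ 1 := fun ω =>
    abs_le.mpr ⟨by linarith [(hx ω).1, hwm.2], by linarith [(hx ω).2, hwm.1]⟩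
  have hyint : Integrable y μ := Integrable.of_bound hym.aestronglyMeasurable 1
    (ae_of_all _ fun ω => by rw [Real.norm_eq_abs, abs_of_nonneg (hy ω).1]; exact (hy ω).2)
  have hxint : Integrable x μ := Integrable.of_bound hxm0.aestronglyMeasurable 1
    (ae_of_all _ fun ω => by rw [Real.norm_eq_abs, abs_of_nonneg (hx ω).1]; exact (hx ω).2)
  have hzsm : AEStronglyMeasurable (fun ω => x ω - wm) μ :=
    (hxm0.sub_const wm).aestronglyMeasurable
  have hbdd : ∀ {g : Ω → ℝ}, Integrable g μ → Integrable (fun ω => (x ω - wm) * g ω) μ :=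
    fun hg => hg.bdd_mul hzsm (ae_of_all _ hzabs)
  have hzy := hbdd hyint
  have hzx := hbdd hxint
  have hzE : Integrable (fun ω => (x ω - wm) * (μ[y | 𝒢]) ω) μ := hbdd integrable_condExp
  have hzz : Integrable (fun ω => (x ω - wm) ^ 2) μ := by
    simpa only [pow_two, Pi.sub_apply] using hbdd (hxint.sub (integrable_const wm))
  have hpull : ∫ ω, (x ω - wm) * y ω ∂μ = ∫ ω, (x ω - wm) * (μ[y | 𝒢]) ω ∂μ := by
    have h := condExp_mul_of_stronglyMeasurable_left (μ := μ) (m := 𝒢)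
      (f := fun ω => x ω - wm) (g := y) (hxm.sub_const wm).stronglyMeasurable hzy hyint
    calc ∫ ω, (x ω - wm) * y ω ∂μ = ∫ ω, (μ[(fun ω => x ω - wm) * y | 𝒢]) ω ∂μ :=
          (integral_condExp h𝒢).symm
      _ = _ := integral_congr_ae h
  have hcross : ∀ᵐ ω ∂μ, (x ω - wm) * (μ[y | 𝒢]) ω - (x ω - wm) * x ω
      ≤ -(c / s) * (x ω - wm) ^ 2 + ε := by
    filter_upwards [hdrift] with ω hω
    set D := (μ[y | 𝒢]) ω - x ω - c * (-(x ω) + (1 - x ω) ^ m) / s with hD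
    have h1 : (x ω - wm) * D ≤ ε := by
      calc (x ω - wm) * D ≤ |(x ω - wm) * D| := le_abs_self _
        _ = |x ω - wm| * |D| := abs_mul _ _
        _ ≤ 1 * |D| := by gcongr; exact hzabs ω
        _ ≤ ε := by linarith
    have h2 := div_le_div_of_nonneg_right (drift_contracts m hc hwm hroot (hx ω)) hs.le
    have h3 : (x ω - wm) * (μ[y | 𝒢]) ω - (x ω - wm) * x ω
        = (x ω - wm) * D + (x ω - wm) * (c * (-(x ω) + (1 - x ω) ^ m)) / s := by
      rw [hD]; ring
    have h4 : -c * (x ω - wm) ^ 2 / s = -(c / s) * (x ω - wm) ^ 2 := by ring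
    linarith
  have hcrossI : ∫ ω, (x ω - wm) * y ω ∂μ - ∫ ω, (x ω - wm) * x ω ∂μ
      ≤ -(c / s) * ∫ ω, (x ω - wm) ^ 2 ∂μ + ε := by
    have h := integral_mono_ae (hzE.sub hzx)
      ((hzz.const_mul (-(c / s))).add (integrable_const ε)) hcross
    simp only [Pi.sub_apply, Pi.add_apply] at h
    rw [integral_sub hzE hzx, integral_add (hzz.const_mul _) (integrable_const ε),
      integral_const_mul] at h
    rw [hpull]
    simpa using h
  have hsq : ∀ ω, (y ω - wm) ^ 2
      ≤ (x ω - wm) ^ 2 + 2 * ((x ω - wm) * y ω - (x ω - wm) * x ω) + δ ^ 2 := fun ω => by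
    have h1 : (y ω - x ω) ^ 2 ≤ δ ^ 2 := sq_le_sq' (by linarith [(abs_le.mp (hincr ω)).1])
      (abs_le.mp (hincr ω)).2
    nlinarith [h1]
  have hlin : Integrable (fun ω => 2 * ((x ω - wm) * y ω - (x ω - wm) * x ω)) μ :=
    (hzy.sub hzx).const_mul 2
  have hsum : Integrable (fun ω => (x ω - wm) ^ 2
      + 2 * ((x ω - wm) * y ω - (x ω - wm) * x ω)) μ := hzz.add hlin
  have hbig : ∫ ω, (y ω - wm) ^ 2 ∂μ ≤ ∫ ω, ((x ω - wm) ^ 2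
      + 2 * ((x ω - wm) * y ω - (x ω - wm) * x ω) + δ ^ 2) ∂μ :=
    integral_mono_of_nonneg (ae_of_all _ fun ω => sq_nonneg _)
      (hsum.add (integrable_const _)) (ae_of_all _ hsq)
  rw [integral_add hsum (integrable_const _), integral_add hzz hlin,
    integral_const_mul, integral_sub hzy hzx] at hbig
  simp only [integral_const, probReal_univ, one_smul] at hbig
  have h5 : (1 - 2 * c / s) * ∫ ω, (x ω - wm) ^ 2 ∂μ
      = ∫ ω, (x ω - wm) ^ 2 ∂μ + 2 * (-(c / s) * ∫ ω, (x ω - wm) ^ 2 ∂μ) := by ring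
  linarith

/-- if a `[0,1]`-valued adapted process `w(t)` has increments bounded by
`2/(t+1)` and drift `f(w(t))/(t+1)` up to an `O(t⁻²)` error, where
`f(w) = c(-w + (1-w)^m)` has root `w_m ∈ (0,1)`, then for every `α < min{1, 2c}` there is a
constant `A` with `E[(w(t)-w_m)²] ≤ A t^{-α}` for all `t ≥ 1`. -/
theorem contracting_drift_L2_rate
    {Ω : Type*} {m0 : MeasurableSpace Ω} {μ : Measure Ω} [IsProbabilityMeasure μ]
    (m : ℕ) (hm : 1 ≤ m)
    (c C : ℝ) (hc : 0 < c) (hC : 0 < C)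
    (wm : ℝ) (hwm : wm ∈ Set.Ioo (0 : ℝ) 1)
    (hwmroot : c * (-wm + (1 - wm) ^ m) = 0)
    (ℱ : Filtration ℕ m0)
    (w : ℕ → Ω → ℝ)
    (hadapted : Adapted ℱ w)
    (hrange : ∀ t ω, w t ω ∈ Set.Icc (0 : ℝ) 1)
    (hincr : ∀ t : ℕ, ∀ ω, |w (t + 1) ω - w t ω| ≤ 2 / ((t : ℝ) + 1))
    (hdrift : ∀ t : ℕ, 1 ≤ t →
      ∀ᵐ ω ∂μ,
        abs ((μ[w (t + 1) | ℱ t]) ω - w t ω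
            - c * (-(w t ω) + (1 - w t ω) ^ m) / ((t : ℝ) + 1))
          ≤ C / (t : ℝ) ^ 2) :
    ∀ α : ℝ, α < min 1 (2 * c) →
      ∃ A : ℝ, 0 < A ∧ ∀ t : ℕ, 1 ≤ t →
        (∫ ω, (w t ω - wm) ^ 2 ∂μ) ≤ A * (t : ℝ) ^ (-α) := by
  intro α hα
  obtain ⟨hα1, hα2⟩ := lt_min_iff.mp hα
  have hmeas : ∀ t, Measurable (w t) := fun t => (hadapted t).mono (ℱ.le t) le_rfl
  have ha1 : ∀ t, ∫ ω, (w t ω - wm) ^ 2 ∂μ ≤ 1 := fun t => by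
    have h : ∀ ω, (w t ω - wm) ^ 2 ≤ 1 := fun ω =>
      (sq_le_one_iff_abs_le_one _).mpr (abs_le.mpr
        ⟨by linarith [(hrange t ω).1, hwm.2], by linarith [(hrange t ω).2, hwm.1]⟩)
    simpa using integral_mono_of_nonneg (μ := μ) (ae_of_all _ fun ω => sq_nonneg (w t ω - wm))
      (integrable_const (1 : ℝ)) (ae_of_all _ h)
  rcases lt_or_ge α 0 with hneg | hα0
  · -- For `α < 0` the claimed bound exceeds `1`.
    refine ⟨1, one_pos, fun t ht => (ha1 t).trans ?_⟩
    rw [one_mul]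
    exact Real.one_le_rpow (by exact_mod_cast ht) (by linarith)
  · refine rate_of_recursion (a := fun t => ∫ ω, (w t ω - wm) ^ 2 ∂μ) (β := min 1 (2 * c))
      (K := 8 * C + 4) hα0 hα (min_le_left _ _) (by positivity) ha1 fun t ht => ?_
    have ht1 : (1 : ℝ) ≤ t := by exact_mod_cast ht
    have hs : (0 : ℝ) < (t : ℝ) + 1 := by linarith
    have h := l2_recursion m hc hs hwm hwmroot (ℱ.le t) (hadapted t) (hmeas (t + 1))
      (hrange t) (hrange (t + 1)) (hincr t) (hdrift t ht)
    have ha0 : 0 ≤ ∫ ω, (w t ω - wm) ^ 2 ∂μ := integral_nonneg fun ω => sq_nonneg _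
    -- `1/t² ≤ 4/(t+1)²` because `t ≥ 1`.
    have hCt : C / (t : ℝ) ^ 2 ≤ 4 * C / ((t : ℝ) + 1) ^ 2 := by
      rw [div_le_div_iff₀ (by positivity) (by positivity)]
      have : ((t : ℝ) + 1) ^ 2 ≤ 4 * (t : ℝ) ^ 2 := by nlinarith
      nlinarith [mul_le_mul_of_nonneg_left this hC.le]
    have hmin : (1 - 2 * c / ((t : ℝ) + 1)) * ∫ ω, (w t ω - wm) ^ 2 ∂μ
        ≤ (1 - min 1 (2 * c) / ((t : ℝ) + 1)) * ∫ ω, (w t ω - wm) ^ 2 ∂μ := by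
      gcongr
      exact min_le_right _ _
    have hK : 2 * (4 * C / ((t : ℝ) + 1) ^ 2) + (2 / ((t : ℝ) + 1)) ^ 2
        = (8 * C + 4) / ((t : ℝ) + 1) ^ 2 := by
      field_simp; ring
    show ∫ ω, (w (t + 1) ω - wm) ^ 2 ∂μ ≤ _
    linarith
end
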